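/- arXiv:1411.4855 — 4 statements merged into one kernel-verified Lean document; each statement's English description precedes it below -/
import Mathlib

section
/- For the central Cantor set C_λ ⊂ [0,1] (λ > 2), the group of derivatives at 0 of C¹ diffeomorphisms of ℝ preserving C_λ and fixing 0 is exactly the cyclic subgroup ⟨λ⟩ = {λ^k : k ∈ ℤ} of ℝ*. -/
open Set Filter Topology Asymptotics

/-- A Cantor subset of the reals: nonempty, compact, perfect, totally disconnected. -/
def IsCantorSet (C : Set ℝ) : Prop :=
  C.Nonempty ∧ IsCompact C ∧ Perfect C ∧ IsTotallyDisconnected C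

/-- `C` is `σ`-sparse: any two points of `C` bound a complementary open interval of
relative length at least `σ`. -/
def SparseSet (σ : ℝ) (C : Set ℝ) : Prop :=
  ∀ a ∈ C, ∀ b ∈ C, a < b →
    ∃ α β : ℝ, a ≤ α ∧ α < β ∧ β ≤ b ∧ Set.Ioo α β ∩ C = ∅ ∧ σ * (b - a) ≤ β - α

/-- `φ` is a `C¹` diffeomorphism of `ℝ` with inverse `ψ`. -/
def IsC1DiffeoPair (φ ψ : ℝ → ℝ) : Prop :=
  ContDiff ℝ 1 φ ∧ ContDiff ℝ 1 ψ ∧ Function.LeftInverse ψ φ ∧ Function.RightInverse ψ φ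
/-- `C` is the central Cantor set of parameter `l`: the attractor of the IFS
`φ₀(x) = x/l`, `φ₁(x) = x/l + (l-1)/l`, i.e. the unique nonempty compact set with
`C = φ₀(C) ∪ φ₁(C)`. -/
def IsCentralCantor (l : ℝ) (C : Set ℝ) : Prop :=
  IsCompact C ∧ C.Nonempty ∧
    C = (fun x => x / l) '' C ∪ (fun x => x / l + (l - 1) / l) '' C

lemma cc_facts {l : ℝ} (hl : 2 < l) {C : Set ℝ} (hC : IsCentralCantor l C) :
    (0:ℝ) ∈ C ∧ (1:ℝ) ∈ C ∧ (∀ x ∈ C, 0 ≤ x ∧ x ≤ 1) ∧ (∀ x ∈ C, x / l ∈ C) ∧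
    (∀ x ∈ C, x / l + (l - 1) / l ∈ C) ∧
    (∀ x ∈ C, ∃ c ∈ C, x = c / l ∨ x = c / l + (l - 1) / l) := by
  obtain ⟨hc, hne, he⟩ := hC
  have l0 : 0 < l := by linarith
  have h0 : ∀ x ∈ C, x / l ∈ C := by
    intro x hx; rw [he]; exact Or.inl ⟨x, hx, rfl⟩
  have h1 : ∀ x ∈ C, x / l + (l - 1) / l ∈ C := by
    intro x hx; rw [he]; exact Or.inr ⟨x, hx, rfl⟩
  have h2 : ∀ x ∈ C, ∃ c ∈ C, x = c / l ∨ x = c / l + (l - 1) / l := by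
    intro x hx
    rw [he] at hx
    rcases hx with ⟨c, hc, rfl⟩ | ⟨c, hc, rfl⟩
    · exact ⟨c, hc, Or.inl rfl⟩
    · exact ⟨c, hc, Or.inr rfl⟩
  obtain ⟨m, hm, hm'⟩ := hc.exists_isLeast hne
  obtain ⟨M, hM, hM'⟩ := hc.exists_isGreatest hne
  have m0 : m = 0 := by
    have a1 : m ≤ m / l := hm' (h0 m hm)
    rw [le_div_iff₀ l0] at a1
    obtain ⟨c, hc, h⟩ := h2 m hm
    have := hm' hc
    apply le_antisymm
    · nlinarith
    · rcases h with h | h <;> field_simp at h <;> nlinarith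
  have M1 : M = 1 := by
    have a1 : M / l + (l - 1) / l ≤ M := hM' (h1 M hM)
    rw [← add_div, div_le_iff₀ l0] at a1
    obtain ⟨c, hc, h⟩ := h2 M hM
    have := hM' hc
    apply le_antisymm
    · rcases h with h | h <;> field_simp at h <;> nlinarith
    · nlinarith
  subst m0 M1
  exact ⟨hm, hM, fun x hx => ⟨hm' hx, hM' hx⟩, h0, h1, h2⟩

def CGap (C : Set ℝ) (a b : ℝ) : Prop := a ∈ C ∧ b ∈ C ∧ a < b ∧ ∀ x ∈ C, a < x → x < b → False

lemma gap_len {l : ℝ} (hl : 2 < l) {C : Set ℝ} (hC : IsCentralCantor l C) (n : ℕ) :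
    ∀ a b, CGap C a b → 1 < (b - a) * l ^ n → ∃ k : ℤ, b - a = (l - 2) * l ^ k := by
  have l0 : 0 < l := by linarith
  obtain ⟨z, o, bd, h0, h1, h2⟩ := cc_facts hl hC
  induction n with
  | zero =>
    intro a b ⟨ha, hb, _, _⟩ h
    have := bd a ha; have := bd b hb
    simp at h; linarith
  | succ n ih =>
    intro a b ⟨ha, hb, hab, hg⟩ h
    have key : ∀ c d, CGap C c d → b - a = (d - c) / l → ∃ k : ℤ, b - a = (l - 2) * l ^ k := by
      intro c d hcd e
      obtain ⟨k, hk⟩ := ih c d hcd (by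
        rw [e, pow_succ] at h; field_simp at h; linarith)
      refine ⟨k - 1, ?_⟩
      rw [e, hk, zpow_sub_one₀ l0.ne']; field_simp
    obtain ⟨c, hc, ec⟩ := h2 a ha
    obtain ⟨d, hd, ed⟩ := h2 b hb
    have bc := bd c hc
    have bdd := bd d hd
    rcases ec with ec | ec <;> rcases ed with ed | ed
    · refine key c d ⟨hc, hd, ?_, ?_⟩ (by rw [ec, ed]; ring)
      · rw [ec, ed, div_lt_div_iff_of_pos_right l0] at hab; exact hab
      · intro x hx x1 x2
        refine hg _ (h0 x hx) ?_ ?_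
        · rw [ec]; gcongr
        · rw [ed]; gcongr
    · have e1 : c = 1 := by
        by_contra hne
        have hlt : c < 1 := lt_of_le_of_ne bc.2 hne
        refine hg (1 / l) (h0 1 o) ?_ ?_
        · rw [ec]; gcongr
        · rw [ed, ← add_div]; gcongr; linarith
      have e2 : d = 0 := by
        by_contra hne
        have hlt : 0 < d := lt_of_le_of_ne bdd.1 (Ne.symm hne)
        refine hg _ (h1 0 z) ?_ ?_
        · rw [ec, ← add_div]; gcongr; linarith
        · rw [ed]; gcongr
      refine ⟨-1, ?_⟩
      rw [ec, ed, e1, e2, zpow_neg_one]; field_simp; ring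
    · exfalso
      rw [ec, ed, ← add_div, div_lt_div_iff_of_pos_right l0] at hab
      linarith
    · refine key c d ⟨hc, hd, ?_, ?_⟩ (by rw [ec, ed]; ring)
      · rw [ec, ed, add_lt_add_iff_right, div_lt_div_iff_of_pos_right l0] at hab; exact hab
      · intro x hx x1 x2
        refine hg _ (h1 x hx) ?_ ?_
        · rw [ec]; gcongr
        · rw [ed]; gcongr

lemma gap_len' {l : ℝ} (hl : 2 < l) {C : Set ℝ} (hC : IsCentralCantor l C) 
    (a b : ℝ) (h : CGap C a b) : ∃ k : ℤ, b - a = (l - 2) * l ^ k := by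
  have hp : 0 < b - a := sub_pos.2 h.2.2.1
  obtain ⟨n, hn⟩ := pow_unbounded_of_one_lt (1 / (b - a)) (by linarith : 1 < l)
  refine gap_len hl hC n a b h ?_
  rw [div_lt_iff₀ hp] at hn
  linarith

lemma gap_src {l : ℝ} (hl : 2 < l) {C : Set ℝ} (hC : IsCentralCantor l C) (n : ℕ) :
    CGap C ((l⁻¹) ^ (n+1)) ((l - 1) * (l⁻¹) ^ (n+1)) := by
  have l0 : 0 < l := by linarith
  obtain ⟨z, o, bd, h0, h1, h2⟩ := cc_facts hl hC
  induction n with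
  | zero =>
    refine ⟨?_, ?_, ?_, ?_⟩
    · simpa using h0 1 o
    · simpa [div_eq_mul_inv] using h1 0 z
    · have : 0 < l⁻¹ := by positivity
      simp; nlinarith
    · intro x hx x1 x2
      obtain ⟨c, hc, e⟩ := h2 x hx
      have := bd c hc
      simp only [zero_add, pow_one, ← div_eq_mul_inv] at x1 x2
      rw [inv_eq_one_div] at x1
      rcases e with e | e
      · rw [e, div_lt_div_iff_of_pos_right l0] at x1; linarith
      · rw [e, ← add_div, div_lt_div_iff_of_pos_right l0] at x2; linarith
  | succ n ih =>
    obtain ⟨ha, hb, hab, hg⟩ := ih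
    have e1 : l⁻¹ ^ (n+1+1) = l⁻¹ ^ (n+1) / l := by rw [pow_succ _ (n+1), div_eq_mul_inv]
    have e2 : (l-1) * l⁻¹ ^ (n+1+1) = ((l-1) * l⁻¹ ^ (n+1)) / l := by rw [e1]; ring
    rw [e2, e1]
    refine ⟨h0 _ ha, h0 _ hb, by gcongr, ?_⟩
    intro x hx x1 x2
    obtain ⟨c, hc, e⟩ := h2 x hx
    have := bd c hc
    have := bd _ hb
    rcases e with e | e
    · rw [e, div_lt_div_iff_of_pos_right l0] at x1 x2
      exact hg c hc x1 x2
    · rw [e, ← add_div, div_lt_div_iff_of_pos_right l0] at x2; linarith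

lemma zpow_lim {l : ℝ} (hl : 1 < l) {d : ℝ} (hd : 0 < d) (j : ℕ → ℤ)
    (h : Tendsto (fun n => l ^ (j n)) atTop (𝓝 d)) : ∃ k : ℤ, d = l ^ k := by
  have hlog : 0 < Real.log l := Real.log_pos hl
  have h1 : Tendsto (fun n => ((j n : ℤ) : ℝ)) atTop (𝓝 (Real.log d / Real.log l)) := by
    have := ((Real.continuousAt_log hd.ne').tendsto.comp h).div_const (Real.log l)
    refine this.congr fun n => ?_
    simp only [Function.comp, Real.log_zpow]
    field_simp
  have h2 : Real.log d / Real.log l ∈ Set.range ((↑) : ℤ → ℝ) :=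
    Int.isClosedEmbedding_coe_real.isClosed_range.mem_of_tendsto h1
      (Eventually.of_forall fun n => ⟨_, rfl⟩)
  obtain ⟨k, hk⟩ := h2
  refine ⟨k, ?_⟩
  rw [eq_div_iff hlog.ne', ← Real.log_zpow] at hk
  exact (Real.log_injOn_pos (by simp only [mem_Ioi]; positivity) hd hk).symm

lemma forward {l : ℝ} (hl : 2 < l) {C : Set ℝ} (hC : IsCentralCantor l C)
    {φ ψ : ℝ → ℝ} (h : IsC1DiffeoPair φ ψ) (hCC : φ '' C = C) (h0 : φ 0 = 0) :
    ∃ k : ℤ, deriv φ 0 = l ^ k := by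
  have l0 : 0 < l := by linarith
  obtain ⟨z, o, bd, _, _, _⟩ := cc_facts hl hC
  obtain ⟨c1, c2, li, ri⟩ := h
  have dφ : HasDerivAt φ (deriv φ 0) 0 := (c1.differentiable (by norm_num) 0).hasDerivAt
  have dψ : HasDerivAt ψ (deriv ψ 0) (φ 0) := by
    rw [h0]; exact (c2.differentiable (by norm_num) 0).hasDerivAt
  have hne : deriv φ 0 ≠ 0 := by
    intro hz
    have e := dψ.comp 0 dφ
    have : ψ ∘ φ = id := funext li
    rw [this, hz, mul_zero] at e
    exact zero_ne_one (e.unique (hasDerivAt_id 0))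
  have hmono : StrictMono φ := by
    rcases c1.continuous.strictMono_of_inj li.injective with h | h
    · exact h
    · exfalso
      have := h (zero_lt_one (α := ℝ))
      rw [h0] at this
      have h3 : φ 1 ∈ C := by rw [← hCC]; exact ⟨1, o, rfl⟩
      linarith [bd _ h3]
  have img : ∀ a b, CGap C a b → CGap C (φ a) (φ b) := by
    intro a b ⟨ha, hb, hab, hg⟩
    refine ⟨hCC ▸ ⟨a, ha, rfl⟩, hCC ▸ ⟨b, hb, rfl⟩, hmono hab, ?_⟩
    intro y hy y1 y2
    rw [← hCC] at hy
    obtain ⟨x, hx, rfl⟩ := hy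
    exact hg x hx (hmono.lt_iff_lt.1 y1) (hmono.lt_iff_lt.1 y2)
  choose k hk using fun n => gap_len' hl hC _ _ (img _ _ (gap_src hl hC n))
  have du : HasDerivAt (fun t => φ ((l-1)*t) - φ t) ((l-2) * deriv φ 0) 0 := by
    have a1 : HasDerivAt (fun t : ℝ => (l-1)*t) (l-1) 0 := by
      simpa using (hasDerivAt_id (0:ℝ)).const_mul (l-1)
    have a2 : HasDerivAt φ (deriv φ 0) ((l-1)*0) := by rw [mul_zero]; exact dφ
    have := (HasDerivAt.comp (0:ℝ) a2 a1).sub dφ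
    refine this.congr_deriv ?_
    ring
  have ht := hasDerivAt_iff_tendsto_slope_zero.1 du
  have hs : Tendsto (fun n : ℕ => (l⁻¹) ^ (n+1)) atTop (𝓝[≠] 0) := by
    rw [tendsto_nhdsWithin_iff]
    refine ⟨?_, Eventually.of_forall fun n => ?_⟩
    · exact (tendsto_add_atTop_iff_nat 1).2 (tendsto_pow_atTop_nhds_zero_of_lt_one (by positivity)
        (inv_lt_one_of_one_lt₀ (by linarith)))
    · simp only [mem_compl_iff, mem_singleton_iff]; positivity
  have hlim := (ht.comp hs).div_const (l-2)
  have hl2 : l - 2 ≠ 0 := by linarith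
  have hlim2 : Tendsto (fun n : ℕ => l ^ (k n + (n+1 : ℕ))) atTop (𝓝 (deriv φ 0)) := by
    rw [mul_div_cancel_left₀ _ hl2] at hlim
    refine hlim.congr fun n => ?_
    simp only [Function.comp, zero_add, mul_zero, sub_self, sub_zero, hk, smul_eq_mul]
    rw [zpow_add₀ l0.ne', zpow_natCast, inv_pow, inv_inv]
    field_simp
  have hd : 0 ≤ deriv φ 0 := ge_of_tendsto' hlim2 fun n => by positivity
  exact zpow_lim (by linarith) (lt_of_le_of_ne hd hne.symm) _ hlim2

lemma bump {p q m : ℝ} (hp : 0 < p) (hq : 0 < q) (hm : 0 < m) :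
    ∃ h : ℝ → ℝ, Continuous h ∧ (∀ x, 0 < h x) ∧ (∀ x ≤ 0, h x = p) ∧ (∀ x, 1 ≤ x → h x = q) ∧
      ∫ x in (0:ℝ)..1, h x = m := by
  obtain ⟨N, hN⟩ := exists_nat_gt ((p + q) / m)
  have hN0 : (0:ℝ) < N := lt_trans (by positivity) hN
  have hN1 : N ≠ 0 := by rintro rfl; simp at hN0
  set c := 6 * (m - (p + q) / (N + 1)) with hcdef
  have hc : 0 < c := by
    have : (p + q) / (N + 1) < m := by
      rw [div_lt_iff₀ hm] at hN
      rw [div_lt_iff₀ (by positivity)]; nlinarith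
    rw [hcdef]; linarith
  set t : ℝ → ℝ := fun x => max 0 (min x 1) with ht
  have tc : Continuous t := by fun_prop
  have t0 : ∀ x, 0 ≤ t x := fun x => le_max_left _ _
  have t1 : ∀ x, t x ≤ 1 := fun x => max_le zero_le_one (min_le_right _ _)
  refine ⟨fun x => p * (1 - t x) ^ N + q * (t x) ^ N + c * (t x * (1 - t x)), by fun_prop, ?_, ?_, ?_, ?_⟩
  · intro x
    have a0 := t0 x
    have a1 := t1 x
    have b1 : 0 ≤ 1 - t x := by linarith
    rcases eq_or_lt_of_le a0 with h | h
    · simp [← h, hN1, hp]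
    · have : 0 < q * t x ^ N := by positivity
      have : 0 ≤ p * (1 - t x) ^ N := by positivity
      have : 0 ≤ c * (t x * (1 - t x)) := by positivity
      linarith
  · intro x hx
    have : t x = 0 := by simp only [ht]; rw [min_eq_left (by linarith), max_eq_left hx]
    simp [this, hN1]
  · intro x hx
    have : t x = 1 := by simp only [ht]; rw [min_eq_right hx]; simp
    simp [this, hN1]
  · have e : ∫ x in (0:ℝ)..1, (p * (1 - t x) ^ N + q * (t x) ^ N + c * (t x * (1 - t x)))
        = ∫ x in (0:ℝ)..1, (p * (1 - x) ^ N + q * x ^ N + c * (x * (1 - x))) := by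
      apply intervalIntegral.integral_congr
      intro x hx
      rw [uIcc_of_le zero_le_one] at hx
      have : t x = x := by simp only [ht]; rw [min_eq_left hx.2, max_eq_right hx.1]
      simp only [this]
    rw [e]
    have hN2 : (N:ℝ) + 1 ≠ 0 := by positivity
    have F : ∀ x ∈ uIcc (0:ℝ) 1, HasDerivAt
        (fun x : ℝ => -(p * (1 - x) ^ (N+1)/(N+1)) + q * x ^ (N+1)/(N+1) + c * (x^2/2 - x^3/3))
        (p * (1 - x) ^ N + q * x ^ N + c * (x * (1 - x))) x := by
      intro x _
      have d1 := ((((hasDerivAt_id x).const_sub 1).pow (N+1)).const_mul p).div_const ((N:ℝ)+1)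
      have d2 := ((((hasDerivAt_id x)).pow (N+1)).const_mul q).div_const ((N:ℝ)+1)
      have d3 := ((((hasDerivAt_id x).pow 2).div_const 2).sub (((hasDerivAt_id x).pow 3).div_const 3)).const_mul c
      refine ((d1.neg.add d2).add d3).congr_deriv ?_
      simp
      field_simp
    rw [intervalIntegral.integral_eq_sub_of_hasDerivAt F (Continuous.intervalIntegrable (by fun_prop) _ _)]
    simp [hcdef]
    field_simp
    ring

lemma diffeo_std {p q m : ℝ} (hp : 0 < p) (hq : 0 < q) (hm : 0 < m) :
    ∃ F G : ℝ → ℝ, IsC1DiffeoPair F G ∧ (∀ x ≤ 0, F x = p * x) ∧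
      (∀ x, 1 ≤ x → F x = m + q * (x - 1)) := by
  obtain ⟨h, hc, hpos, hl, hr, hi⟩ := bump hp hq hm
  set F : ℝ → ℝ := fun x => ∫ s in (0:ℝ)..x, h s with hF
  have dF : ∀ x, HasDerivAt F (h x) x := fun x =>
    intervalIntegral.integral_hasDerivAt_right (hc.intervalIntegrable _ _)
      (hc.stronglyMeasurableAtFilter _ _) hc.continuousAt
  have Fd : deriv F = h := funext fun x => (dF x).deriv
  have Fc : ContDiff ℝ 1 F := by
    rw [contDiff_one_iff_deriv]
    exact ⟨fun x => (dF x).differentiableAt, by rw [Fd]; exact hc⟩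
  have mono : StrictMono F := strictMono_of_deriv_pos (by rw [Fd]; exact hpos)
  have FL : ∀ x ≤ 0, F x = p * x := by
    intro x hx
    have : F x = ∫ s in (0:ℝ)..x, p := by
      apply intervalIntegral.integral_congr
      intro s hs
      rw [uIcc_of_ge hx] at hs
      exact hl s hs.2
    rw [this]; simp; ring
  have FR : ∀ x, 1 ≤ x → F x = m + q * (x - 1) := by
    intro x hx
    have e : F x = (∫ s in (0:ℝ)..1, h s) + ∫ s in (1:ℝ)..x, h s :=
      (intervalIntegral.integral_add_adjacent_intervals (hc.intervalIntegrable _ _) (hc.intervalIntegrable _ _)).symm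
    have : ∫ s in (1:ℝ)..x, h s = ∫ s in (1:ℝ)..x, q := by
      apply intervalIntegral.integral_congr
      intro s hs
      rw [uIcc_of_le hx] at hs
      exact hr s hs.1
    rw [e, this, hi]; simp; ring
  have surj : Function.Surjective F := by
    intro y
    have hcont := Fc.continuous
    set u := min 0 (y / p)
    set v := max 1 ((y - m) / q + 1)
    have hu : F u ≤ y := by
      rw [FL u (min_le_left _ _)]
      have : u ≤ y / p := min_le_right _ _
      rw [le_div_iff₀ hp] at this; linarith
    have hv : y ≤ F v := by
      rw [FR v (le_max_left _ _)]
      have : (y - m) / q + 1 ≤ v := le_max_right _ _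
      have : (y - m) / q ≤ v - 1 := by linarith
      rw [div_le_iff₀ hq] at this; linarith
    exact mem_range_of_exists_le_of_exists_ge hcont ⟨u, hu⟩ ⟨v, hv⟩
  set e := (mono.orderIsoOfSurjective F surj).toHomeomorph with he
  have eF : (e : ℝ → ℝ) = F := rfl
  refine ⟨F, e.symm, ⟨Fc, ?_, ?_, ?_⟩, FL, FR⟩
  · exact e.contDiff_symm_deriv (f' := h) (fun x => (hpos x).ne') (by rw [eF]; exact dF) (by rw [eF]; exact Fc)
  · intro x; exact e.symm_apply_apply x
  · intro x; exact e.apply_symm_apply x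

lemma pair_comp {f g f' g' : ℝ → ℝ} (h : IsC1DiffeoPair f g) (h' : IsC1DiffeoPair f' g') :
    IsC1DiffeoPair (f' ∘ f) (g ∘ g') := by
  obtain ⟨a, b, c, d⟩ := h
  obtain ⟨a', b', c', d'⟩ := h'
  exact ⟨a'.comp a, b.comp b', c'.comp c, d'.comp d⟩

lemma glue {a b p r q s : ℝ} (hab : a < b) (hp : 0 < p) (hq : 0 < q) (hlt : p * a + r < q * b + s) :
    ∃ F G : ℝ → ℝ, IsC1DiffeoPair F G ∧ (∀ x ≤ a, F x = p * x + r) ∧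
      (∀ x, b ≤ x → F x = q * x + s) := by
  have w : 0 < b - a := sub_pos.2 hab
  obtain ⟨F, G, ⟨h1, h2, h3, h4⟩, hL, hR⟩ := diffeo_std (p := p * (b - a)) (q := q * (b - a))
    (m := (q * b + s) - (p * a + r)) (by positivity) (by positivity) (by linarith)
  refine ⟨fun x => F ((x - a) / (b - a)) + (p * a + r), fun y => a + (b - a) * G (y - (p * a + r)),
    ⟨by fun_prop, by fun_prop, ?_, ?_⟩, ?_, ?_⟩
  · intro x
    simp only [add_sub_cancel_right]
    rw [h3]; field_simp; ring
  · intro y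
    have : (a + (b - a) * G (y - (p * a + r)) - a) / (b - a) = G (y - (p * a + r)) := by
      field_simp; ring
    simp only [this]
    rw [h4]; ring
  · intro x hx
    simp only
    rw [hL _ (div_nonpos_of_nonpos_of_nonneg (by linarith) w.le)]
    field_simp; ring
  · intro x hx
    simp only
    rw [hR _ (by rw [le_div_iff₀ w]; linarith)]
    field_simp; ring

lemma gen {l : ℝ} (hl : 2 < l) {C : Set ℝ} (hC : IsCentralCantor l C) :
    ∃ φ ψ : ℝ → ℝ, IsC1DiffeoPair φ ψ ∧ φ '' C = C ∧ φ 0 = 0 ∧ HasDerivAt φ l 0 := by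
  have l0 : 0 < l := by linarith
  obtain ⟨z, o, bd, h0, h1, h2⟩ := cc_facts hl hC
  obtain ⟨F, G, hFG, FL, FR⟩ := glue (a := 1 / l ^ 2) (b := (l - 1) / l ^ 2) (p := l) (r := 0)
    (q := 1) (s := (l - 1) ^ 2 / l ^ 2) (by gcongr; linarith) l0 one_pos (by
      field_simp; nlinarith)
  obtain ⟨F', G', hFG', FL', FR'⟩ := glue (a := (l ^ 2 - l + 1) / l ^ 2)
    (b := (l - 1) * (2 * l - 1) / l ^ 2) (p := 1) (r := 0)
    (q := 1 / l) (s := (l ^ 2 - 1) / l ^ 2 - (l - 1) * (2 * l - 1) / l ^ 3)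
    (by gcongr; nlinarith) one_pos (by positivity) (by
      have : 1 / l * ((l - 1) * (2 * l - 1) / l ^ 2) + ((l ^ 2 - 1) / l ^ 2 - (l - 1) * (2 * l - 1) / l ^ 3) = (l ^ 2 - 1) / l ^ 2 := by
        field_simp; ring
      rw [this, one_mul, add_zero]; gcongr; linarith)
  have pLL : ∀ x ≤ 1 / l ^ 2, (F' ∘ F) x = l * x := by
    intro x hx
    have : l * x ≤ (l ^ 2 - l + 1) / l ^ 2 := by
      rw [le_div_iff₀ (by positivity)] at hx ⊢; nlinarith
    simp only [Function.comp, FL x hx, add_zero, FL' _ this, one_mul]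
  have e00 : ∀ c ∈ C, (F' ∘ F) (c / l / l) = c / l := by
    intro c hc
    have := bd c hc
    rw [pLL]
    · field_simp
    · rw [div_div, ← sq]; gcongr; exact this.2
  have e01 : ∀ c ∈ C, (F' ∘ F) ((c / l + (l - 1) / l) / l) = (c / l) / l + (l - 1) / l := by
    intro c hc
    have := bd c hc
    have a1 : (l - 1) / l ^ 2 ≤ (c / l + (l - 1) / l) / l := by
      rw [← add_div, div_div, ← sq]; gcongr; linarith
    have a2 : 1 * ((c / l + (l - 1) / l) / l) + (l - 1) ^ 2 / l ^ 2 = (c / l) / l + (l - 1) / l := by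
      field_simp; ring
    simp only [Function.comp]
    rw [FR _ a1, a2, FL']
    · ring
    · have : c / l / l + (l - 1) / l = (c + (l - 1) * l) / l ^ 2 := by field_simp
      rw [this, div_le_div_iff_of_pos_right (by positivity)]; nlinarith
  have e1 : ∀ c ∈ C, (F' ∘ F) (c / l + (l - 1) / l) = (c / l + (l - 1) / l) / l + (l - 1) / l := by
    intro c hc
    have := bd c hc
    have a1 : (l - 1) / l ^ 2 ≤ c / l + (l - 1) / l := by
      have : c / l + (l - 1) / l = (c + (l - 1)) * l / l ^ 2 := by field_simp
      rw [this]; gcongr; nlinarith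
    simp only [Function.comp]
    rw [FR _ a1, FR']
    · field_simp; ring
    · have : 1 * (c / l + (l - 1) / l) + (l - 1) ^ 2 / l ^ 2 = ((c + (l - 1)) * l + (l - 1) ^ 2) / l ^ 2 := by
        field_simp
      rw [this]; gcongr; nlinarith
  refine ⟨F' ∘ F, G ∘ G', pair_comp hFG hFG', ?_, ?_, ?_⟩
  · apply Subset.antisymm
    · rintro _ ⟨x, hx, rfl⟩
      obtain ⟨c, hc, rfl | rfl⟩ := h2 x hx
      · obtain ⟨d, hd, rfl | rfl⟩ := h2 c hc
        · rw [e00 d hd]; exact h0 _ hd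
        · rw [e01 d hd]; exact h1 _ (h0 _ hd)
      · rw [e1 c hc]; exact h1 _ (h1 _ hc)
    · intro y hy
      obtain ⟨c, hc, rfl | rfl⟩ := h2 y hy
      · exact ⟨_, h0 _ (h0 _ hc), e00 c hc⟩
      · obtain ⟨d, hd, rfl | rfl⟩ := h2 c hc
        · exact ⟨_, h0 _ (h1 _ hd), e01 d hd⟩
        · exact ⟨_, h1 _ hd, e1 d hd⟩
  · rw [pLL 0 (by positivity), mul_zero]
  · have a1 : HasDerivAt (fun t : ℝ => l*t) l 0 := by
      simpa using (hasDerivAt_id (0:ℝ)).const_mul l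
    refine a1.congr_of_eventuallyEq ?_
    filter_upwards [Iic_mem_nhds (show (0:ℝ) < 1 / l ^ 2 by positivity)] with x hx
    exact pLL x hx

lemma backward {l : ℝ} (hl : 2 < l) {C : Set ℝ} (hC : IsCentralCantor l C) (k : ℤ) :
    ∃ φ ψ : ℝ → ℝ, IsC1DiffeoPair φ ψ ∧ φ '' C = C ∧ φ 0 = 0 ∧ HasDerivAt φ (l ^ k) 0 := by
  have l0 : 0 < l := by linarith
  obtain ⟨f, g, hfg, hf, f0, fd⟩ := gen hl hC
  have hfg' := hfg
  obtain ⟨c1, c2, li, ri⟩ := hfg'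
  have g0 : g 0 = 0 := by have := li 0; rwa [f0] at this
  have hg : g '' C = C := by
    conv_lhs => rw [← hf]
    rw [← image_comp, show g ∘ f = id from funext li, image_id]
  have gd : HasDerivAt g (l⁻¹) 0 :=
    HasDerivAt.of_local_left_inverse c2.continuous.continuousAt (by rw [g0]; exact fd) l0.ne'
      (Eventually.of_forall ri)
  induction k using Int.induction_on with
  | zero =>
    exact ⟨id, id, ⟨contDiff_id, contDiff_id, fun _ => rfl, fun _ => rfl⟩, image_id _, rfl,
      by simpa using hasDerivAt_id (0:ℝ)⟩
  | succ n ih =>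
    obtain ⟨φ, ψ, h, hi, hz, hd⟩ := ih
    refine ⟨φ ∘ f, g ∘ ψ, pair_comp hfg h, by rw [image_comp, hf, hi], by simp [f0, hz], ?_⟩
    rw [zpow_add_one₀ l0.ne']
    exact HasDerivAt.comp 0 (by rw [f0]; exact hd) fd
  | pred n ih =>
    obtain ⟨φ, ψ, h, hi, hz, hd⟩ := ih
    refine ⟨φ ∘ g, f ∘ ψ, pair_comp ⟨c2, c1, ri, li⟩ h, by rw [image_comp, hg, hi], by simp [g0, hz], ?_⟩
    rw [zpow_sub_one₀ l0.ne']
    exact HasDerivAt.comp 0 (by rw [g0]; exact hd) gd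

/-- For the central Cantor set `C_λ` (λ > 2), the group of derivatives at `0` of
`C¹` diffeomorphisms of ℝ preserving `C_λ` and fixing `0` is exactly `⟨λ⟩ = {λ^k}`. -/
theorem derivStab_centralCantor (l : ℝ) (hl : 2 < l) (C : Set ℝ)
    (hC : IsCentralCantor l C) :
    {d : ℝ | ∃ φ ψ : ℝ → ℝ, IsC1DiffeoPair φ ψ ∧ φ '' C = C ∧ φ 0 = 0 ∧
        deriv φ 0 = d}
      = {x : ℝ | ∃ k : ℤ, x = l ^ k} := by
  ext d
  constructor
  · rintro ⟨φ, ψ, h, hi, hz, rfl⟩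
    exact forward hl hC h hi hz
  · rintro ⟨k, rfl⟩
    obtain ⟨φ, ψ, h, hi, hz, hd⟩ := backward hl hC k
    exact ⟨φ, ψ, h, hi, hz, hd.deriv⟩
end

section
/- Let (Φ, M) be a contractive invertible IFS with n+1 maps whose strict attractive basin M is an interval [0,1], with the maps φ_j orientation-preserving C¹ diffeomorphisms onto their images. Then the group of homeomorphisms of the attractor Cantor set C_Φ induced by orientation-preserving C¹ diffeomorphisms of M preserving C_Φ contains a subgroup isomorphic to Thompson's group F_{n+1}. -/
open Set Filter Topology Asymptotics

/-- An element of the Higman–Thompson group `F_p`: a piecewise linear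
orientation-preserving homeomorphism of `[0,1]` with finitely many breakpoints, all
in `ℤ[1/p]`, and slopes integer powers of `p`. -/
def IsHigmanThompson (p : ℕ) (f : ℝ → ℝ) : Prop :=
  f 0 = 0 ∧ f 1 = 1 ∧ StrictMonoOn f (Set.Icc 0 1) ∧
  ∃ (m : ℕ) (x : ℕ → ℝ), 0 < m ∧ x 0 = 0 ∧ x m = 1 ∧
    (∀ i < m, x i < x (i + 1)) ∧
    (∀ i ≤ m, ∃ (a : ℤ) (e : ℕ), x i = (a : ℝ) / (p : ℝ) ^ e) ∧
    (∀ i < m, ∃ k : ℤ, ∀ t ∈ Set.Icc (x i) (x (i + 1)),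
      f t = f (x i) + (p : ℝ) ^ k * (t - x i))


namespace IFS

/-- C1 orientation-preserving diffeomorphism -/
def Dif (e : ℝ ≃o ℝ) : Prop :=
  ∃ e' : ℝ → ℝ, Continuous e' ∧ (∀ x, HasDerivAt e (e' x) x) ∧ ∀ x, 0 < e' x

lemma Dif.one : Dif 1 := ⟨fun _ => 1, continuous_const, fun x => hasDerivAt_id x, fun _ => one_pos⟩

lemma Dif.mul {e f : ℝ ≃o ℝ} (he : Dif e) (hf : Dif f) : Dif (e * f) := by
  obtain ⟨e', h1, h2, h3⟩ := he
  obtain ⟨f', k1, k2, k3⟩ := hf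
  refine ⟨fun x => e' (f x) * f' x, (h1.comp f.continuous).mul k1, fun x => ?_, fun x => mul_pos (h3 _) (k3 _)⟩
  exact (h2 (f x)).comp x (k2 x)

lemma Dif.inv {e : ℝ ≃o ℝ} (he : Dif e) : Dif e⁻¹ := by
  obtain ⟨e', h1, h2, h3⟩ := he
  refine ⟨fun x => (e' (e.symm x))⁻¹, (h1.comp e.symm.continuous).inv₀ (fun x => (h3 _).ne'),
    fun x => ?_, fun x => inv_pos.2 (h3 _)⟩
  exact HasDerivAt.of_local_left_inverse (f := e) e.symm.continuous.continuousAt (h2 _) (h3 _).ne'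
    (Eventually.of_forall fun y => e.apply_symm_apply y)

lemma Dif.contDiff {e : ℝ ≃o ℝ} (he : Dif e) : ContDiff ℝ 1 e := by
  obtain ⟨e', h1, h2, h3⟩ := he
  rw [contDiff_one_iff_deriv]
  refine ⟨fun x => (h2 x).differentiableAt, ?_⟩
  have : deriv e = e' := funext fun x => (h2 x).deriv
  rwa [this]

lemma Dif.pair {e : ℝ ≃o ℝ} (he : Dif e) : ContDiff ℝ 1 (e : ℝ → ℝ) ∧ ContDiff ℝ 1 (e.symm : ℝ → ℝ) ∧
    Function.LeftInverse e.symm e ∧ Function.RightInverse e.symm e :=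
  ⟨he.contDiff, he.inv.contDiff, e.left_inv, e.right_inv⟩

lemma glue2 (a : ℝ) (f g f' g' : ℝ → ℝ) (hf : ∀ x, HasDerivAt f (f' x) x)
    (hg : ∀ x, HasDerivAt g (g' x) x) (cf : Continuous f') (cg : Continuous g')
    (h : f a = g a) (h' : f' a = g' a) :
    Continuous (fun x => if x ≤ a then f' x else g' x) ∧
    ∀ x, HasDerivAt (fun x => if x ≤ a then f x else g x) (if x ≤ a then f' x else g' x) x := by
  refine ⟨Continuous.if_le cf cg continuous_id continuous_const ?_, fun x => ?_⟩
  · rintro x rfl; exact h'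
  · rcases lt_trichotomy x a with hx | hx | hx
    · rw [if_pos hx.le]
      refine (hf x).congr_of_eventuallyEq ?_
      filter_upwards [Iio_mem_nhds hx] with y hy
      rw [if_pos (le_of_lt hy)]
    · subst hx
      rw [if_pos le_rfl]
      rw [← hasDerivWithinAt_univ, ← Iic_union_Ici (a := x)]
      refine HasDerivWithinAt.union ?_ ?_
      · refine (hf x).hasDerivWithinAt.congr (fun y hy => if_pos hy) (if_pos le_rfl)
      · rw [h']
        refine (hg x).hasDerivWithinAt.congr (fun y hy => ?_) ?_
        · rcases eq_or_lt_of_le (show x ≤ y from hy) with rfl | h2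
          · simp [h]
          · rw [if_neg (not_le.2 h2)]
        · simp [h]
    · rw [if_neg (not_le.2 hx)]
      refine (hg x).congr_of_eventuallyEq ?_
      filter_upwards [Ioi_mem_nhds hx] with y hy
      rw [if_neg (not_le.2 hy)]

lemma glue3 (a b : ℝ) (hab : a < b) (f g k f' g' k' : ℝ → ℝ) (hf : ∀ x, HasDerivAt f (f' x) x)
    (hg : ∀ x, HasDerivAt g (g' x) x) (hk : ∀ x, HasDerivAt k (k' x) x)
    (cf : Continuous f') (cg : Continuous g') (ck : Continuous k')
    (h1 : f a = g a) (h1' : f' a = g' a) (h2 : g b = k b) (h2' : g' b = k' b)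
    (pf : ∀ x ≤ a, 0 < f' x) (pg : ∀ x ∈ Icc a b, 0 < g' x) (pk : ∀ x, b ≤ x → 0 < k' x)
    (tf : Tendsto f atBot atBot) (tk : Tendsto k atTop atTop) :
    ∃ e : ℝ ≃o ℝ, Dif e ∧ EqOn e f (Iic a) ∧ EqOn e g (Icc a b) ∧ EqOn e k (Ici b) := by
  obtain ⟨c1, d1⟩ := glue2 b g k g' k' hg hk cg ck h2 h2'
  obtain ⟨c2, d2⟩ := glue2 a f _ f' _ hf d1 cf c1 (by simp [hab.le, h1]) (by simp [hab.le, h1'])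
  set F := fun x => if x ≤ a then f x else if x ≤ b then g x else k x with hF
  set F' := fun x => if x ≤ a then f' x else if x ≤ b then g' x else k' x with hF'
  have pos : ∀ x, 0 < F' x := by
    intro x
    simp only [hF']
    split_ifs with h3 h4
    · exact pf x h3
    · exact pg x ⟨(not_le.1 h3).le, h4⟩
    · exact pk x (not_le.1 h4).le
  have mono : StrictMono F := strictMono_of_deriv_pos fun x => by rw [(d2 x).deriv]; exact pos x
  have cont : Continuous F := continuous_iff_continuousAt.2 fun x => (d2 x).continuousAt
  have e1 : EqOn F f (Iic a) := fun x hx => if_pos hx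
  have e2 : EqOn F g (Icc a b) := by
    intro x hx
    rcases eq_or_lt_of_le hx.1 with rfl | h
    · simp [hF, h1]
    · simp [hF, not_le.2 h, hx.2]
  have e3 : EqOn F k (Ici b) := by
    intro x hx
    have hx : b ≤ x := hx
    have h3 : ¬ x ≤ a := by linarith
    rcases eq_or_lt_of_le hx with rfl | h
    · simp [hF, h3, h2]
    · simp [hF, h3, not_le.2 h]
  have surj : Function.Surjective F := by
    apply cont.surjective
    · refine tk.congr' ?_
      filter_upwards [Ici_mem_atTop b] with x hx using (e3 hx).symm
    · refine tf.congr' ?_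
      filter_upwards [Iic_mem_atBot a] with x hx using (e1 hx).symm
  exact ⟨mono.orderIsoOfSurjective F surj, ⟨F', c2, d2, pos⟩, e1, e2, e3⟩

/-- bridging -/
lemma bridge (e f : ℝ ≃o ℝ) (he : Dif e) (hf : Dif f) (a b : ℝ) (hab : a < b) (h : e a < f b) :
    ∃ g : ℝ ≃o ℝ, Dif g ∧ EqOn g e (Iic a) ∧ EqOn g f (Ici b) := by
  obtain ⟨e', ce, de, pe⟩ := he
  obtain ⟨f', cf, df, pf⟩ := hf
  set s := e' a
  set t := f' b
  have hs : 0 < s := pe a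
  have ht : 0 < t := pf b
  set L := b - a with hL
  have hL0 : 0 < L := sub_pos.2 hab
  set D := f b - e a with hD
  have hD0 : 0 < D := sub_pos.2 h
  obtain ⟨m, hm⟩ := exists_nat_gt ((s + t) * L / D)
  have hm' : (s + t) * L / (m + 1 : ℝ) < D := by
    rw [div_lt_iff₀ (by positivity)]
    rw [div_lt_iff₀ hD0] at hm
    nlinarith
  have hm0 : m ≠ 0 := by
    rintro rfl
    have : 0 < (s + t) * L / D := by positivity
    simp at hm; linarith
  set η := (D - (s + t) * L / (m + 1 : ℝ)) * 6 / L ^ 3 with hη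
  have hη0 : 0 < η := by
    have : 0 < D - (s + t) * L / (m + 1 : ℝ) := sub_pos.2 hm'
    positivity
  have hm1 : (m + 1 : ℝ) ≠ 0 := by positivity
  obtain ⟨g, hg, h1, -, h3⟩ := glue3 a b hab e
    (fun x => e a + s * (L / (m + 1)) * (1 - ((b - x) / L) ^ (m + 1))
      + t * (L / (m + 1)) * ((x - a) / L) ^ (m + 1)
      + η * (L * (x - a) ^ 2 / 2 - (x - a) ^ 3 / 3)) f e'
    (fun x => s * ((b - x) / L) ^ m + t * ((x - a) / L) ^ m + η * ((x - a) * (b - x))) f' de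
    (by
      intro x
      have A1 : HasDerivAt (fun x => (b - x) / L) (-1 / L) x := ((hasDerivAt_id x).const_sub b).div_const L
      have A2 : HasDerivAt (fun x => (x - a) / L) (1 / L) x := ((hasDerivAt_id x).sub_const a).div_const L
      have A3 : HasDerivAt (fun x => x - a) 1 x := ((hasDerivAt_id x).sub_const a)
      have := ((((A1.pow (m+1)).const_sub 1).const_mul (s * (L / (m + 1)))).const_add (e a)).add
        ((A2.pow (m+1)).const_mul (t * (L / (m + 1)))) |>.add
        (((((A3.pow 2).const_mul L).div_const 2).sub ((A3.pow 3).div_const 3)).const_mul η)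
      refine HasDerivAt.congr_deriv this ?_
      push_cast
      have : b - x = L - (x - a) := by rw [hL]; ring
      rw [this]
      field_simp)
    df ce (by fun_prop) cf
    (by simp [← hL, hL0.ne'])
    (by simp [← hL, hL0.ne', hm0, s])
    (by
      simp only [sub_self, zero_div, ← hL]
      rw [div_self hL0.ne', zero_pow (by omega), one_pow]
      have : f b = e a + D := by rw [hD]; ring
      rw [this, hη]
      field_simp
      ring)
    (by simp [← hL, hL0.ne', hm0, t])
    (fun x _ => pe x)
    (by
      rintro x ⟨hx1, hx2⟩
      have B1 : 0 ≤ (b - x) / L := div_nonneg (by linarith) hL0.le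
      have B2 : 0 ≤ (x - a) / L := div_nonneg (by linarith) hL0.le
      rcases eq_or_lt_of_le hx1 with rfl | h3
      · simp [← hL, hL0.ne', hm0, hs]
      · have B3 : 0 < (x - a) / L := div_pos (by linarith) hL0
        have : 0 ≤ (x - a) * (b - x) := mul_nonneg (by linarith) (by linarith)
        positivity)
    (fun x _ => pf x) e.tendsto_atBot f.tendsto_atTop
  exact ⟨g, hg, h1, h3⟩

/-- affine extension -/
lemma extend (f : ℝ → ℝ) (hf : ContDiff ℝ 1 f) (hpos : ∀ x, 0 < deriv f x) :
    ∃ e : ℝ ≃o ℝ, Dif e ∧ EqOn e f (Icc 0 1) := by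
  rw [contDiff_one_iff_deriv] at hf
  have aff : ∀ c s u : ℝ, ∀ x, HasDerivAt (fun x => c + s * (x - u)) s x := by
    intro c s u x
    simpa using (((hasDerivAt_id x).sub_const u).const_mul s).const_add c
  obtain ⟨g, hg, -, h2, -⟩ := glue3 0 1 one_pos (fun x => f 0 + deriv f 0 * (x - 0)) f
    (fun x => f 1 + deriv f 1 * (x - 1)) (fun _ => deriv f 0) (deriv f) (fun _ => deriv f 1)
    (aff _ _ _) (fun x => (hf.1 x).hasDerivAt) (aff _ _ _) continuous_const hf.2 continuous_const
    (by simp) rfl (by simp) rfl (fun _ _ => hpos 0) (fun x _ => hpos x) (fun _ _ => hpos 1)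
    (tendsto_atBot_add_const_left _ _ ((tendsto_atBot_add_const_right _ _ tendsto_id).const_mul_atBot (hpos 0)))
    (tendsto_atTop_add_const_left _ _ ((tendsto_atTop_add_const_right _ _ tendsto_id).const_mul_atTop (hpos 1)))
  exact ⟨g, hg, h2⟩

lemma glueMany (α β : ℕ → ℝ) (G : ℕ → ℝ ≃o ℝ) (P : ℕ) (hG : ∀ a < P, Dif (G a))
    (h1 : ∀ a, a + 1 < P → β a < α (a + 1))
    (h2 : ∀ a, a + 1 < P → G a (β a) < G (a + 1) (α (a + 1)))
    (h0 : ∀ a < P, α a ≤ β a) :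
    ∀ k < P, ∃ g : ℝ ≃o ℝ, Dif g ∧ (∀ a ≤ k, EqOn g (G a) (Icc (α a) (β a))) ∧
      EqOn g (G k) (Ici (α k)) := by
  have hm : ∀ k < P, ∀ a ≤ k, β a ≤ β k := by
    intro k
    induction k with
    | zero => intro _ a ha; rw [Nat.le_zero.1 ha]
    | succ k ih =>
      intro hk a ha
      rcases Nat.of_le_succ ha with h | h
      · exact (ih (by omega) a h).trans ((h1 k hk).le.trans (h0 _ hk))
      · rw [h]
  intro k
  induction k with
  | zero =>
    intro hk
    refine ⟨G 0, hG 0 hk, fun a ha => ?_, fun x _ => rfl⟩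
    rw [Nat.le_zero.1 ha]; exact fun x _ => rfl
  | succ k ih =>
    intro hk
    obtain ⟨g, dg, g1, g2⟩ := ih (by omega)
    obtain ⟨g', dg', k1, k2⟩ := bridge g (G (k+1)) dg (hG _ hk) (β k) (α (k+1)) (h1 k hk)
      (by rw [g2 (h0 k (by omega))]; exact h2 k hk)
    refine ⟨g', dg', fun a ha => ?_, k2⟩
    rcases Nat.of_le_succ ha with h | h
    · intro x hx
      rw [k1 (show x ≤ β k from hx.2.trans (hm k (by omega) a h)), g1 a h hx]
    · subst h
      intro x hx
      exact k2 hx.1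

end IFS

namespace IFS

structure Sys (p : ℕ) (e : Fin p → ℝ ≃o ℝ) (C : Set ℝ) (K : ℝ) : Prop where
  hp : 2 ≤ p
  dif : ∀ j, Dif (e j)
  pos : ∀ j, 0 < e j 0
  lt1 : ∀ j, e j 1 < 1
  ord : ∀ i j, i < j → e i 1 < e j 0
  K0 : 0 < K
  K1 : K < 1
  contr : ∀ j, ∀ x ∈ C, ∀ y ∈ C, |e j x - e j y| ≤ K * |x - y|
  sub : C ⊆ Icc 0 1
  ne : C.Nonempty
  comp : IsCompact C
  c1 : ∀ j, ∀ x ∈ C, e j x ∈ C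
  c2 : ∀ x ∈ C, ∃ j, ∃ y ∈ C, e j y = x

variable {p : ℕ} {e : Fin p → ℝ ≃o ℝ} {C : Set ℝ} {K : ℝ}

lemma Sys.lt_of (S : Sys p e C K) {i j : Fin p} {x y : ℝ} (hx : x ∈ C) (hy : y ∈ C) (hij : i < j) :
    e i x < e j y :=
  ((e i).monotone (S.sub hx).2).trans_lt ((S.ord i j hij).trans_le ((e j).monotone (S.sub hy).1))

lemma Sys.le_of (S : Sys p e C K) {i j : Fin p} {x y : ℝ} (hx : x ∈ C) (hy : y ∈ C)
    (h : e i x ≤ e j y) : i ≤ j := by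
  by_contra hc
  exact absurd (S.lt_of hy hx (not_le.1 hc)) (not_lt.2 h)

lemma Sys.exists_q (S : Sys p e C K) : ∃ q : ℝ → ℝ, (∀ x, q x ∈ Icc (0:ℝ) 1) ∧
    ∀ j, ∀ x ∈ C, q (e j x) = ((j : ℕ) + q x) / p := by
  have hp0 : 0 < p := by have := S.hp; omega
  have : ∀ x, ∃ (j : Fin p) (y : ℝ), x ∈ C → y ∈ C ∧ e j y = x := by
    intro x
    by_cases hx : x ∈ C
    · obtain ⟨j, y, hy, h⟩ := S.c2 x hx
      exact ⟨j, y, fun _ => ⟨hy, h⟩⟩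
    · exact ⟨⟨0, hp0⟩, 0, fun h => absurd h hx⟩
  choose d T hT using this
  refine ⟨fun x => Real.ofDigits (fun k => d (T^[k] x)), fun x => ⟨Real.ofDigits_nonneg _, Real.ofDigits_le_one _⟩, ?_⟩
  intro j x hx
  obtain ⟨h1, h2⟩ := hT _ (S.c1 j x hx)
  have hd : d (e j x) = j := le_antisymm (S.le_of h1 hx h2.le) (S.le_of hx h1 h2.ge)
  rw [hd] at h2
  have hTx : T (e j x) = x := (e j).injective h2
  have : (fun k => d (T^[k] (e j x))) = fun k => Nat.casesOn k j (fun k => d (T^[k] x)) := by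
    funext k
    cases k with
    | zero => simpa using hd
    | succ k => simp [hTx]
  simp only []
  rw [Real.ofDigits_eq_sum_add_ofDigits _ 1]
  simp [Real.ofDigitsTerm, hd, hTx]
  field_simp

lemma Sys.descent (S : Sys p e C K) (P : ℝ → ℝ → Prop) (hPC : ∀ x y, P x y → x ∈ C ∧ y ∈ C)
    (h : ∀ x y, P x y → ∃ j x' y', P x' y' ∧ e j x' = x ∧ e j y' = y) (x y : ℝ) (hxy : P x y) :
    x = y := by
  have key : ∀ N : ℕ, ∀ x y, P x y → |x - y| ≤ K ^ N := by
    intro N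
    induction N with
    | zero =>
      intro x y hP
      obtain ⟨h1, h2⟩ := hPC x y hP
      have := S.sub h1
      have := S.sub h2
      simp only [mem_Icc] at *
      rw [pow_zero, abs_le]; constructor <;> linarith
    | succ N ih =>
      intro x y hP
      obtain ⟨j, x', y', h1, rfl, rfl⟩ := h x y hP
      have hc := hPC _ _ h1
      calc _ ≤ K * |x' - y'| := S.contr j _ hc.1 _ hc.2
        _ ≤ K * K ^ N := by gcongr; exact S.K0.le; exact ih _ _ h1
        _ = _ := by ring
  have h0 : |x - y| ≤ 0 := ge_of_tendsto' (tendsto_pow_atTop_nhds_zero_of_lt_one S.K0.le S.K1)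
    fun N => key N x y hxy
  exact sub_eq_zero.1 (abs_nonpos_iff.1 h0)

lemma Sys.gap (S : Sys p e C K) {q : ℝ → ℝ} (q1 : ∀ x, q x ∈ Icc (0:ℝ) 1)
    (q2 : ∀ j, ∀ x ∈ C, q (e j x) = ((j : ℕ) + q x) / p) {x y z : ℝ} (hx : x ∈ C) (hy : y ∈ C)
    (hz : z ∈ C) (hxz : x < z) (hzy : z < y) : q x ≠ q y := by
  have hp0 : (0:ℝ) < p := by have := S.hp; exact_mod_cast (by omega : 0 < p)
  have hmax : ∀ x z, (x ∈ C ∧ z ∈ C ∧ x ≤ z ∧ q x = 1) → x = z := by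
    refine S.descent _ (fun x y h => ⟨h.1, h.2.1⟩) ?_
    rintro _ _ ⟨h1, h2, h3, h4⟩
    obtain ⟨i, x, hx, rfl⟩ := S.c2 _ h1
    obtain ⟨j, z, hz, rfl⟩ := S.c2 _ h2
    have hij := S.le_of hx hz h3
    rw [q2 i x hx, div_eq_one_iff_eq hp0.ne'] at h4
    have hq := (q1 x).2
    have hi : (p:ℝ) ≤ (i:ℕ) + 1 := by linarith
    have hi : p ≤ (i:ℕ) + 1 := by exact_mod_cast hi
    have hji : j = i := by
      apply Fin.ext; have := j.2; have := Fin.le_def.1 hij; omega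
    subst hji
    refine ⟨j, x, z, ⟨hx, hz, (e j).le_iff_le.1 h3, ?_⟩, rfl, rfl⟩
    have : (p:ℝ) = (j:ℕ) + 1 := by exact_mod_cast (by have := j.2; omega : p = j + 1)
    linarith
  have hmin : ∀ x z, (x ∈ C ∧ z ∈ C ∧ z ≤ x ∧ q x = 0) → x = z := by
    refine S.descent _ (fun x y h => ⟨h.1, h.2.1⟩) ?_
    rintro _ _ ⟨h1, h2, h3, h4⟩
    obtain ⟨i, x, hx, rfl⟩ := S.c2 _ h1
    obtain ⟨j, z, hz, rfl⟩ := S.c2 _ h2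
    have hij := S.le_of hz hx h3
    rw [q2 i x hx, div_eq_zero_iff, or_iff_left hp0.ne'] at h4
    have hq := (q1 x).1
    have hi0 : (0:ℝ) ≤ (i:ℕ) := by positivity
    have hi : ((i:ℕ):ℝ) = 0 := by linarith
    have hi' : (i:ℕ) = 0 := by exact_mod_cast hi
    have hji : j = i := by
      apply Fin.ext; have := Fin.le_def.1 hij; omega
    subst hji
    exact ⟨j, x, z, ⟨hx, hz, (e j).le_iff_le.1 h3, by linarith⟩, rfl, rfl⟩
  intro hq
  refine absurd (S.descent (fun x y => x ∈ C ∧ y ∈ C ∧ q x = q y ∧ ∃ z ∈ C, x < z ∧ z < y)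
    (fun x y h => ⟨h.1, h.2.1⟩) ?_ x y ⟨hx, hy, hq, z, hz, hxz, hzy⟩) (hxz.trans hzy).ne
  rintro _ _ ⟨h1, h2, h3, _, h4, h5, h6⟩
  obtain ⟨i, x, hx, rfl⟩ := S.c2 _ h1
  obtain ⟨j, y, hy, rfl⟩ := S.c2 _ h2
  obtain ⟨k, z, hz, rfl⟩ := S.c2 _ h4
  have hik := S.le_of hx hz h5.le
  have hkj := S.le_of hz hy h6.le
  rw [q2 i x hx, q2 j y hy, div_left_inj' hp0.ne'] at h3
  rcases eq_or_lt_of_le (hik.trans hkj) with hij | hij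
  · subst hij
    obtain rfl := le_antisymm hik hkj
    exact ⟨i, x, y, ⟨hx, hy, by linarith, z, hz, (e i).lt_iff_lt.1 h5, (e i).lt_iff_lt.1 h6⟩, rfl, rfl⟩
  · exfalso
    have hij' : ((i:ℕ):ℝ) + 1 ≤ (j:ℕ) := by exact_mod_cast hij
    have hqx := (q1 x).2
    have hqy := (q1 y).1
    have e1 : q x = 1 := by linarith
    have e2 : q y = 0 := by linarith
    have e3 : ((j:ℕ):ℝ) = (i:ℕ) + 1 := by linarith
    have e3 : (j:ℕ) = i + 1 := by exact_mod_cast e3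
    have hk : k = i ∨ k = j := by
      have := Fin.le_def.1 hik
      have := Fin.le_def.1 hkj
      rw [Fin.ext_iff, Fin.ext_iff]; omega
    rcases hk with rfl | rfl
    · have := (e k).lt_iff_lt.1 h5
      exact this.ne (hmax x z ⟨hx, hz, this.le, e1⟩)
    · have := (e k).lt_iff_lt.1 h6
      exact this.ne' (hmin y z ⟨hy, hz, this.le, e2⟩)

lemma Sys.unique (S : Sys p e C K) {q : ℝ → ℝ} (q1 : ∀ x, q x ∈ Icc (0:ℝ) 1)
    (q2 : ∀ j, ∀ x ∈ C, q (e j x) = ((j : ℕ) + q x) / p) {g h : ℝ → ℝ}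
    (hg : StrictMono g) (hh : StrictMono h) (gC : g '' C = C) (hC : h '' C = C)
    (hgh : ∀ x ∈ C, q (g x) = q (h x)) : EqOn g h C := by
  have main : ∀ g h : ℝ → ℝ, StrictMono g → StrictMono h → g '' C = C → h '' C = C →
      (∀ x ∈ C, q (g x) = q (h x)) → ∀ x ∈ C, h x ≤ g x := by
    intro g h hg hh gC hC hgh x hx
    by_contra hlt
    push Not at hlt
    have hhx : h x ∈ C := hC ▸ mem_image_of_mem h hx
    obtain ⟨y, hy, hyx⟩ : h x ∈ g '' C := by rw [gC]; exact hhx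
    have hxy : x < y := by rw [← hyx] at hlt; exact hg.lt_iff_lt.1 hlt
    have hhy : h y ∈ C := hC ▸ mem_image_of_mem h hy
    have hgx : g x ∈ C := gC ▸ mem_image_of_mem g hx
    refine S.gap q1 q2 hgx hhy hhx hlt (hh hxy) ?_
    rw [hgh x hx, ← hyx, hgh y hy]
  intro x hx
  exact le_antisymm (main h g hh hg hC gC (fun x hx => (hgh x hx).symm) x hx)
    (main g h hg hh gC hC hgh x hx)

/-- compositions -/
noncomputable def E [NeZero p] (e : Fin p → ℝ ≃o ℝ) : ℕ → ℕ → (ℝ ≃o ℝ)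
  | 0, _ => 1
  | N + 1, a => E e N (a / p) * e (Fin.ofNat p a)

section
variable [NeZero p]

lemma Sys.E_dif (S : Sys p e C K) (N a : ℕ) : Dif (E e N a) := by
  induction N generalizing a with
  | zero => exact Dif.one
  | succ N ih => exact (ih _).mul (S.dif _)

lemma Sys.E_mem (S : Sys p e C K) (N a : ℕ) {x : ℝ} (hx : x ∈ C) : E e N a x ∈ C := by
  induction N generalizing a x with
  | zero => exact hx
  | succ N ih => exact ih _ (S.c1 _ _ hx)

lemma Sys.E_q (S : Sys p e C K) {q : ℝ → ℝ}
    (q2 : ∀ j, ∀ x ∈ C, q (e j x) = ((j : ℕ) + q x) / p) (N a : ℕ) (ha : a < p ^ N) {x : ℝ} (hx : x ∈ C) :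
    q (E e N a x) = (a + q x) / p ^ N := by
  have hp0 : (0:ℝ) < p := by have := S.hp; exact_mod_cast (by omega : 0 < p)
  induction N generalizing a x with
  | zero =>
    have : a = 0 := by simpa using ha
    subst this; simp [E]
  | succ N ih =>
    have : a / p < p ^ N := by
      rw [Nat.div_lt_iff_lt_mul (by have := S.hp; omega)]; rwa [← pow_succ]
    change q (E e N (a / p) (e (Fin.ofNat p a) x)) = _
    rw [ih _ this (S.c1 _ _ hx), q2 _ _ hx]
    have h : (a:ℝ) = p * (a / p : ℕ) + (a % p : ℕ) := by exact_mod_cast (Nat.div_add_mod a p).symm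
    rw [Fin.val_ofNat, h]
    have h2 : (p * (a / p) + a % p) = a := Nat.div_add_mod a p
    field_simp
    ring

lemma Sys.E_cover (S : Sys p e C K) (N : ℕ) {y : ℝ} (hy : y ∈ C) :
    ∃ a < p ^ N, ∃ x ∈ C, E e N a x = y := by
  have hp0 : 0 < p := by have := S.hp; omega
  induction N with
  | zero => exact ⟨0, by simp, y, hy, rfl⟩
  | succ N ih =>
    obtain ⟨a, ha, x, hx, rfl⟩ := ih
    obtain ⟨j, z, hz, rfl⟩ := S.c2 x hx
    refine ⟨a * p + j, ?_, z, hz, ?_⟩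
    · have := j.2
      calc a * p + j < a * p + p := by omega
        _ = (a + 1) * p := by ring
        _ ≤ p ^ N * p := Nat.mul_le_mul_right _ ha
        _ = _ := by ring
    · change E e N ((a * p + j) / p) (e (Fin.ofNat p (a * p + j)) z) = _
      have h1 : (a * p + j) / p = a := by
        rw [mul_comm, Nat.mul_add_div hp0, Nat.div_eq_of_lt j.2, add_zero]
      have h2 : Fin.ofNat p (a * p + j) = j := by
        apply Fin.ext; simp [Nat.mod_eq_of_lt j.2]
      rw [h1, h2]

lemma E_add (N M a c : ℕ) (hc : c < p ^ M) : E e (N + M) (a * p ^ M + c) = E e N a * E e M c := by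
  have hp0 : 0 < p := Nat.pos_of_ne_zero (NeZero.ne p)
  induction M generalizing c with
  | zero =>
    have : c = 0 := by simpa using hc
    subst this; simp [E]
  | succ M ih =>
    have h0 : a * p ^ (M + 1) + c = p * (a * p ^ M) + c := by ring
    have h1 : (a * p ^ (M + 1) + c) / p = a * p ^ M + c / p := by
      rw [h0, Nat.mul_add_div hp0]
    have h2 : Fin.ofNat p (a * p ^ (M + 1) + c) = Fin.ofNat p c := by
      apply Fin.ext; rw [h0]; simp
    have h3 : c / p < p ^ M := by
      rw [Nat.div_lt_iff_lt_mul hp0]; rwa [← pow_succ]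
    change E e (N + M) ((a * p ^ (M + 1) + c) / p) * e (Fin.ofNat p (a * p ^ (M + 1) + c)) = 
      E e N a * (E e M (c / p) * e (Fin.ofNat p c))
    rw [h1, h2, ih _ h3, mul_assoc]

lemma E_split (N M a : ℕ) : E e (N + M) a = E e N (a / p ^ M) * E e M (a % p ^ M) := by
  have hp0 : 0 < p := Nat.pos_of_ne_zero (NeZero.ne p)
  rw [← E_add _ _ _ _ (Nat.mod_lt _ (by positivity)), mul_comm (a / p ^ M), Nat.div_add_mod]

lemma Sys.E_zero_nonneg (S : Sys p e C K) (N a : ℕ) : 0 ≤ E e N a 0 := by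
  induction N generalizing a with
  | zero => exact le_rfl
  | succ N ih => exact (ih _).trans ((E e N _).monotone (S.pos _).le)

lemma Sys.E_one_le (S : Sys p e C K) (N a : ℕ) : E e N a 1 ≤ 1 := by
  induction N generalizing a with
  | zero => exact le_rfl
  | succ N ih => exact ((E e N _).monotone (S.lt1 _).le).trans (ih _)

lemma Sys.E_lt (S : Sys p e C K) (N a b : ℕ) (hab : a < b) (hb : b < p ^ N) :
    E e N a 1 < E e N b 0 := by
  have hp0 : 0 < p := Nat.pos_of_ne_zero (NeZero.ne p)
  induction N generalizing a b with
  | zero => simp at hb; omega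
  | succ N ih =>
    have h3 : b / p < p ^ N := by
      rw [Nat.div_lt_iff_lt_mul hp0]; rwa [← pow_succ]
    change E e N (a / p) (e (Fin.ofNat p a) 1) < E e N (b / p) (e (Fin.ofNat p b) 0)
    rcases eq_or_lt_of_le (Nat.div_le_div_right (c := p) hab.le) with h | h
    · rw [h, (E e N (b / p)).lt_iff_lt]
      apply S.ord
      rw [Fin.lt_def, Fin.val_ofNat, Fin.val_ofNat]
      have h1 := Nat.div_add_mod a p
      have h2 := Nat.div_add_mod b p
      rw [h] at h1
      omega
    · exact ((E e N _).monotone (S.lt1 _).le).trans_lt ((ih _ _ h h3).trans_le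
        ((E e N _).monotone (S.pos _).le))

lemma Sys.E_lt' (S : Sys p e C K) (M b M' b' : ℕ) (hb : b < p ^ M) (hb' : b' < p ^ M')
    (h : ((b:ℝ) + 1) / p ^ M = b' / p ^ M') : E e M b 1 < E e M' b' 0 := by
  have hp0 : 0 < p := Nat.pos_of_ne_zero (NeZero.ne p)
  have hp0' : (0:ℝ) < p := by exact_mod_cast hp0
  rcases le_total M M' with hM | hM
  · obtain ⟨k, rfl⟩ := Nat.exists_eq_add_of_le hM
    have h2 : b' = (b + 1) * p ^ k := by
      have : (b':ℝ) = (b + 1) * p ^ k := by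
        rw [pow_add] at h; field_simp at h; linarith
      exact_mod_cast this
    have h3 : b' / p ^ k = b + 1 := by rw [h2]; exact Nat.mul_div_cancel _ (by positivity)
    have h4 : b + 1 < p ^ M := by
      rw [← h3, Nat.div_lt_iff_lt_mul (by positivity)]; rwa [← pow_add]
    rw [E_split, h3]
    exact (S.E_lt M b (b+1) (by omega) h4).trans_le ((E e M _).monotone (S.E_zero_nonneg _ _))
  · obtain ⟨k, rfl⟩ := Nat.exists_eq_add_of_le hM
    have h2 : b + 1 = b' * p ^ k := by
      have : (b:ℝ) + 1 = b' * p ^ k := by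
        rw [pow_add] at h; field_simp at h; linarith
      exact_mod_cast this
    have h3 : b / p ^ k < b' := by
      rw [Nat.div_lt_iff_lt_mul (by positivity)]; omega
    rw [E_split]
    exact ((E e M' _).monotone (S.E_one_le _ _)).trans_lt (S.E_lt M' _ _ h3 hb')

lemma Sys.q_surj (S : Sys p e C K) {q : ℝ → ℝ} (q1 : ∀ x, q x ∈ Icc (0:ℝ) 1)
    (q2 : ∀ j, ∀ x ∈ C, q (e j x) = ((j : ℕ) + q x) / p) (t : ℝ) (ht : t ∈ Ico (0:ℝ) 1) :
    ∃ x ∈ C, q x = t := by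
  have hp0 : 0 < p := Nat.pos_of_ne_zero (NeZero.ne p)
  have hp0' : (0:ℝ) < p := by exact_mod_cast hp0
  have hp1 : (1:ℝ) < p := by exact_mod_cast S.hp
  set A : ℕ → ℕ := fun N => ⌊t * p ^ N⌋₊ with hA
  have hA1 : ∀ N, A N < p ^ N := by
    intro N
    rw [hA]; dsimp only
    rw [Nat.floor_lt (by have := ht.1; positivity)]
    push_cast
    have : (0:ℝ) < p ^ N := by positivity
    nlinarith [ht.2]
  have hA2 : ∀ N, A (N + 1) / p = A N := by
    intro N
    rw [hA]; dsimp only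
    rw [← Nat.floor_div_natCast]
    congr 1; field_simp; ring
  have hco : ∀ N, IsCompact (E e N (A N) '' C) := fun N => S.comp.image (E e N (A N)).continuous
  obtain ⟨x, hx⟩ := IsCompact.nonempty_iInter_of_sequence_nonempty_isCompact_isClosed
    (fun N => E e N (A N) '' C) (by
      rintro N _ ⟨x, hx, rfl⟩
      refine ⟨e (Fin.ofNat p (A (N+1))) x, S.c1 _ _ hx, ?_⟩
      rw [← hA2]; rfl) (fun N => S.ne.image _) (hco 0) (fun N => (hco N).isClosed)
  rw [mem_iInter] at hx
  refine ⟨x, ?_, ?_⟩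
  · obtain ⟨y, hy, rfl⟩ := hx 0
    exact S.E_mem _ _ hy
  · have key : ∀ N : ℕ, |q x - t| ≤ ((p:ℝ)⁻¹) ^ N := by
      intro N
      obtain ⟨y, hy, rfl⟩ := hx N
      rw [S.E_q q2 N _ (hA1 N) hy]
      have hP : (0:ℝ) < p ^ N := by positivity
      have f1 : (A N : ℝ) ≤ t * p ^ N := Nat.floor_le (by have := ht.1; positivity)
      have f2 : t * p ^ N < A N + 1 := Nat.lt_floor_add_one _
      have := (q1 y).1
      have := (q1 y).2
      have h1 : (A N + q y) / p ^ N - t = (A N + q y - t * p ^ N) / p ^ N := by field_simp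
      rw [h1, abs_div, abs_of_pos hP, inv_pow, div_le_iff₀ hP, inv_mul_cancel₀ hP.ne', abs_le]
      constructor <;> linarith
    have h0 : |q x - t| ≤ 0 := ge_of_tendsto' (tendsto_pow_atTop_nhds_zero_of_lt_one
      (by positivity) (inv_lt_one_of_one_lt₀ hp1)) key
    exact sub_eq_zero.1 (abs_nonpos_iff.1 h0)

end
end IFS

namespace IFS

def Zp (p : ℕ) (x : ℝ) : Prop := ∃ (a : ℤ) (e : ℕ), x = (a : ℝ) / (p : ℝ) ^ e

lemma Zp.add {p : ℕ} (hp : 0 < p) {x y : ℝ} (hx : Zp p x) (hy : Zp p y) : Zp p (x + y) := by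
  have hp0 : (0:ℝ) < p := by exact_mod_cast hp
  obtain ⟨a, k, rfl⟩ := hx
  obtain ⟨b, l, rfl⟩ := hy
  refine ⟨a * p ^ l + b * p ^ k, k + l, ?_⟩
  push_cast
  rw [pow_add]; field_simp

lemma Zp.neg {p : ℕ} {x : ℝ} (hx : Zp p x) : Zp p (-x) := by
  obtain ⟨a, k, rfl⟩ := hx
  exact ⟨-a, k, by push_cast; ring⟩

lemma Zp.zmul {p : ℕ} (hp : 0 < p) {x : ℝ} (hx : Zp p x) (k : ℤ) : Zp p ((p:ℝ) ^ k * x) := by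
  have hp0 : (0:ℝ) < p := by exact_mod_cast hp
  obtain ⟨a, l, rfl⟩ := hx
  obtain ⟨m, rfl | rfl⟩ := k.eq_nat_or_neg
  · exact ⟨a * p ^ m, l, by push_cast; rw [zpow_natCast]; ring⟩
  · exact ⟨a, l + m, by rw [zpow_neg, zpow_natCast, pow_add]; field_simp⟩

lemma Zp.ev {p : ℕ} (hp : 0 < p) {x : ℝ} (hx : Zp p x) : ∀ᶠ N : ℕ in atTop, ∃ A : ℤ, x = A / (p:ℝ) ^ N := by
  have hp0 : (0:ℝ) < p := by exact_mod_cast hp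
  obtain ⟨a, l, rfl⟩ := hx
  filter_upwards [Ici_mem_atTop l] with N hN
  obtain ⟨k, rfl⟩ := Nat.exists_eq_add_of_le (show l ≤ N from hN)
  exact ⟨a * p ^ k, by push_cast; rw [pow_add]; field_simp⟩

lemma ht_piece {p : ℕ} (hp : 0 < p) (c : ℝ) (hc : Zp p c) (k : ℤ) :
    ∀ᶠ N : ℕ in atTop, ∃ M : ℕ, ∀ a : ℤ, ∃ b : ℤ, ∀ t : ℝ,
      c + (p:ℝ) ^ k * ((a + t) / p ^ N) = (b + t) / p ^ M := by
  have hp0 : (0:ℝ) < p := by exact_mod_cast hp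
  obtain ⟨r, s, rfl⟩ := hc
  filter_upwards [Ici_mem_atTop (k.natAbs + s)] with N hN
  have hN : k.natAbs + s ≤ N := hN
  obtain ⟨u, hu⟩ : ∃ u : ℕ, (N:ℤ) = k + s + u := ⟨(N - k - s).toNat, by omega⟩
  refine ⟨s + u, fun a => ⟨r * p ^ u + a, fun t => ?_⟩⟩
  have h1 : (p:ℝ) ^ N = (p:ℝ) ^ k * p ^ s * p ^ u := by
    rw [← zpow_natCast, hu, zpow_add₀ hp0.ne', zpow_add₀ hp0.ne', zpow_natCast, zpow_natCast]
  have : (p:ℝ) ^ k ≠ 0 := zpow_ne_zero _ hp0.ne'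
  rw [h1, pow_add]
  push_cast
  field_simp
  ring

lemma ht_words {p : ℕ} (hp : 0 < p) {f : ℝ → ℝ} (hf : IsHigmanThompson p f) :
    ∃ N : ℕ, ∀ a < p ^ N, ∃ M b : ℕ, b < p ^ M ∧
      ∀ t ∈ Icc (0:ℝ) 1, f ((a + t) / p ^ N) = (b + t) / p ^ M := by
  have hp0 : (0:ℝ) < p := by exact_mod_cast hp
  obtain ⟨f0, f1, fm, m, x, hm, x0, xm, xlt, xz, xs⟩ := hf
  have key : ∀ i ≤ m, Zp p (f (x i)) ∧ ∀ᶠ N : ℕ in atTop, ∀ a : ℕ, ((a:ℝ) + 1) / p ^ N ≤ x i →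
      ∃ (M : ℕ) (b : ℤ), ∀ t ∈ Icc (0:ℝ) 1, f ((a + t) / p ^ N) = (b + t) / p ^ M := by
    intro i
    induction i with
    | zero =>
      intro _
      rw [x0, f0]
      refine ⟨⟨0, 0, by simp⟩, Eventually.of_forall fun N a ha => ?_⟩
      have : 0 < ((a:ℝ) + 1) / p ^ N := by positivity
      linarith
    | succ i ih =>
      intro hi
      obtain ⟨ih1, ih2⟩ := ih (by omega)
      obtain ⟨k, hk⟩ := xs i (by omega)
      have z1 : Zp p (x i) := xz i (by omega)
      have z2 : Zp p (x (i+1)) := xz _ hi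
      have hlt := xlt i (by omega)
      refine ⟨?_, ?_⟩
      · rw [hk _ ⟨hlt.le, le_rfl⟩]
        exact ih1.add hp ((z2.add hp z1.neg).zmul hp k)
      · filter_upwards [ih2, z1.ev hp, ht_piece hp (f (x i) + -((p:ℝ) ^ k * x i))
          (ih1.add hp (z1.zmul hp k).neg) k] with N h1 h2 h3 a ha
        obtain ⟨A, hA⟩ := h2
        have hP : (0:ℝ) < p ^ N := by positivity
        by_cases hc : (a:ℤ) + 1 ≤ A
        · apply h1
          rw [hA]; gcongr; exact_mod_cast hc
        · obtain ⟨M, hM⟩ := h3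
          obtain ⟨b, hb⟩ := hM a
          refine ⟨M, b, fun t ht => ?_⟩
          rw [hk, ← hb]
          · push_cast; ring
          · have : (A:ℝ) ≤ a := by exact_mod_cast (by omega : A ≤ a)
            constructor
            · rw [hA]; gcongr; linarith [ht.1]
            · refine le_trans ?_ ha
              gcongr; exact ht.2
  obtain ⟨N, hN⟩ := (key m le_rfl).2.exists
  refine ⟨N, fun a ha => ?_⟩
  have hP : (0:ℝ) < p ^ N := by positivity
  have ha' : (a:ℝ) + 1 ≤ p ^ N := by exact_mod_cast ha
  obtain ⟨M, b, hb⟩ := hN a (by rw [xm, div_le_one hP]; exact ha')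
  have hQ : (0:ℝ) < p ^ M := by positivity
  have m0 : (0:ℝ) ∈ Icc (0:ℝ) 1 := by simp
  have m1 : (1:ℝ) ∈ Icc (0:ℝ) 1 := by simp
  have b0 : 0 ≤ b := by
    have h1 := hb 0 m0
    have h2 := fm.monotoneOn m0 (show ((a:ℝ) + 0) / p ^ N ∈ Icc (0:ℝ) 1 from
      ⟨by positivity, by rw [div_le_one hP]; linarith⟩) (by positivity)
    rw [f0, h1] at h2
    have : (0:ℝ) ≤ b := by
      by_contra hc
      have : ((b:ℝ) + 0) / p ^ M < 0 := div_neg_of_neg_of_pos (by linarith) hQ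
      linarith
    exact_mod_cast this
  have b1 : b < p ^ M := by
    have h1 := hb 1 m1
    have h3 : ((a:ℝ) + 1) / p ^ N ≤ 1 := by rw [div_le_one hP]; linarith
    have h2 := fm.monotoneOn (show ((a:ℝ) + 1) / p ^ N ∈ Icc (0:ℝ) 1 from
      ⟨by positivity, h3⟩) m1 h3
    rw [f1, h1, div_le_one hQ] at h2
    exact_mod_cast (by exact_mod_cast h2 : b + 1 ≤ (p:ℤ) ^ M)
  lift b to ℕ using b0
  exact ⟨M, b, by exact_mod_cast b1, fun t ht => by simpa using hb t ht⟩

variable {p : ℕ} {e : Fin p → ℝ ≃o ℝ} {C : Set ℝ} {K : ℝ} [NeZero p]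

lemma Sys.realize (S : Sys p e C K) {q : ℝ → ℝ} (q1 : ∀ x, q x ∈ Icc (0:ℝ) 1)
    (q2 : ∀ j, ∀ x ∈ C, q (e j x) = ((j : ℕ) + q x) / p) {f : ℝ → ℝ} (hf : IsHigmanThompson p f) :
    ∃ g : ℝ ≃o ℝ, Dif g ∧ g '' C = C ∧ ∀ x ∈ C, q (g x) = f (q x) := by
  have hp : 0 < p := Nat.pos_of_ne_zero (NeZero.ne p)
  have hp0 : (0:ℝ) < p := by exact_mod_cast hp
  obtain ⟨N, hN⟩ := ht_words hp hf
  obtain ⟨f0, f1, -⟩ := hf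
  have : ∀ a, ∃ M b : ℕ, a < p ^ N → b < p ^ M ∧
      ∀ t ∈ Icc (0:ℝ) 1, f ((a + t) / p ^ N) = (b + t) / p ^ M := by
    intro a
    by_cases ha : a < p ^ N
    · obtain ⟨M, b, h⟩ := hN a ha
      exact ⟨M, b, fun _ => h⟩
    · exact ⟨0, 0, fun h => absurd h ha⟩
  choose M b hMb using this
  have m0 : (0:ℝ) ∈ Icc (0:ℝ) 1 := by simp
  have m1 : (1:ℝ) ∈ Icc (0:ℝ) 1 := by simp
  have hP : 0 < p ^ N := by positivity
  obtain ⟨g, dg, hg, -⟩ := glueMany (fun a => E e N a 0) (fun a => E e N a 1)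
    (fun a => E e (M a) (b a) * (E e N a)⁻¹) (p ^ N)
    (fun a _ => (S.E_dif _ _).mul (S.E_dif _ _).inv)
    (fun a ha => S.E_lt N a (a+1) (by omega) ha)
    (by
      intro a ha
      have i1 : ∀ a y, (E e (M a) (b a) * (E e N a)⁻¹) (E e N a y) = E e (M a) (b a) y := by
        intro a y
        rw [RelIso.mul_apply, RelIso.inv_apply_self]
      rw [i1, i1]
      have h1 := hMb a (by omega)
      have h2 := hMb (a+1) ha
      refine S.E_lt' _ _ _ _ h1.1 h2.1 ?_
      rw [← h1.2 1 m1]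
      have := h2.2 0 m0
      rw [add_zero, add_zero] at this
      rw [← this]; push_cast; rfl)
    (fun a _ => (E e N a).monotone zero_le_one) (p ^ N - 1) (by omega)
  have hgE : ∀ a < p ^ N, ∀ x ∈ C, g (E e N a x) = E e (M a) (b a) x := by
    intro a ha x hx
    rw [hg a (by omega) ⟨(E e N a).monotone (S.sub hx).1, (E e N a).monotone (S.sub hx).2⟩]
    rw [RelIso.mul_apply, RelIso.inv_apply_self]
  refine ⟨g, dg, ?_, ?_⟩
  · apply Subset.antisymm
    · rintro _ ⟨x, hx, rfl⟩
      obtain ⟨a, ha, y, hy, rfl⟩ := S.E_cover N hx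
      rw [hgE a ha y hy]
      exact S.E_mem _ _ hy
    · intro y hy
      obtain ⟨L, hL⟩ : ∃ L, ∀ a < p ^ N, M a ≤ L :=
        ⟨(Finset.range (p ^ N)).sup M, fun a ha => Finset.le_sup (Finset.mem_range.2 ha)⟩
      obtain ⟨u, hu, z, hz, rfl⟩ := S.E_cover L hy
      have hLp : (0:ℝ) < p ^ L := by positivity
      have hex : ∃ a : ℕ, (u:ℝ) / p ^ L < f (((a:ℝ) + 1) / p ^ N) := by
        refine ⟨p ^ N - 1, ?_⟩
        rw [Nat.cast_sub hP]
        push_cast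
        rw [sub_add_cancel, div_self (by positivity), f1, div_lt_one hLp]
        exact_mod_cast hu
      classical
      set a := Nat.find hex with hadef
      have h1 := Nat.find_spec hex
      have h2 : f ((a:ℝ) / p ^ N) ≤ u / p ^ L := by
        rcases Nat.eq_zero_or_pos a with h | h
        · rw [h]; simp [f0]; positivity
        · have := Nat.find_min hex (m := a - 1) (by omega)
          rw [Nat.cast_sub h] at this
          push_cast at this
          rw [sub_add_cancel] at this
          exact not_lt.1 this
      rw [← hadef] at h1
      have ha : a < p ^ N := by
        have : a ≤ p ^ N - 1 := by
          apply Nat.find_min'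
          rw [Nat.cast_sub hP]
          push_cast
          rw [sub_add_cancel, div_self (by positivity), f1, div_lt_one hLp]
          exact_mod_cast hu
        omega
      obtain ⟨k1, k2⟩ := hMb a ha
      have k3 := k2 0 m0
      rw [add_zero, add_zero] at k3
      rw [k2 1 m1] at h1
      rw [k3] at h2
      obtain ⟨k, hk⟩ := Nat.exists_eq_add_of_le (hL a ha)
      have hdiv : u / p ^ k = b a := by
        rw [hk, pow_add] at h1 h2
        field_simp at h1 h2
        have h1 : u < (b a + 1) * p ^ k := by
          have : (u:ℝ) < (b a + 1) * p ^ k := by linarith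
          exact_mod_cast this
        have h2 : b a * p ^ k ≤ u := by
          have : (b a : ℝ) * p ^ k ≤ u := by linarith
          exact_mod_cast this
        apply Nat.div_eq_of_lt_le
        · exact h2
        · exact h1
      rw [hk, E_split, hdiv]
      refine ⟨E e N a (E e k (u % p ^ k) z), S.E_mem _ _ (S.E_mem _ _ hz), ?_⟩
      rw [hgE a ha _ (S.E_mem _ _ hz)]
      rfl
  · intro x hx
    obtain ⟨a, ha, y, hy, rfl⟩ := S.E_cover N hx
    rw [hgE a ha y hy, S.E_q q2 _ _ (hMb a ha).1 hy, S.E_q q2 _ _ ha hy, (hMb a ha).2 _ (q1 y)]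


lemma Sys.final (S : Sys p e C K) : 
    ∃ Θ : (ℝ → ℝ) → (ℝ → ℝ),
      (∀ f, IsHigmanThompson p f → ∃ g h : ℝ → ℝ, IsC1DiffeoPair g h ∧
        StrictMono g ∧ g '' C = C ∧ Set.EqOn (Θ f) g C) ∧
      (∀ f g, IsHigmanThompson p f → IsHigmanThompson p g →
        Set.EqOn (Θ (f ∘ g)) (Θ f ∘ Θ g) C) ∧
      (∀ f g, IsHigmanThompson p f → IsHigmanThompson p g →
        Set.EqOn (Θ f) (Θ g) C → Set.EqOn f g (Set.Icc 0 1)) := by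

  obtain ⟨q, q1, q2⟩ := S.exists_q
  have : ∀ f : ℝ → ℝ, ∃ g : ℝ ≃o ℝ, (∃ g : ℝ ≃o ℝ, Dif g ∧ g '' C = C ∧ ∀ x ∈ C, q (g x) = f (q x)) →
      Dif g ∧ g '' C = C ∧ ∀ x ∈ C, q (g x) = f (q x) := by
    intro f
    by_cases h : ∃ g : ℝ ≃o ℝ, Dif g ∧ g '' C = C ∧ ∀ x ∈ C, q (g x) = f (q x)
    · obtain ⟨g, hg⟩ := h
      exact ⟨g, fun _ => hg⟩
    · exact ⟨1, fun h' => absurd h' h⟩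
  choose Θ hΘ using this
  refine ⟨fun f => Θ f, fun f hf => ?_, fun f g hf hg => ?_, fun f g hf hg hfg => ?_⟩
  · obtain ⟨h1, h2, h3⟩ := hΘ f (S.realize q1 q2 hf)
    exact ⟨Θ f, (Θ f).symm, h1.pair, (Θ f).strictMono, h2, fun x _ => rfl⟩
  · obtain ⟨f1, f2, f3⟩ := hΘ f (S.realize q1 q2 hf)
    obtain ⟨g1, g2, g3⟩ := hΘ g (S.realize q1 q2 hg)
    have i2 : (⇑(Θ f * Θ g)) '' C = C := by
      have : (⇑(Θ f * Θ g)) = Θ f ∘ Θ g := rfl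
      rw [this, image_comp, g2, f2]
    have i3 : ∀ x ∈ C, q ((Θ f * Θ g) x) = (f ∘ g) (q x) := by
      intro x hx
      rw [RelIso.mul_apply, f3 _ (g2 ▸ mem_image_of_mem _ hx), g3 x hx]; rfl
    obtain ⟨k1, k2, k3⟩ := hΘ (f ∘ g) ⟨Θ f * Θ g, f1.mul g1, i2, i3⟩
    exact S.unique q1 q2 (Θ (f ∘ g)).strictMono (Θ f * Θ g).strictMono k2 i2
      (fun x hx => (k3 x hx).trans (i3 x hx).symm)
  · obtain ⟨f1, f2, f3⟩ := hΘ f (S.realize q1 q2 hf)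
    obtain ⟨g1, g2, g3⟩ := hΘ g (S.realize q1 q2 hg)
    intro t ht
    rcases eq_or_lt_of_le ht.2 with h | h
    · rw [h, hf.2.1, hg.2.1]
    · obtain ⟨x, hx, rfl⟩ := S.q_surj q1 q2 t ⟨ht.1, h⟩
      rw [← f3 x hx, ← g3 x hx]
      exact congrArg q (hfg hx)

end IFS

/-- For a contractive invertible `C¹` IFS on `[0,1]` with `n+1` orientation-preserving
maps, the group of transformations of the attractor Cantor set induced by
orientation-preserving `C¹` diffeomorphisms preserving it contains a copy of the
Higman–Thompson group `F_{n+1}`: there is an injective multiplicative realization `Θ`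
of `F_{n+1}` by restrictions of diffeomorphisms. -/
theorem thompson_F_in_diffeo_group_of_IFS (n : ℕ) (φ : Fin (n + 1) → ℝ → ℝ)
    (hsm : ∀ j, ContDiff ℝ 1 (φ j)) (hmono : ∀ j, StrictMono (φ j))
    (hpos : ∀ j x, 0 < deriv (φ j) x)
    (himg : ∀ j, φ j '' Set.Icc 0 1 ⊆ Set.Ioo 0 1)
    (hdisj : ∀ i j, i ≠ j → φ i '' Set.Icc 0 1 ∩ φ j '' Set.Icc 0 1 = ∅)
    (hcontr : ∀ j, ∃ K : ℝ, K < 1 ∧ ∀ x ∈ Set.Icc (0 : ℝ) 1, ∀ y ∈ Set.Icc (0 : ℝ) 1,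
      |φ j x - φ j y| ≤ K * |x - y|)
    (C : Set ℝ) (hCsub : C ⊆ Set.Icc 0 1) (hCne : C.Nonempty) (hCcomp : IsCompact C)
    (hCattr : C = ⋃ j, φ j '' C) :
    ∃ Θ : (ℝ → ℝ) → (ℝ → ℝ),
      (∀ f, IsHigmanThompson (n + 1) f → ∃ g h : ℝ → ℝ, IsC1DiffeoPair g h ∧
        StrictMono g ∧ g '' C = C ∧ Set.EqOn (Θ f) g C) ∧
      (∀ f g, IsHigmanThompson (n + 1) f → IsHigmanThompson (n + 1) g →
        Set.EqOn (Θ (f ∘ g)) (Θ f ∘ Θ g) C) ∧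
      (∀ f g, IsHigmanThompson (n + 1) f → IsHigmanThompson (n + 1) g →
        Set.EqOn (Θ f) (Θ g) C → Set.EqOn f g (Set.Icc 0 1)) := by
  rcases Nat.eq_zero_or_pos n with hn | hn
  · subst hn
    refine ⟨fun _ => id, fun f _ => ⟨id, id, ⟨contDiff_id, contDiff_id, fun _ => rfl, fun _ => rfl⟩,
      strictMono_id, by simp, fun _ _ => rfl⟩, fun _ _ _ _ _ _ => rfl, fun f g hf hg _ => ?_⟩
    have key : ∀ f, IsHigmanThompson (0 + 1) f → ∀ t ∈ Icc (0:ℝ) 1, f t = t := by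
      intro f hf t ht
      obtain ⟨N, hN⟩ := IFS.ht_words (by norm_num) hf
      obtain ⟨M, b, hb, h⟩ := hN 0 (by simp)
      have hb : b = 0 := by simpa using hb
      simpa [hb] using h t ht
    intro t ht
    rw [key f hf t ht, key g hg t ht]
  · have hext := fun j => IFS.extend (φ j) (hsm j) (hpos j)
    choose e0 de0 he0 using hext
    have m0 : (0:ℝ) ∈ Icc (0:ℝ) 1 := by simp
    have m1 : (1:ℝ) ∈ Icc (0:ℝ) 1 := by simp
    set σ := Tuple.sort (fun j => e0 j 0) with hσ
    have hmonoσ : Monotone ((fun j => e0 j 0) ∘ σ) := Tuple.monotone_sort _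
    choose Kj hK1 hK using hcontr
    obtain ⟨K, hK0, hKlt, hKle⟩ : ∃ K : ℝ, 0 < K ∧ K < 1 ∧ ∀ j, Kj j ≤ K := by
      obtain ⟨j0, hj0⟩ := Finite.exists_max Kj
      exact ⟨max (Kj j0) (1/2), lt_max_of_lt_right (by norm_num), max_lt (hK1 _) (by norm_num),
        fun j => (hj0 j).trans (le_max_left _ _)⟩
    have S : IFS.Sys (n + 1) (fun j => e0 (σ j)) C K :=
      { hp := by omega
        dif := fun j => de0 _
        pos := fun j => by
          rw [he0 _ m0]; exact (himg _ (mem_image_of_mem _ m0)).1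
        lt1 := fun j => by
          rw [he0 _ m1]; exact (himg _ (mem_image_of_mem _ m1)).2
        ord := fun i j hij => by
          by_contra hc
          push Not at hc
          have h1 : e0 (σ i) 0 ≤ e0 (σ j) 0 := hmonoσ hij.le
          have hne : σ i ≠ σ j := fun h => hij.ne (σ.injective h)
          have h2 : e0 (σ j) 0 ∈ φ (σ i) '' Icc 0 1 := by
            refine ⟨(e0 (σ i)).symm (e0 (σ j) 0), ?_, ?_⟩
            · exact ⟨(OrderIso.le_symm_apply _).2 h1, (OrderIso.symm_apply_le _).2 hc⟩
            · rw [← he0 (σ i) ⟨(OrderIso.le_symm_apply _).2 h1, (OrderIso.symm_apply_le _).2 hc⟩]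
              exact OrderIso.apply_symm_apply _ _
          have h3 : e0 (σ j) 0 ∈ φ (σ j) '' Icc 0 1 := ⟨0, m0, (he0 _ m0).symm⟩
          have : e0 (σ j) 0 ∈ (∅ : Set ℝ) := hdisj _ _ hne ▸ ⟨h2, h3⟩
          exact this
        K0 := hK0
        K1 := hKlt
        contr := fun j x hx y hy => by
          rw [he0 _ (hCsub hx), he0 _ (hCsub hy)]
          exact (hK _ x (hCsub hx) y (hCsub hy)).trans
            (mul_le_mul_of_nonneg_right (hKle _) (abs_nonneg _))
        sub := hCsub
        ne := hCne
        comp := hCcomp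
        c1 := fun j x hx => by
          rw [he0 _ (hCsub hx), hCattr]
          exact mem_iUnion.2 ⟨_, mem_image_of_mem _ hx⟩
        c2 := fun x hx => by
          rw [hCattr] at hx
          obtain ⟨j, y, hy, rfl⟩ := mem_iUnion.1 hx
          refine ⟨σ.symm j, y, hy, ?_⟩
          rw [he0 _ (hCsub hy), Equiv.apply_symm_apply] }
    exact S.final
end

section
/- For the central Cantor set C_λ (λ > 2), the group of homeomorphisms of C_λ arising as restrictions of orientation-preserving C¹ diffeomorphisms of ℝ preserving C_λ is isomorphic to Thompson's group F. -/
open Set Filter Topology Asymptotics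

namespace CC

noncomputable def cc (l : ℝ) : ℕ → ℕ → ℝ
  | 0, k => 2 * (k : ℝ)
  | n + 1, k => cc l n (k / 2) + ((k % 2 : ℕ) : ℝ) * ((l - 1) / l ^ (n + 1))

noncomputable def ph (l : ℝ) (n k : ℕ) (y : ℝ) : ℝ := cc l n k + y / l ^ n

lemma cc_even (l : ℝ) (n k : ℕ) : cc l (n + 1) (2 * k) = cc l n k := by
  have h1 : 2 * k / 2 = k := by omega
  have h2 : 2 * k % 2 = 0 := by omega
  simp [cc, h1]

lemma cc_odd (l : ℝ) (n k : ℕ) :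
    cc l (n + 1) (2 * k + 1) = cc l n k + (l - 1) / l ^ (n + 1) := by
  have h1 : (2 * k + 1) / 2 = k := by omega
  have h2 : (2 * k + 1) % 2 = 1 := by omega
  simp [cc, h1, h2]

lemma ph_even (l : ℝ) (n k : ℕ) (y : ℝ) : ph l (n + 1) (2 * k) y = ph l n k (y / l) := by
  simp only [ph, cc_even, pow_succ', div_div]

lemma ph_odd (l : ℝ) (n k : ℕ) (y : ℝ) :
    ph l (n + 1) (2 * k + 1) y = ph l n k (y / l + (l - 1) / l) := by
  simp only [ph, cc_odd, pow_succ', div_div, add_div]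
  ring

lemma cc_gap (l : ℝ) (hl : 2 < l) (n : ℕ) : ∀ k : ℕ, cc l n k + 1 / l ^ n < cc l n (k + 1) := by
  induction n with
  | zero => intro k; simp [cc]; linarith
  | succ n ih =>
    intro k
    have hp : 0 < l ^ (n + 1) := by positivity
    rcases Nat.even_or_odd' k with ⟨m, rfl | rfl⟩
    · rw [cc_even, cc_odd]
      have : 1 / l ^ (n + 1) < (l - 1) / l ^ (n + 1) := by
        apply div_lt_div_of_pos_right _ hp; linarith
      linarith
    · have : 2 * m + 1 + 1 = 2 * (m + 1) := by ring
      rw [this, cc_even, cc_odd]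
      have h := ih m
      have : (l - 1) / l ^ (n + 1) + 1 / l ^ (n + 1) = 1 / l ^ n := by
        have : 0 < l ^ n := by positivity
        rw [pow_succ]; field_simp; ring
      linarith

lemma cc_lt (l : ℝ) (hl : 2 < l) (n : ℕ) {k k' : ℕ} (h : k < k') :
    cc l n k + 1 / l ^ n < cc l n k' := by
  induction k', h using Nat.le_induction with
  | base => exact cc_gap l hl n k
  | succ m hm ih =>
    have := cc_gap l hl n m
    have : 0 < 1 / l ^ n := by positivity
    linarith

lemma cc_zero (l : ℝ) (n : ℕ) : cc l n 0 = 0 := by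
  induction n with
  | zero => simp [cc]
  | succ n ih => simpa [ih] using cc_even l n 0

lemma cc_comp (l : ℝ) (_hl : 2 < l) (n k m : ℕ) : ∀ j < 2 ^ m,
    cc l (n + m) (k * 2 ^ m + j) = cc l n k + cc l m j / l ^ n := by
  induction m with
  | zero => intro j hj; have : j = 0 := by simpa using hj
            subst this; simp [cc]
  | succ m ih =>
    intro j hj
    rcases Nat.even_or_odd' j with ⟨i, rfl | rfl⟩
    · have : k * 2 ^ (m + 1) + 2 * i = 2 * (k * 2 ^ m + i) := by ring
      rw [this, ← add_assoc, cc_even, cc_even, ih]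
      rw [pow_succ] at hj; omega
    · have : k * 2 ^ (m + 1) + (2 * i + 1) = 2 * (k * 2 ^ m + i) + 1 := by ring
      rw [this, ← add_assoc, cc_odd, cc_odd, ih]
      · rw [add_div, div_div, add_assoc, ← pow_add]
        congr 4; ring
      · rw [pow_succ] at hj; omega

lemma cc_last (l : ℝ) (hl : 2 < l) (n : ℕ) : cc l n (2 ^ n - 1) + 1 / l ^ n = 1 := by
  induction n with
  | zero => simp [cc]
  | succ n ih =>
    have h1 : 1 ≤ 2 ^ n := Nat.one_le_two_pow
    have : 2 ^ (n + 1) - 1 = 2 * (2 ^ n - 1) + 1 := by rw [pow_succ]; omega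
    rw [this, cc_odd]
    have : (l - 1) / l ^ (n + 1) + 1 / l ^ (n + 1) = 1 / l ^ n := by
        have : 0 < l ^ n := by positivity
        rw [pow_succ]; field_simp; ring
    linarith

lemma cc_adj (l : ℝ) (hl : 2 < l) (M j M' j' : ℕ) (h : (j + 1) * 2 ^ M' = j' * 2 ^ M) :
    cc l M j + 1 / l ^ M < cc l M' j' := by
  have h1 : 1 ≤ 2 ^ M' := Nat.one_le_two_pow
  have a := cc_comp l hl M j M' (2 ^ M' - 1) (by omega)
  have b := cc_comp l hl M' j' M 0 (by positivity)
  have e := cc_last l hl M'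
  have g := cc_gap l hl (M + M') (j * 2 ^ M' + (2 ^ M' - 1))
  have h2 : j * 2 ^ M' + (2 ^ M' - 1) + 1 = j' * 2 ^ M + 0 := by
    rw [← h]; rw [add_mul]; omega
  rw [h2, a] at g
  rw [add_comm M M', b, cc_zero] at g
  have hp : 0 < l ^ M := by positivity
  have : cc l M' (2 ^ M' - 1) / l ^ M + 1 / l ^ (M' + M) = 1 / l ^ M := by
    have hp' : 0 < l ^ M' := by positivity
    have : (1 : ℝ) / l ^ M = (cc l M' (2 ^ M' - 1) + 1 / l ^ M') / l ^ M := by rw [e]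
    rw [this, pow_add]; field_simp
  simp only [zero_div, add_zero] at g
  linarith

lemma ph_comp (l : ℝ) (hl : 2 < l) (n k m j : ℕ) (hj : j < 2 ^ m) (y : ℝ) :
    ph l n k (ph l m j y) = ph l (n + m) (k * 2 ^ m + j) y := by
  simp only [ph, cc_comp l hl n k m j hj, pow_add]
  have : 0 < l ^ n := by positivity
  have : 0 < l ^ m := by positivity
  field_simp
  ring

/-- facts on C -/
structure Good (l : ℝ) (C : Set ℝ) : Prop where
  hl : 2 < l
  cpt : IsCompact C
  m0 : (0 : ℝ) ∈ C
  m1 : (1 : ℝ) ∈ C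
  nn : ∀ x ∈ C, 0 ≤ x
  le1 : ∀ x ∈ C, x ≤ 1
  f0 : ∀ x ∈ C, x / l ∈ C
  f1 : ∀ x ∈ C, x / l + (l - 1) / l ∈ C
  split : ∀ x ∈ C, ∃ y ∈ C, x = y / l ∨ x = y / l + (l - 1) / l

lemma good_of (l : ℝ) (hl : 2 < l) (C : Set ℝ) (hC : IsCentralCantor l C) : Good l C := by
  obtain ⟨hc, hne, he⟩ := hC
  have f0 : ∀ x ∈ C, x / l ∈ C := fun x hx => by
    rw [he]; exact Or.inl ⟨x, hx, rfl⟩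
  have f1 : ∀ x ∈ C, x / l + (l - 1) / l ∈ C := fun x hx => by
    rw [he]; exact Or.inr ⟨x, hx, rfl⟩
  have sp : ∀ x ∈ C, ∃ y ∈ C, x = y / l ∨ x = y / l + (l - 1) / l := fun x hx => by
    rw [he] at hx
    rcases hx with ⟨y, hy, rfl⟩ | ⟨y, hy, rfl⟩
    · exact ⟨y, hy, Or.inl rfl⟩
    · exact ⟨y, hy, Or.inr rfl⟩
  obtain ⟨M, hM, hMx⟩ := hc.exists_isGreatest hne
  obtain ⟨m, hm, hmn⟩ := hc.exists_isLeast hne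
  have l0 : 0 < l := by linarith
  have key : ∀ y, (y / l) * l = y := fun y => by field_simp
  have keyl : (l - 1) / l * l = l - 1 := by field_simp
  have m0 : m = 0 := by
    have h1 : m ≤ m / l := hmn (f0 m hm)
    obtain ⟨y, hy, h⟩ := sp m hm
    have h2 : m ≤ y := hmn hy
    have h1' : m * l ≤ m := by rw [le_div_iff₀ l0] at h1; exact h1
    have : m ≤ 0 := by nlinarith
    have : 0 ≤ m := by
      rcases h with h | h
      · have : m * l = y := by rw [h]; field_simp
        nlinarith
      · have : m * l = y + (l - 1) := by rw [h]; field_simp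
        nlinarith
    linarith
  have M1 : M = 1 := by
    have h1 : M / l + (l - 1) / l ≤ M := hMx (f1 M hM)
    obtain ⟨y, hy, h⟩ := sp M hM
    have h2 : y ≤ M := hMx hy
    have h1' : M + (l - 1) ≤ M * l := by
      rw [← add_div, div_le_iff₀ l0] at h1; exact h1
    have : 1 ≤ M := by nlinarith
    have : M ≤ 1 := by
      rcases h with h | h
      · have : M * l = y := by rw [h]; field_simp
        nlinarith
      · have : M * l = y + (l - 1) := by rw [h]; field_simp
        nlinarith
    linarith
  subst m0 M1
  exact ⟨hl, hc, hm, hM, fun x hx => hmn hx, fun x hx => hMx hx, f0, f1, sp⟩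

namespace Good
variable {l : ℝ} {C : Set ℝ}

lemma ph_mem (h : Good l C) (n : ℕ) : ∀ k < 2 ^ n, ∀ y ∈ C, ph l n k y ∈ C := by
  induction n with
  | zero => intro k hk y hy; have : k = 0 := by simpa using hk
            subst this; simpa [ph, cc] using hy
  | succ n ih =>
    intro k hk y hy
    rw [pow_succ] at hk
    rcases Nat.even_or_odd' k with ⟨m, rfl | rfl⟩
    · rw [ph_even]; exact ih m (by omega) _ (h.f0 y hy)
    · rw [ph_odd]; exact ih m (by omega) _ (h.f1 y hy)

lemma ex_ph (h : Good l C) (n : ℕ) : ∀ x ∈ C, ∃ k < 2 ^ n, ∃ y ∈ C, x = ph l n k y := by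
  induction n with
  | zero => intro x hx; exact ⟨0, by simp, x, hx, by simp [ph, cc]⟩
  | succ n ih =>
    intro x hx
    obtain ⟨k, hk, y, hy, rfl⟩ := ih x hx
    obtain ⟨z, hz, rfl | rfl⟩ := h.split y hy
    · exact ⟨2 * k, by rw [pow_succ]; omega, z, hz, (ph_even ..).symm⟩
    · exact ⟨2 * k + 1, by rw [pow_succ]; omega, z, hz, (ph_odd ..).symm⟩

lemma pw (h : Good l C) (n : ℕ) : 0 < l ^ n := by have := h.hl; positivity

lemma ph_ge (h : Good l C) (n k : ℕ) {y : ℝ} (hy : y ∈ C) : cc l n k ≤ ph l n k y := by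
  have := h.pw n; have := h.nn y hy
  have : 0 ≤ y / l ^ n := by positivity
  simp only [ph]; linarith

lemma ph_le (h : Good l C) (n k : ℕ) {y : ℝ} (hy : y ∈ C) :
    ph l n k y ≤ cc l n k + 1 / l ^ n := by
  have := h.pw n; have := h.le1 y hy
  have : y / l ^ n ≤ 1 / l ^ n := by gcongr
  simp only [ph]; linarith

lemma ph_lt (h : Good l C) (n : ℕ) {k k' : ℕ} (hk : k < k') {y y' : ℝ} (hy : y ∈ C)
    (hy' : y' ∈ C) : ph l n k y < ph l n k' y' := by
  have := h.ph_le n k hy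
  have := h.ph_ge n k' hy'
  have := cc_lt l h.hl n hk
  linarith

lemma ph_mono (h : Good l C) (n k : ℕ) {y y' : ℝ} : ph l n k y < ph l n k y' ↔ y < y' := by
  have := h.pw n
  simp only [ph]
  rw [add_lt_add_iff_left, div_lt_div_iff_of_pos_right this]

lemma mem_ph (h : Good l C) (n k : ℕ) {x : ℝ} (hx : x ∈ C) (h1 : cc l n k ≤ x)
    (h2 : x ≤ cc l n k + 1 / l ^ n) : ∃ y ∈ C, x = ph l n k y := by
  obtain ⟨k', hk', y, hy, rfl⟩ := h.ex_ph n x hx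
  rcases lt_trichotomy k k' with hlt | rfl | hlt
  · have := cc_lt l h.hl n hlt
    have := h.ph_ge n k' hy
    linarith
  · exact ⟨y, hy, rfl⟩
  · have := cc_lt l h.hl n hlt
    have := h.ph_le n k' hy
    linarith

end Good

noncomputable def TT (l x : ℝ) : ℝ := if x ≤ 1 / 2 then l * x else l * x - (l - 1)
noncomputable def dg (x : ℝ) : ℝ := if x ≤ 1 / 2 then 0 else 1
noncomputable def pp (l x : ℝ) : ℝ := ∑' n : ℕ, dg ((TT l)^[n] x) * (1 / 2) ^ (n + 1)

lemma dg_nn (x : ℝ) : 0 ≤ dg x := by unfold dg; split_ifs <;> norm_num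
lemma dg_le (x : ℝ) : dg x ≤ 1 := by unfold dg; split_ifs <;> norm_num

lemma sm_geo : HasSum (fun n : ℕ => ((1 : ℝ) / 2) ^ (n + 1)) 1 := by
  have := hasSum_geometric_two.mul_right (1 / 2 : ℝ)
  simpa [pow_succ] using this

lemma sm_pp (l x : ℝ) : Summable (fun n : ℕ => dg ((TT l)^[n] x) * (1 / 2 : ℝ) ^ (n + 1)) := by
  refine Summable.of_nonneg_of_le (fun n => ?_) (fun n => ?_) sm_geo.summable
  · have := dg_nn ((TT l)^[n] x); positivity
  · have := dg_le ((TT l)^[n] x)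
    exact mul_le_of_le_one_left (by positivity) this

lemma pp_nn (l x : ℝ) : 0 ≤ pp l x := by
  refine tsum_nonneg (fun n => ?_)
  have := dg_nn ((TT l)^[n] x); positivity

lemma pp_le (l x : ℝ) : pp l x ≤ 1 := by
  rw [← sm_geo.tsum_eq]
  refine (sm_pp l x).tsum_le_tsum (fun n => ?_) sm_geo.summable
  exact mul_le_of_le_one_left (by positivity) (dg_le _)

lemma pp_rec (l x : ℝ) : pp l x = (dg x + pp l (TT l x)) / 2 := by
  unfold pp
  rw [(sm_pp l x).tsum_eq_zero_add]
  simp only [Function.iterate_succ, Function.comp, Function.iterate_zero, id]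
  rw [add_div, ← tsum_div_const]
  congr 1
  · ring
  · congr 1; ext n; ring

lemma pp_f0 (l : ℝ) (hl : 2 < l) (x : ℝ) (h1 : x ≤ 1) : pp l (x / l) = pp l x / 2 := by
  have : x / l ≤ 1 / 2 := by rw [div_le_div_iff₀] <;> linarith
  rw [pp_rec]
  have e : l * (x / l) = x := by field_simp
  simp only [TT, dg, this, if_true, e]; ring

lemma pp_f1 (l : ℝ) (hl : 2 < l) (x : ℝ) (h1 : 0 ≤ x) :
    pp l (x / l + (l - 1) / l) = (1 + pp l x) / 2 := by
  have : ¬ (x / l + (l - 1) / l ≤ 1 / 2) := by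
    rw [← add_div, not_le, div_lt_div_iff₀] <;> linarith
  rw [pp_rec]
  have e : l * (x / l + (l - 1) / l) - (l - 1) = x := by field_simp; ring
  simp only [TT, dg, this, if_false, e]

namespace Good
variable {l : ℝ} {C : Set ℝ}

lemma pp_ph (h : Good l C) (n : ℕ) : ∀ k < 2 ^ n, ∀ y ∈ C,
    pp l (ph l n k y) = (k + pp l y) / 2 ^ n := by
  induction n with
  | zero => intro k hk y hy; have : k = 0 := by simpa using hk
            subst this; simp [ph, cc]
  | succ n ih =>
    intro k hk y hy
    rw [pow_succ] at hk
    rcases Nat.even_or_odd' k with ⟨m, rfl | rfl⟩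
    · rw [ph_even, ih m (by omega) _ (h.f0 y hy), pp_f0 l h.hl y (h.le1 y hy)]
      push_cast; field_simp; ring
    · rw [ph_odd, ih m (by omega) _ (h.f1 y hy), pp_f1 l h.hl y (h.nn y hy)]
      push_cast; field_simp; ring

lemma pp0 (h : Good l C) : pp l 0 = 0 := by
  have := pp_f0 l h.hl 0 (by norm_num)
  simp at this; linarith

lemma pp1 (h : Good l C) : pp l 1 = 1 := by
  have := pp_f1 l h.hl 1 (by norm_num)
  have h2 : 1 / l + (l - 1) / l = 1 := by have := h.hl; field_simp; ring
  rw [h2] at this; linarith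

lemma tend (h : Good l C) : Tendsto (fun n : ℕ => 1 / l ^ n) atTop (𝓝 0) := by
  have := tendsto_pow_atTop_nhds_zero_of_lt_one (r := 1 / l)
    (by have := h.hl; positivity) (by have := h.hl; rw [div_lt_one] <;> linarith)
  simpa [one_div, inv_pow] using this

lemma pp_mono (h : Good l C) {x y : ℝ} (hx : x ∈ C) (hy : y ∈ C) (hxy : x < y) :
    pp l x ≤ pp l y := by
  have key : ∀ n : ℕ, pp l x ≤ pp l y + (1 / 2) ^ n := by
    intro n
    obtain ⟨k, hk, a, ha, rfl⟩ := h.ex_ph n x hx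
    obtain ⟨k', hk', b, hb, rfl⟩ := h.ex_ph n y hy
    have hkk : k ≤ k' := by
      by_contra! hh
      exact absurd (h.ph_lt n hh hb ha) (by linarith)
    rw [h.pp_ph n k hk a ha, h.pp_ph n k' hk' b hb, one_div, inv_pow]
    have : (k : ℝ) ≤ k' := by exact_mod_cast hkk
    rw [inv_eq_one_div, ← add_div]
    have := pp_le l a
    have := pp_nn l b
    gcongr
    linarith
  have : Tendsto (fun n : ℕ => pp l y + (1 / 2 : ℝ) ^ n) atTop (𝓝 (pp l y + 0)) :=
    tendsto_const_nhds.add (tendsto_pow_atTop_nhds_zero_of_lt_one (by norm_num) (by norm_num))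
  rw [add_zero] at this
  exact ge_of_tendsto' this key

lemma pp_mono_le (h : Good l C) {x y : ℝ} (hx : x ∈ C) (hy : y ∈ C) (hxy : x ≤ y) :
    pp l x ≤ pp l y := by
  rcases hxy.eq_or_lt with rfl | hh
  · exact le_rfl
  · exact h.pp_mono hx hy hh

lemma pp_three (h : Good l C) {x z y : ℝ} (hx : x ∈ C) (hz : z ∈ C) (hy : y ∈ C) (hxz : x < z)
    (hzy : z < y) : pp l x < pp l y := by
  have e1 := h.tend.eventually_lt_const (show 0 < z - x by linarith)
  have e2 := h.tend.eventually_lt_const (show 0 < y - z by linarith)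
  obtain ⟨n, h1, h2⟩ := (e1.and e2).exists
  obtain ⟨k, hk, a, ha, rfl⟩ := h.ex_ph n x hx
  obtain ⟨k', hk', b, hb, rfl⟩ := h.ex_ph n z hz
  obtain ⟨k'', hk'', c, hc, rfl⟩ := h.ex_ph n y hy
  have aux : ∀ i j : ℕ, ∀ u ∈ C, ∀ v ∈ C, ph l n i u < ph l n j v →
      1 / l ^ n < ph l n j v - ph l n i u → i < j := by
    intro i j u hu v hv h1 h2
    by_contra! hh
    rcases hh.eq_or_lt with rfl | hh
    · have := h.ph_le n j hv
      have := h.ph_ge n j hu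
      linarith
    · have := h.ph_lt n hh hv hu
      linarith
  have i1 := aux _ _ _ ha _ hb hxz h1
  have i2 := aux _ _ _ hb _ hc hzy h2
  rw [h.pp_ph n k hk a ha, h.pp_ph n k'' hk'' c hc]
  have : (k : ℝ) + 2 ≤ k'' := by exact_mod_cast (by omega : k + 2 ≤ k'')
  have := pp_le l a
  have := pp_nn l c
  apply div_lt_div_of_pos_right _ (by positivity)
  linarith

lemma pp_surj (h : Good l C) {t : ℝ} (h0 : 0 ≤ t) (h1 : t ≤ 1) : ∃ x ∈ C, pp l x = t := by
  rcases h1.eq_or_lt with rfl | h1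
  · exact ⟨1, h.m1, h.pp1⟩
  let K : ℕ → ℕ := fun n => ⌊2 ^ n * t⌋₊
  have hK : ∀ n, K n < 2 ^ n := fun n => by
    have : ⌊2 ^ n * t⌋₊ < 2 ^ n := by
      rw [Nat.floor_lt (by positivity)]
      push_cast
      have : (0 : ℝ) < 2 ^ n := by positivity
      nlinarith
    exact this
  have hKs : ∀ n, K (n + 1) / 2 = K n := fun n => by
    have : K (n + 1) / 2 = ⌊(2 ^ (n + 1) * t) / (2 : ℕ)⌋₊ := (Nat.floor_div_natCast _ _).symm
    rw [this]; simp only [K]; congr 1; push_cast; ring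
  let S : ℕ → Set ℝ := fun n => C ∩ Icc (cc l n (K n)) (cc l n (K n) + 1 / l ^ n)
  obtain ⟨x, hx⟩ := IsCompact.nonempty_iInter_of_sequence_nonempty_isCompact_isClosed S
    (by
      rintro n x ⟨hx, h1, h2⟩
      refine ⟨hx, ?_⟩
      obtain ⟨y, hy, rfl⟩ := h.mem_ph (n + 1) _ hx h1 h2
      have hd := Nat.div_add_mod (K (n + 1)) 2
      rw [hKs] at hd
      rcases Nat.mod_two_eq_zero_or_one (K (n + 1)) with h3 | h3
      · rw [h3, add_zero] at hd
        rw [← hd, ph_even]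
        exact ⟨h.ph_ge _ _ (h.f0 y hy), h.ph_le _ _ (h.f0 y hy)⟩
      · rw [h3] at hd
        rw [← hd, ph_odd]
        exact ⟨h.ph_ge _ _ (h.f1 y hy), h.ph_le _ _ (h.f1 y hy)⟩)
    (fun n => ⟨ph l n (K n) 0, h.ph_mem n _ (hK n) _ h.m0, h.ph_ge _ _ h.m0, h.ph_le _ _ h.m0⟩)
    (h.cpt.inter_right isClosed_Icc)
    (fun n => h.cpt.isClosed.inter isClosed_Icc)
  rw [mem_iInter] at hx
  refine ⟨x, (hx 0).1, ?_⟩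
  have key : ∀ n : ℕ, |pp l x - t| ≤ (1 / 2) ^ n := by
    intro n
    obtain ⟨hxC, h3, h4⟩ := hx n
    obtain ⟨y, hy, rfl⟩ := h.mem_ph n _ hxC h3 h4
    rw [h.pp_ph n _ (hK n) y hy]
    have a1 : (K n : ℝ) ≤ 2 ^ n * t := Nat.floor_le (by positivity)
    have a2 : 2 ^ n * t < K n + 1 := Nat.lt_floor_add_one _
    have := pp_nn l y
    have := pp_le l y
    have e : (K n + pp l y) / 2 ^ n - t = (K n + pp l y - 2 ^ n * t) / 2 ^ n := by field_simp
    rw [e, abs_div, abs_of_pos (show (0 : ℝ) < 2 ^ n by positivity), one_div, inv_pow,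
      inv_eq_one_div]
    gcongr
    rw [abs_le]; constructor <;> linarith
  have : |pp l x - t| ≤ 0 :=
    ge_of_tendsto' (tendsto_pow_atTop_nhds_zero_of_lt_one (by norm_num) (by norm_num)) key
  have := abs_nonpos_iff.1 this
  linarith

/-- adjacency -/
lemma gap_aux (h : Good l C) (n : ℕ) : ∀ m k : ℕ, k < 2 ^ m → ∀ x ∈ C, ∀ y ∈ C, x < y →
    (∀ z ∈ C, ¬ (x < z ∧ z < y)) → 1 / l ^ n < y - x →
    ∃ m' k' : ℕ, k' < 2 ^ m' ∧ ph l m k x = ph l m' k' (1 / l) ∧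
      ph l m k y = ph l m' k' ((l - 1) / l) := by
  induction n with
  | zero =>
    intro m k hk x hx y hy hxy hn hd
    have := h.nn x hx
    have := h.le1 y hy
    simp at hd; linarith
  | succ n ih =>
    intro m k hk x hx y hy hxy hn hd
    have l0 : 0 < l := by linarith [h.hl]
    obtain ⟨a, ha, ea⟩ := h.split x hx
    obtain ⟨b, hb, eb⟩ := h.split y hy
    have a0 := h.nn a ha
    have a1 := h.le1 a ha
    have b0 := h.nn b hb
    have b1 := h.le1 b hb
    have hd' : ∀ a b : ℝ, 1 / l ^ (n + 1) < b / l - a / l → 1 / l ^ n < b - a := by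
      intro a b hh
      rw [← sub_div, pow_succ, ← div_div, div_lt_div_iff_of_pos_right l0] at hh
      exact hh
    have g1 : a / l ≤ 1 / l := by gcongr
    have g2 : 0 ≤ b / l := by positivity
    have g3 : 0 ≤ a / l := by positivity
    have g4 : b / l ≤ 1 / l := by gcongr
    have g5 : 1 / l < (l - 1) / l := by gcongr; linarith [h.hl]
    rcases ea with ea | ea <;> rcases eb with eb | eb
    · rw [ea, eb, ← ph_even, ← ph_even]
      refine ih _ _ (by rw [pow_succ]; omega) a ha b hb ?_ ?_ (hd' _ _ (by rw [← ea, ← eb]; exact hd))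
      · rw [ea, eb, div_lt_div_iff_of_pos_right l0] at hxy; exact hxy
      · rintro z hz ⟨h1, h2⟩
        refine hn _ (h.f0 z hz) ⟨?_, ?_⟩
        · rw [ea]; gcongr
        · rw [eb]; gcongr
    · refine ⟨m, k, hk, ?_, ?_⟩
      · congr 1
        by_contra hne
        have : x < 1 / l := lt_of_le_of_ne (by linarith) hne
        exact hn _ (h.f0 1 h.m1) ⟨this, by linarith⟩
      · congr 1
        by_contra hne
        have : (l - 1) / l < y := lt_of_le_of_ne (by linarith) (Ne.symm hne)
        have h3 := h.f1 0 h.m0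
        rw [zero_div, zero_add] at h3
        exact hn _ h3 ⟨by linarith, this⟩
    · linarith
    · rw [ea, eb, ← ph_odd, ← ph_odd]
      refine ih _ _ (by rw [pow_succ]; omega) a ha b hb ?_ ?_
        (hd' _ _ (by rw [ea, eb] at hd; linarith))
      · rw [ea, eb, add_lt_add_iff_right, div_lt_div_iff_of_pos_right l0] at hxy; exact hxy
      · rintro z hz ⟨h1, h2⟩
        refine hn _ (h.f1 z hz) ⟨?_, ?_⟩
        · rw [ea]; gcongr
        · rw [eb]; gcongr

lemma gap (h : Good l C) {x y : ℝ} (hx : x ∈ C) (hy : y ∈ C) (hxy : x < y)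
    (hn : ∀ z ∈ C, ¬ (x < z ∧ z < y)) :
    ∃ m k : ℕ, k < 2 ^ m ∧ x = ph l m k (1 / l) ∧ y = ph l m k ((l - 1) / l) := by
  obtain ⟨n, hn'⟩ := (h.tend.eventually_lt_const (show 0 < y - x by linarith)).exists
  have := h.gap_aux n 0 0 (by norm_num) x hx y hy hxy hn hn'
  simpa [ph, cc] using this

lemma m1l (h : Good l C) : 1 / l ∈ C := h.f0 1 h.m1
lemma m2l (h : Good l C) : (l - 1) / l ∈ C := by
  have := h.f1 0 h.m0
  rwa [zero_div, zero_add] at this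

lemma mid (h : Good l C) {z : ℝ} (hz : z ∈ C) : ¬ (1 / l < z ∧ z < (l - 1) / l) := by
  rintro ⟨h1, h2⟩
  have l0 : 0 < l := by linarith [h.hl]
  obtain ⟨y, hy, rfl | rfl⟩ := h.split z hz
  · rw [div_lt_div_iff_of_pos_right l0] at h1; linarith [h.le1 y hy]
  · have := h.nn y hy
    have : 0 ≤ y / l := by positivity
    linarith

/-- converse -/
lemma gap_conv (h : Good l C) (m k : ℕ) :
    ∀ z ∈ C, ¬ (ph l m k (1 / l) < z ∧ z < ph l m k ((l - 1) / l)) := by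
  rintro z hz ⟨h1, h2⟩
  have a1 := h.ph_ge m k h.m1l
  have a2 := h.ph_le m k h.m2l
  obtain ⟨y, hy, rfl⟩ := h.mem_ph m k hz (by linarith) (by linarith)
  rw [h.ph_mono] at h1 h2
  exact h.mid hy ⟨h1, h2⟩

lemma pp_gap (h : Good l C) {x y : ℝ} (hx : x ∈ C) (hy : y ∈ C) (hxy : x < y)
    (hn : ∀ z ∈ C, ¬ (x < z ∧ z < y)) : pp l x = pp l y := by
  obtain ⟨m, k, hk, rfl, rfl⟩ := h.gap hx hy hxy hn
  rw [h.pp_ph m k hk _ h.m1l, h.pp_ph m k hk _ h.m2l]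
  have h1 := pp_f0 l h.hl 1 le_rfl
  have h2 := pp_f1 l h.hl 0 le_rfl
  rw [zero_div, zero_add, h.pp0] at h2
  rw [h.pp1] at h1
  rw [h1, h2]; norm_num

end Good
namespace Good
variable {l : ℝ} {C : Set ℝ}

lemma const_aux (h : Good l C) (E : ℝ → ℝ) (K : ℝ)
    (hK : ∀ x ∈ C, ∀ y ∈ C, |E x - E y| ≤ K * |x - y|)
    (hg : ∀ m j : ℕ, j < 2 ^ m → E (ph l m j ((l - 1) / l)) = E (ph l m j (1 / l))) :
    ∀ y ∈ C, E y = E 0 := by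
  have l0 : 0 < l := by linarith [h.hl]
  have e1 : ∀ m j, ph l m j 1 = ph l (m + 1) (2 * j + 1) 1 := fun m j => by
    rw [ph_odd]; congr 1; field_simp; ring
  have e2 : ∀ m j, ph l m j ((l - 1) / l) = ph l (m + 1) (2 * j + 1) 0 := fun m j => by
    rw [ph_odd]; congr 1; ring
  have e3 : ∀ m j, ph l m j (1 / l) = ph l (m + 1) (2 * j) 1 := fun m j => by
    rw [ph_even]
  have e4 : ∀ m j, ph l m j 0 = ph l (m + 1) (2 * j) 0 := fun m j => by
    rw [ph_even]; congr 1; ring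
  have bd : ∀ i m j : ℕ, j < 2 ^ m →
      |E (ph l m j 1) - E (ph l m j 0)| ≤ K / l ^ m * (2 / l) ^ i := by
    intro i
    induction i with
    | zero =>
      intro m j hj
      refine (hK _ (h.ph_mem m j hj _ h.m1) _ (h.ph_mem m j hj _ h.m0)).trans (le_of_eq ?_)
      have : ph l m j 1 - ph l m j 0 = 1 / l ^ m := by simp [ph]
      rw [this, abs_of_pos (by have := h.pw m; positivity)]
      ring
    | succ i ih =>
      intro m j hj
      have a1 := ih (m + 1) (2 * j + 1) (by rw [pow_succ]; omega)
      have a2 := ih (m + 1) (2 * j) (by rw [pow_succ]; omega)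
      rw [← e1, ← e2] at a1
      rw [← e3, ← e4] at a2
      rw [hg m j hj] at a1
      have := abs_add_le (E (ph l m j 1) - E (ph l m j (1 / l)))
        (E (ph l m j (1 / l)) - E (ph l m j 0))
      rw [sub_add_sub_cancel] at this
      refine this.trans ((add_le_add a1 a2).trans (le_of_eq ?_))
      rw [pow_succ, pow_succ]; field_simp; ring
  have tl : Tendsto (fun i : ℕ => (2 / l) ^ i) atTop (𝓝 0) :=
    tendsto_pow_atTop_nhds_zero_of_lt_one (by positivity)
      (by rw [div_lt_one l0]; exact h.hl)
  have eq1 : ∀ m j : ℕ, j < 2 ^ m → E (ph l m j 1) = E (ph l m j 0) := by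
    intro m j hj
    have t2 := tl.const_mul (K / l ^ m)
    rw [mul_zero] at t2
    have := abs_nonpos_iff.1 (ge_of_tendsto' t2 (fun i => bd i m j hj))
    linarith
  have eq0 : ∀ m j : ℕ, j < 2 ^ m → E (ph l m j 0) = E 0 := by
    intro m
    induction m with
    | zero => intro j hj; have : j = 0 := by simpa using hj
              subst this; simp [ph, cc]
    | succ m ih =>
      intro j hj
      rw [pow_succ] at hj
      rcases Nat.even_or_odd' j with ⟨i, rfl | rfl⟩
      · rw [← e4]; exact ih i (by omega)
      · rw [← e2, hg m i (by omega), e3, eq1 _ _ (by rw [pow_succ]; omega), ← e4]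
        exact ih i (by omega)
  intro y hy
  have t3 := h.tend.const_mul |K|
  rw [mul_zero] at t3
  have : |E y - E 0| ≤ 0 := by
    refine ge_of_tendsto' t3 (fun n => ?_)
    obtain ⟨k, hk, z, hz, rfl⟩ := h.ex_ph n y hy
    rw [← eq0 n k hk]
    refine (hK _ hy _ (h.ph_mem n k hk _ h.m0)).trans ?_
    have : ph l n k z - ph l n k 0 = z / l ^ n := by simp [ph]
    rw [this]
    have hp := h.pw n
    have z0 := h.nn z hz
    have z1 := h.le1 z hz
    rw [abs_of_nonneg (show 0 ≤ z / l ^ n by positivity)]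
    have : K ≤ |K| := le_abs_self K
    gcongr
  have := abs_nonpos_iff.1 this
  linarith

lemma cyl_aff (h : Good l C) (g D : ℝ → ℝ) (hD : ∀ x, HasDerivAt g (D x) x)
    (hDc : Continuous D) (hDp : ∀ x, 0 < D x) (hm : StrictMono g) (hgC : g '' C = C) :
    ∃ N : ℕ, ∀ k < 2 ^ N, ∃ M j : ℕ, j < 2 ^ M ∧ ∀ y ∈ C, g (ph l N k y) = ph l M j y := by
  have l2 := h.hl
  have l0 : 0 < l := by linarith
  obtain ⟨δ, hδ, hu⟩ : ∃ δ > 0, ∀ x ∈ Icc (0 : ℝ) 1, ∀ y ∈ Icc (0 : ℝ) 1, |x - y| < δ →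
      D x < 2 * D y := by
    obtain ⟨x0, hx0, hmin⟩ := isCompact_Icc.exists_isMinOn (nonempty_Icc.2 zero_le_one)
      hDc.continuousOn (s := Icc (0 : ℝ) 1)
    have huc := isCompact_Icc.uniformContinuousOn_of_continuous
      (hDc.continuousOn (s := Icc (0 : ℝ) 1))
    rw [Metric.uniformContinuousOn_iff] at huc
    obtain ⟨δ, hδ, hh⟩ := huc (D x0) (hDp x0)
    refine ⟨δ, hδ, fun x hx y hy hxy => ?_⟩
    have := hh x hx y hy (by rwa [Real.dist_eq])
    rw [Real.dist_eq, abs_lt] at this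
    have h3 : D x0 ≤ D y := hmin hy
    linarith
  obtain ⟨B, hB⟩ : ∃ B, ∀ x ∈ Icc (0 : ℝ) 1, ∀ y ∈ Icc (0 : ℝ) 1, |g x - g y| ≤ B * |x - y| := by
    obtain ⟨B, hB⟩ := isCompact_Icc.exists_bound_of_continuousOn
      (hDc.continuousOn (s := Icc (0 : ℝ) 1))
    refine ⟨B, fun x hx y hy => ?_⟩
    exact (convex_Icc (0 : ℝ) 1).norm_image_sub_le_of_norm_hasDerivWithin_le
      (fun z _ => (hD z).hasDerivWithinAt) hB hy hx
  obtain ⟨N, hN⟩ := (h.tend.eventually_lt_const hδ).exists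
  refine ⟨N, fun k hk => ?_⟩
  have memI : ∀ x ∈ C, x ∈ Icc (0 : ℝ) 1 := fun x hx => ⟨h.nn x hx, h.le1 x hx⟩
  have gmem : ∀ x ∈ C, g x ∈ C := fun x hx => hgC ▸ mem_image_of_mem g hx
  have dif : ∀ m j, ph l m j ((l - 1) / l) - ph l m j (1 / l) = ((l - 2) / l) / l ^ m := by
    intro m j; simp only [ph]; ring
  have gam : 0 < (l - 2) / l := div_pos (by linarith) l0
  -- image of a gap
  have im : ∀ m j : ℕ, j < 2 ^ m → ∃ M i : ℕ, ∃ ξ, i < 2 ^ M ∧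
      ph l m j (1 / l) < ξ ∧ ξ < ph l m j ((l - 1) / l) ∧
      g (ph l m j (1 / l)) = ph l M i (1 / l) ∧
      g (ph l m j ((l - 1) / l)) = ph l M i ((l - 1) / l) ∧ D ξ = l ^ m / l ^ M := by
    intro m j hj
    have hm1 := h.ph_mem m j hj _ h.m1l
    have hm2 := h.ph_mem m j hj _ h.m2l
    have pos : ∀ m, 0 < ((l - 2) / l) / l ^ m := fun m => div_pos gam (h.pw m)
    have hlt : ph l m j (1 / l) < ph l m j ((l - 1) / l) := by
      have := pos m; have := dif m j; linarith
    obtain ⟨M, i, hi, q1, q2⟩ := h.gap (gmem _ hm1) (gmem _ hm2) (hm hlt) (by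
      rintro z hz ⟨z1, z2⟩
      rw [← hgC] at hz
      obtain ⟨w, hw, rfl⟩ := hz
      rw [hm.lt_iff_lt] at z1 z2
      exact h.gap_conv m j w hw ⟨z1, z2⟩)
    obtain ⟨ξ, ⟨x1, x2⟩, hx⟩ := exists_hasDerivAt_eq_slope g D hlt
      (continuous_iff_continuousAt.2 (fun x => (hD x).continuousAt)).continuousOn
      (fun x _ => hD x)
    refine ⟨M, i, ξ, hi, x1, x2, q1, q2, ?_⟩
    rw [hx, q1, q2, dif, dif]
    have := h.pw m
    have := h.pw M
    have : 0 < l - 2 := by linarith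
    field_simp
  obtain ⟨M, j, ξ, hj, x1, x2, q1, q2, hs⟩ := im N k hk
  refine ⟨M, j, hj, ?_⟩
  have key := h.const_aux (fun y => g (ph l N k y) - y / l ^ M) (|B| / l ^ N + 1 / l ^ M) (by
    intro x hx y hy
    have b1 := hB _ (memI _ (h.ph_mem N k hk x hx)) _ (memI _ (h.ph_mem N k hk y hy))
    have b2 : ph l N k x - ph l N k y = (x - y) / l ^ N := by simp only [ph]; ring
    have b3 : g (ph l N k x) - x / l ^ M - (g (ph l N k y) - y / l ^ M) =
      (g (ph l N k x) - g (ph l N k y)) - (x - y) / l ^ M := by ring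
    rw [b3]
    refine (abs_sub _ _).trans ?_
    rw [b2] at b1
    rw [abs_div, abs_of_pos (h.pw N)] at b1
    rw [abs_div, abs_of_pos (h.pw M)]
    have b4 : B * (|x - y| / l ^ N) ≤ |B| * (|x - y| / l ^ N) := by
      have := h.pw N
      gcongr; exact le_abs_self B
    calc _ ≤ |B| * (|x - y| / l ^ N) + |x - y| / l ^ M := by linarith
      _ = _ := by ring) (by
    intro m i hi
    have hi' : k * 2 ^ m + i < 2 ^ (N + m) := by
      have : (k + 1) * 2 ^ m ≤ 2 ^ N * 2 ^ m := Nat.mul_le_mul_right _ hk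
      rw [pow_add]; rw [add_mul] at this; omega
    obtain ⟨M', i', ξ', hi'', y1, y2, r1, r2, hs'⟩ := im (N + m) _ hi'
    have c1 := h.ph_ge N k (h.ph_mem m i hi _ h.m1l)
    have c2 := h.ph_le N k (h.ph_mem m i hi _ h.m2l)
    have c3 := h.ph_ge N k h.m1l
    have c4 := h.ph_le N k h.m2l
    have c5 := h.nn _ (h.ph_mem N k hk _ h.m0)
    have c6 := h.le1 _ (h.ph_mem N k hk _ h.m1)
    simp only [ph_comp l h.hl N k m i hi] at c1 c2 ⊢
    simp only [ph, zero_div, add_zero] at c5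
    simp only [ph] at c6
    have I1 : ξ ∈ Icc (0 : ℝ) 1 := ⟨by linarith, by linarith⟩
    have I2 : ξ' ∈ Icc (0 : ℝ) 1 := ⟨by linarith, by linarith⟩
    have u1 := hu ξ I1 ξ' I2 (by rw [abs_lt]; constructor <;> linarith)
    have u2 := hu ξ' I2 ξ I1 (by rw [abs_lt]; constructor <;> linarith)
    rw [hs, hs'] at u1 u2
    have pw := h.pw
    have comp : ∀ a b c d : ℕ, l ^ a / l ^ b < 2 * (l ^ c / l ^ d) → a + d ≤ c + b := by
      intro a b c d hh
      have p1 := pw b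
      have p2 := pw d
      rw [← mul_div_assoc, div_lt_div_iff₀ p1 p2, ← pow_add, mul_assoc, ← pow_add] at hh
      have : l ^ (a + d) < l ^ (c + b + 1) := by
        refine hh.trans ?_
        rw [pow_succ']
        have := pw (c + b)
        gcongr
      have := (pow_lt_pow_iff_right₀ (by linarith : 1 < l)).1 this
      omega
    have n1 := comp _ _ _ _ u1
    have n2 := comp _ _ _ _ u2
    have hM : M' = M + m := by omega
    subst hM
    rw [r1, r2]
    simp only [ph]
    have p1 := pw M
    have p2 := pw m
    rw [pow_add]
    field_simp
    ring)
  intro y hy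
  have k1 := key y hy
  have k2 := key _ h.m1l
  rw [q1] at k2
  simp only [ph] at k2 k1 ⊢
  linarith

/-- Rel -/
def Rel (l : ℝ) (C : Set ℝ) (f g : ℝ → ℝ) : Prop :=
  StrictMonoOn g C ∧ g '' C = C ∧ ∀ x ∈ C, pp l (g x) = f (pp l x)

lemma rel_unique (h : Good l C) {f g g' : ℝ → ℝ} (hf : InjOn f (Icc 0 1)) (h1 : Rel l C f g)
    (h2 : Rel l C f g') : EqOn g g' C := by
  have main : ∀ g g' : ℝ → ℝ, Rel l C f g → Rel l C f g' → ∀ x ∈ C, ¬ g x < g' x := by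
    rintro g g' ⟨a1, a2, a3⟩ ⟨b1, b2, b3⟩ x hx hlt
    have m1 : g x ∈ C := a2 ▸ mem_image_of_mem g hx
    have m2 : g' x ∈ C := b2 ▸ mem_image_of_mem g' hx
    obtain ⟨y, hy, ey⟩ : g' x ∈ g '' C := by rw [a2]; exact m2
    obtain ⟨z, hz, ez⟩ : g x ∈ g' '' C := by rw [b2]; exact m1
    have hxy : x < y := by rw [← ey] at hlt; exact (a1.lt_iff_lt hx hy).1 hlt
    have hzx : z < x := by rw [← ez] at hlt; exact (b1.lt_iff_lt hz hx).1 hlt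
    have p1 := a3 x hx
    have p2 := a3 y hy
    have p3 := b3 x hx
    have p4 := b3 z hz
    rw [ey] at p2
    rw [ez] at p4
    have mI : ∀ x, pp l x ∈ Icc (0 : ℝ) 1 := fun x => ⟨pp_nn l x, pp_le l x⟩
    have q1 := hf (mI y) (mI x) (by rw [← p2, p3])
    have q2 := hf (mI z) (mI x) (by rw [← p4, p1])
    have := h.pp_three hz hx hy hzx hxy
    linarith
  intro x hx
  exact le_antisymm (not_lt.1 (main g' g h2 h1 x hx)) (not_lt.1 (main g g' h1 h2 x hx))

lemma surj_part (h : Good l C) (g D : ℝ → ℝ) (hD : ∀ x, HasDerivAt g (D x) x)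
    (hDc : Continuous D) (hDp : ∀ x, 0 < D x) (hm : StrictMono g) (hgC : g '' C = C) :
    ∃ f, IsHigmanThompson 2 f ∧ Rel l C f g := by
  obtain ⟨N, hN⟩ := h.cyl_aff g D hD hDc hDp hm hgC
  have gmem : ∀ x ∈ C, g x ∈ C := fun x hx => hgC ▸ mem_image_of_mem g hx
  have hq : ∀ t : ℝ, ∃ x, t ∈ Icc (0 : ℝ) 1 → x ∈ C ∧ pp l x = t := by
    intro t
    by_cases ht : t ∈ Icc (0 : ℝ) 1
    · obtain ⟨x, hx, e⟩ := h.pp_surj ht.1 ht.2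
      exact ⟨x, fun _ => ⟨hx, e⟩⟩
    · exact ⟨0, fun hh => absurd hh ht⟩
  choose q hq using hq
  have mI : ∀ x, pp l x ∈ Icc (0 : ℝ) 1 := fun x => ⟨pp_nn l x, pp_le l x⟩
  have wd' : ∀ x ∈ C, ∀ y ∈ C, x < y → (pp l x = pp l y ↔ pp l (g x) = pp l (g y)) := by
    intro x hx y hy hxy
    constructor
    · intro e
      refine h.pp_gap (gmem x hx) (gmem y hy) (hm hxy) ?_
      rintro z hz ⟨z1, z2⟩
      rw [← hgC] at hz
      obtain ⟨w, hw, rfl⟩ := hz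
      rw [hm.lt_iff_lt] at z1 z2
      have := h.pp_three hx hw hy z1 z2
      linarith
    · intro e
      refine h.pp_gap hx hy hxy ?_
      rintro z hz ⟨z1, z2⟩
      have := h.pp_three (gmem x hx) (gmem z hz) (gmem y hy) (hm z1) (hm z2)
      linarith
  have wd : ∀ x ∈ C, ∀ y ∈ C, (pp l x = pp l y ↔ pp l (g x) = pp l (g y)) := by
    intro x hx y hy
    rcases lt_trichotomy x y with hh | rfl | hh
    · exact wd' x hx y hy hh
    · simp
    · have := wd' y hy x hx hh
      rw [eq_comm, this, eq_comm]
  have hf : ∀ x ∈ C, pp l (g x) = pp l (g (q (pp l x))) := fun x hx => by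
    obtain ⟨a, b⟩ := hq (pp l x) (mI x)
    exact (wd x hx _ a).1 b.symm
  have g0 : g 0 = 0 := by
    obtain ⟨w, hw, e⟩ : (0 : ℝ) ∈ g '' C := by rw [hgC]; exact h.m0
    have a := h.nn _ (gmem 0 h.m0)
    have b := hm.monotone (h.nn w hw)
    linarith
  have g1 : g 1 = 1 := by
    obtain ⟨w, hw, e⟩ : (1 : ℝ) ∈ g '' C := by rw [hgC]; exact h.m1
    have a := h.le1 _ (gmem 1 h.m1)
    have b := hm.monotone (h.le1 w hw)
    linarith
  refine ⟨fun t => pp l (g (q t)), ⟨?_, ?_, ?_, 2 ^ N, fun i => (i : ℝ) / 2 ^ N, by positivity,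
    by simp, by simp, ?_, ?_, ?_⟩, hm.strictMonoOn _, hgC, hf⟩
  · have := hf 0 h.m0
    rw [g0, h.pp0] at this
    exact this.symm
  · have := hf 1 h.m1
    rw [g1, h.pp1] at this
    exact this.symm
  · intro t ht t' ht' hlt
    obtain ⟨a, b⟩ := hq t ht
    obtain ⟨a', b'⟩ := hq t' ht'
    have hx : q t < q t' := by
      by_contra! hh
      have := h.pp_mono_le a' a hh
      linarith
    refine lt_of_le_of_ne (h.pp_mono (gmem _ a) (gmem _ a') (hm hx)) ?_
    intro e
    have := (wd _ a _ a').2 e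
    linarith
  · intro i hi
    push_cast
    gcongr
    linarith
  · intro i hi
    exact ⟨i, N, by push_cast; rfl⟩
  · intro i hi
    obtain ⟨M, j, hj, hy⟩ := hN i hi
    have fe : ∀ t ∈ Icc ((i : ℝ) / 2 ^ N) (((i + 1 : ℕ) : ℝ) / 2 ^ N),
        pp l (g (q t)) = (j + (t * 2 ^ N - i)) / 2 ^ M := by
      rintro t ⟨t1, t2⟩
      rw [div_le_iff₀ (by positivity)] at t1
      rw [le_div_iff₀ (by positivity)] at t2
      push_cast at t2
      obtain ⟨y, yC, ye⟩ := h.pp_surj (t := t * 2 ^ N - i) (by linarith) (by linarith)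
      have e1 := h.pp_ph N i hi y yC
      have e2 : t = pp l (ph l N i y) := by rw [e1, ye]; field_simp; ring
      have e3 := hf _ (h.ph_mem N i hi y yC)
      rw [← e2, hy y yC, h.pp_ph M j hj y yC, ye] at e3
      exact e3.symm
    refine ⟨(N : ℤ) - M, fun t ht => ?_⟩
    simp only
    rw [fe t ht, fe _ (left_mem_Icc.2 (by gcongr; simp))]
    rw [zpow_sub₀ (by norm_num)]
    push_cast
    simp only [zpow_natCast]
    field_simp
    ring

end Good
def P1 (g D : ℝ → ℝ) : Prop :=
  (∀ x, HasDerivAt g (D x) x) ∧ Continuous D ∧ ∀ x, 0 < D x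

lemma glue (F F' G G' : ℝ → ℝ) (a : ℝ) (hF : ∀ x, HasDerivAt F (F' x) x)
    (hG : ∀ x, HasDerivAt G (G' x) x) (cF : Continuous F') (cG : Continuous G')
    (e : F a = G a) (e' : F' a = G' a) :
    (∀ x, HasDerivAt (fun x => if x ≤ a then F x else G x) (if x ≤ a then F' x else G' x) x) ∧
    Continuous (fun x => if x ≤ a then F' x else G' x) := by
  constructor
  · intro x
    rcases lt_trichotomy x a with hx | rfl | hx
    · rw [if_pos hx.le]
      refine (hF x).congr_of_eventuallyEq ?_
      filter_upwards [Iio_mem_nhds hx] with y hy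
      rw [if_pos (le_of_lt hy)]
    · rw [if_pos le_rfl]
      have h1 : HasDerivWithinAt (fun y => if y ≤ x then F y else G y) (F' x) (Iic x) x := by
        refine (hF x).hasDerivWithinAt.congr (fun y hy => ?_) ?_
        · exact if_pos hy
        · exact if_pos le_rfl
      have h2 : HasDerivWithinAt (fun y => if y ≤ x then F y else G y) (F' x) (Ici x) x := by
        rw [e']
        refine (hG x).hasDerivWithinAt.congr (fun y hy => ?_) ?_
        · rcases (mem_Ici.1 hy).eq_or_lt with rfl | hy
          · rw [if_pos le_rfl, e]
          · rw [if_neg (not_le.2 hy)]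
        · rw [if_pos le_rfl, e]
      have := h1.union h2
      rwa [Iic_union_Ici, hasDerivWithinAt_univ] at this
    · rw [if_neg (not_le.2 hx)]
      refine (hG x).congr_of_eventuallyEq ?_
      filter_upwards [Ioi_mem_nhds hx] with y hy
      rw [if_neg (not_le.2 hy)]
  · refine Continuous.if_le cF cG continuous_id continuous_const ?_
    rintro x rfl; exact e'

lemma aff_deriv (c u a x : ℝ) : HasDerivAt (fun x => c + u * (x - a)) u x := by
  have := (((hasDerivAt_id x).sub_const a).const_mul u).const_add c
  simpa using this

lemma bridge (a b c d u v : ℝ) (hab : a < b) (hcd : c < d) (hu : 0 < u) (hv : 0 < v) :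
    ∃ G G', P1 G G' ∧ (∀ x ≤ a, G x = c + u * (x - a) ∧ G' x = u) ∧
      (∀ x ≥ b, G x = d + v * (x - b) ∧ G' x = v) := by
  set L := b - a with hL
  have Lp : 0 < L := by linarith
  obtain ⟨m, hm⟩ := exists_nat_gt ((u + v) * L / (d - c))
  have hdc : 0 < d - c := by linarith
  set n := m + 1 with hn
  have hn0 : (0 : ℝ) < n + 1 := by positivity
  set s := 6 * ((d - c) / L - (u + v) / (n + 1)) with hs
  have sp : 0 < s := by
    have : (u + v) / (n + 1) < (d - c) / L := by
      rw [div_lt_iff₀ hdc] at hm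
      rw [div_lt_div_iff₀ hn0 Lp]
      rw [hn]; push_cast; nlinarith
    rw [hs]; linarith
  let q : ℝ → ℝ := fun x => u * (1 - (1 - x) ^ (n + 1)) / (n + 1) + v * x ^ (n + 1) / (n + 1)
    + s * (x ^ 2 / 2 - x ^ 3 / 3)
  let q' : ℝ → ℝ := fun x => u * (1 - x) ^ n + v * x ^ n + s * (x - x ^ 2)
  have hq : ∀ x, HasDerivAt q (q' x) x := by
    intro x
    have i := hasDerivAt_id' x
    have d1 := ((((i.const_sub 1).pow (n + 1)).const_sub 1).const_mul u).div_const ((n : ℝ) + 1)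
    have d2 := ((i.pow (n + 1)).const_mul v).div_const ((n : ℝ) + 1)
    have d3 := (((i.pow 2).div_const 2).sub ((i.pow 3).div_const 3)).const_mul s
    have := (d1.add d2).add d3
    refine this.congr_deriv ?_
    simp only [q']
    push_cast
    field_simp
  let Q : ℝ → ℝ := fun t => c + L * q ((t - a) / L)
  let Q' : ℝ → ℝ := fun t => q' ((t - a) / L)
  have hQ : ∀ t, HasDerivAt Q (Q' t) t := by
    intro t
    have i := ((hasDerivAt_id' t).sub_const a).div_const L
    have := (((hq ((t - a) / L)).comp t i).const_mul L).const_add c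
    refine this.congr_deriv ?_
    simp only [Q']
    field_simp
  have cQ : Continuous Q' := by
    simp only [Q', q']; fun_prop
  have pQ : ∀ t, a ≤ t → t ≤ b → 0 < Q' t := by
    intro t h1 h2
    simp only [Q', q']
    set x := (t - a) / L with hx
    have x0 : 0 ≤ x := div_nonneg (by linarith) Lp.le
    have x1 : x ≤ 1 := by rw [hx, div_le_one Lp]; linarith
    have y0 : 0 ≤ 1 - x := by linarith
    rcases x0.eq_or_lt with h | h
    · rw [← h]; simp [hn]; exact hu
    · have : 0 ≤ x - x ^ 2 := by nlinarith
      have p1 : 0 ≤ u * (1 - x) ^ n := by positivity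
      have p2 : 0 < v * x ^ n := by positivity
      have p3 : 0 ≤ s * (x - x ^ 2) := by positivity
      linarith
  have Qa : Q a = c := by simp [Q, q]
  have Qa' : Q' a = u := by simp [Q', q', hn]
  have bb : (b - a) / L = 1 := by rw [← hL]; field_simp
  have Qb : Q b = d := by
    simp only [Q, q, bb, hs]; simp; field_simp; ring
  have Qb' : Q' b = v := by simp [Q', q', bb, hn]
  obtain ⟨g1, g2⟩ := glue (fun x => c + u * (x - a)) (fun _ => u) Q Q' a
    (fun x => aff_deriv c u a x) hQ continuous_const cQ (by simp [Qa]) Qa'.symm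
  obtain ⟨k1, k2⟩ := glue _ _ (fun x => d + v * (x - b)) (fun _ => v) b g1
    (fun x => aff_deriv d v b x) g2 continuous_const (by simp [not_le.2 hab, Qb])
    (by simp [not_le.2 hab, Qb'])
  refine ⟨_, _, ⟨k1, k2, ?_⟩, ?_, ?_⟩
  · intro x
    split_ifs with h1 h2
    · exact hu
    · exact pQ x (not_le.1 h2).le h1
    · exact hv
  · intro x hx
    have : x ≤ b := by linarith
    simp [hx, this]
  · intro x hx
    rcases (show b ≤ x from hx).eq_or_lt with rfl | hx
    · simp [not_le.2 hab, Qb, Qb']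
    · simp [not_le.2 hx]

lemma chain (n : ℕ) (a b A B : ℕ → ℝ) (hab : ∀ k ≤ n, a k < b k) (hAB : ∀ k ≤ n, A k < B k)
    (g1 : ∀ k < n, b k < a (k + 1)) (g2 : ∀ k < n, B k < A (k + 1)) :
    ∃ g D, P1 g D ∧
      (∀ k ≤ n, ∀ x ∈ Icc (a k) (b k), g x = A k + (B k - A k) / (b k - a k) * (x - a k)) ∧
      (∀ x ≥ a n, g x = A n + (B n - A n) / (b n - a n) * (x - a n) ∧
        D x = (B n - A n) / (b n - a n)) ∧
      (∀ x ≤ a 0, g x = A 0 + (B 0 - A 0) / (b 0 - a 0) * (x - a 0)) := by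
  have sl : ∀ k ≤ n, 0 < (B k - A k) / (b k - a k) := fun k hk =>
    div_pos (by linarith [hAB k hk]) (by linarith [hab k hk])
  induction n with
  | zero =>
    refine ⟨fun x => A 0 + (B 0 - A 0) / (b 0 - a 0) * (x - a 0),
      fun _ => (B 0 - A 0) / (b 0 - a 0), ⟨fun x => aff_deriv _ _ _ x, continuous_const,
      fun x => sl 0 le_rfl⟩, ?_, ?_, ?_⟩
    · intro k hk x hx
      have : k = 0 := by omega
      subst this; rfl
    · intro x hx; exact ⟨rfl, rfl⟩
    · intro x hx; rfl
  | succ n ih =>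
    obtain ⟨g, D, ⟨p1, p2, p3⟩, q1, q2, q3⟩ := ih (fun k hk => hab k (by omega))
      (fun k hk => hAB k (by omega)) (fun k hk => g1 k (by omega)) (fun k hk => g2 k (by omega))
      (fun k hk => sl k (by omega))
    obtain ⟨G, G', ⟨r1, r2, r3⟩, s1, s2⟩ := bridge (b n) (a (n + 1)) (B n) (A (n + 1))
      ((B n - A n) / (b n - a n)) ((B (n + 1) - A (n + 1)) / (b (n + 1) - a (n + 1)))
      (g1 n (by omega)) (g2 n (by omega)) (sl n (by omega)) (sl (n + 1) le_rfl)
    have hn := hab n (by omega)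
    have hn1 := g1 n (by omega)
    obtain ⟨t1, t2⟩ := q2 (b n) hn.le
    obtain ⟨w1, w2⟩ := s1 (b n) le_rfl
    obtain ⟨u1, u2⟩ := glue g D G G' (b n) p1 r1 p2 r2 (by
      rw [t1, w1]
      have : b n - a n ≠ 0 := by linarith
      field_simp; ring) (by rw [t2, w2])
    have bm : ∀ i k, k + i ≤ n → b k ≤ b (k + i) := by
      intro i
      induction i with
      | zero => intro k hk; exact le_rfl
      | succ i ih =>
        intro k hk
        have z1 := ih k (by omega)
        have z2 := g1 (k + i) (by omega)
        have z3 := hab (k + i + 1) (by omega)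
        rw [← add_assoc]
        linarith
    refine ⟨_, _, ⟨u1, u2, ?_⟩, ?_, ?_, ?_⟩
    · intro x
      split_ifs
      · exact p3 x
      · exact r3 x
    · intro k hk x hx
      rcases Nat.lt_or_ge n k with hh | hh
      · have : k = n + 1 := by omega
        subst this
        have : ¬ x ≤ b n := by linarith [hx.1]
        simp only [this, if_false]
        exact (s2 x hx.1).1
      · have h1 := bm (n - k) k (by omega)
        rw [Nat.add_sub_cancel' hh] at h1
        have : x ≤ b n := hx.2.trans h1
        simp only [this, if_true]
        exact q1 k hh x hx
    · intro x hx
      have : ¬ x ≤ b n := by linarith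
      simp only [this, if_false]
      exact s2 x hx
    · intro x hx
      have h1 := bm n 0 (by omega)
      rw [zero_add] at h1
      have h2 := hab 0 (by omega)
      have : x ≤ b n := by linarith
      simp only [this, if_true]
      exact q3 x hx

lemma diffeo_of (g D : ℝ → ℝ) (h : P1 g D) (hs : Function.Surjective g) :
    StrictMono g ∧ ∃ k, IsC1DiffeoPair g k := by
  obtain ⟨h1, h2, h3⟩ := h
  have hd : deriv g = D := funext fun x => (h1 x).deriv
  have hm : StrictMono g := strictMono_of_deriv_pos (fun x => by rw [hd]; exact h3 x)
  have hc : ContDiff ℝ 1 g := by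
    rw [contDiff_one_iff_deriv, hd]
    exact ⟨fun x => (h1 x).differentiableAt, h2⟩
  let e := (hm.orderIsoOfSurjective g hs).toHomeomorph
  have he : ∀ x, e x = g x := fun x => rfl
  refine ⟨hm, e.symm, hc, ?_, ?_, ?_⟩
  · exact e.contDiff_symm_deriv (f' := D) (fun x => (h3 x).ne') h1 hc
  · intro x; exact e.symm_apply_apply x
  · intro x; exact e.apply_symm_apply x

/-- dyadic at level N -/
def Dy (N : ℕ) (r : ℝ) : Prop := ∃ a : ℤ, r = a / 2 ^ N

lemma Dy.mono {N M : ℕ} {r : ℝ} (h : Dy N r) (hM : N ≤ M) : Dy M r := by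
  obtain ⟨a, rfl⟩ := h
  obtain ⟨k, rfl⟩ := Nat.exists_eq_add_of_le hM
  refine ⟨a * 2 ^ k, ?_⟩
  push_cast; rw [pow_add]; field_simp

def DD (r : ℝ) : Prop := ∃ N, Dy N r

lemma DD.add {r s : ℝ} (h : DD r) (h' : DD s) : DD (r + s) := by
  obtain ⟨N, h⟩ := h
  obtain ⟨M, h'⟩ := h'
  obtain ⟨a, ha⟩ := h.mono (le_max_left N M)
  obtain ⟨b, hb⟩ := h'.mono (le_max_right N M)
  refine ⟨max N M, a + b, ?_⟩
  rw [ha, hb]; push_cast; ring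

lemma DD.neg {r : ℝ} (h : DD r) : DD (-r) := by
  obtain ⟨N, a, rfl⟩ := h
  exact ⟨N, -a, by push_cast; ring⟩

lemma DD.mulz {r : ℝ} (h : DD r) (k : ℤ) : DD ((2 : ℝ) ^ k * r) := by
  obtain ⟨N, a, rfl⟩ := h
  rcases Int.eq_nat_or_neg k with ⟨n, rfl | rfl⟩
  · exact ⟨N, 2 ^ n * a, by push_cast; rw [zpow_natCast]; ring⟩
  · refine ⟨N + n, a, ?_⟩
    rw [zpow_neg, zpow_natCast, pow_add]; field_simp

lemma ht_data (f : ℝ → ℝ) (hf : IsHigmanThompson 2 f) : ∃ N : ℕ, ∀ k : ℕ, k < 2 ^ N → ∃ M j : ℕ,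
    j < 2 ^ M ∧ ∀ τ ∈ Icc (0 : ℝ) 1, f ((k + τ) / 2 ^ N) = (j + τ) / 2 ^ M := by
  obtain ⟨f0, f1, fm, m, x, hm, x0, xm, xs, xd, xa⟩ := hf
  have xd' : ∀ i ≤ m, DD (x i) := fun i hi => by
    obtain ⟨a, e, h⟩ := xd i hi
    exact ⟨e, a, by rw [h]; push_cast; rfl⟩
  choose! κ hκ using xa
  push_cast at hκ
  have fd : ∀ i ≤ m, DD (f (x i)) := by
    intro i
    induction i with
    | zero => intro _; exact ⟨0, 0, by rw [x0, f0]; simp⟩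
    | succ i ih =>
      intro hi
      rw [hκ i (by omega) _ (right_mem_Icc.2 (xs i (by omega)).le)]
      refine (ih (by omega)).add (DD.mulz ?_ _)
      rw [sub_eq_add_neg]
      exact (xd' _ hi).add (xd' i (by omega)).neg
  have rd : ∀ i ≤ m, DD ((2 : ℝ) ^ (-κ i) * f (x i) - x i) := fun i hi => by
    rw [sub_eq_add_neg]
    exact ((fd i hi).mulz _).add (xd' i hi).neg
  have ev : ∀ r, DD r → ∀ᶠ N in atTop, Dy N r := by
    rintro r ⟨N, h⟩
    exact eventually_atTop.2 ⟨N, fun M hM => h.mono hM⟩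
  have ev2 : ∀ᶠ N in atTop, ∀ i ∈ Finset.range (m + 1),
      Dy N (x i) ∧ Dy N ((2 : ℝ) ^ (-κ i) * f (x i) - x i) := by
    rw [Filter.eventually_all_finset]
    intro i hi
    have hi' : i ≤ m := by have := Finset.mem_range.1 hi; omega
    exact (ev _ (xd' i hi')).and (ev _ (rd i hi'))
  obtain ⟨N, hN⟩ := ev2.exists
  refine ⟨N, fun k hk => ?_⟩
  have h2N : (0 : ℝ) < 2 ^ N := by positivity
  have hk1 : (k : ℝ) + 1 ≤ 2 ^ N := by exact_mod_cast hk
  obtain ⟨i, him, hi1, hi2⟩ : ∃ i < m, x i ≤ (k : ℝ) / 2 ^ N ∧ (k : ℝ) / 2 ^ N < x (i + 1) := by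
    by_contra! hh
    have : ∀ i ≤ m, x i ≤ (k : ℝ) / 2 ^ N := by
      intro i
      induction i with
      | zero => intro _; rw [x0]; positivity
      | succ i ih => intro hi; exact hh i (by omega) (ih (by omega))
    have := this m le_rfl
    rw [xm, le_div_iff₀ h2N] at this
    linarith
  obtain ⟨⟨a1, ha1⟩, -⟩ := hN (i + 1) (Finset.mem_range.2 (by omega))
  obtain ⟨-, ⟨r, hr⟩⟩ := hN i (Finset.mem_range.2 (by omega))
  have hi3 : ((k : ℝ) + 1) / 2 ^ N ≤ x (i + 1) := by
    rw [ha1] at hi2 ⊢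
    rw [div_lt_div_iff_of_pos_right h2N] at hi2
    rw [div_le_div_iff_of_pos_right h2N]
    have : (k : ℤ) < a1 := by exact_mod_cast hi2
    have : (k : ℤ) + 1 ≤ a1 := by omega
    exact_mod_cast this
  have z0 : (0 : ℝ) < (2 : ℝ) ^ κ i := by positivity
  have fe : ∀ τ ∈ Icc (0 : ℝ) 1,
      f ((k + τ) / 2 ^ N) = (2 : ℝ) ^ κ i / 2 ^ N * (r + k + τ) := by
    rintro τ ⟨t0, t1⟩
    have q1 : (k : ℝ) / 2 ^ N ≤ (k + τ) / 2 ^ N := by gcongr; linarith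
    have q2 : (k + τ) / 2 ^ N ≤ ((k : ℝ) + 1) / 2 ^ N := by gcongr
    rw [hκ i him _ ⟨by linarith, by linarith⟩]
    have e1 : f (x i) = (2 : ℝ) ^ κ i * (r / 2 ^ N + x i) := by
      rw [← hr, sub_add_cancel, ← mul_assoc, zpow_neg, mul_inv_cancel₀ z0.ne', one_mul]
    rw [e1]; field_simp; ring
  have I0 : (k : ℝ) / 2 ^ N ∈ Icc (0 : ℝ) 1 :=
    ⟨by positivity, by rw [div_le_one h2N]; linarith⟩
  have I1 : ((k : ℝ) + 1) / 2 ^ N ∈ Icc (0 : ℝ) 1 :=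
    ⟨by positivity, by rw [div_le_one h2N]; linarith⟩
  have F0 := fe 0 ⟨le_rfl, zero_le_one⟩
  have F1 := fe 1 ⟨zero_le_one, le_rfl⟩
  rw [add_zero, add_zero] at F0
  have b0 : 0 ≤ f ((k : ℝ) / 2 ^ N) := by
    rw [← f0]; exact fm.monotoneOn ⟨le_rfl, zero_le_one⟩ I0 I0.1
  have b1 : f (((k : ℝ) + 1) / 2 ^ N) ≤ 1 := by
    exact (fm.monotoneOn I1 ⟨zero_le_one, le_rfl⟩ I1.2).trans_eq f1
  have zz : (2 : ℝ) ^ κ i / 2 ^ N = (2 : ℝ) ^ (κ i - N) := by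
    rw [zpow_sub₀ (by norm_num), zpow_natCast]
  rw [zz] at F0 F1 fe
  have zp : (0 : ℝ) < (2 : ℝ) ^ (κ i - N) := by positivity
  have rk : 0 ≤ r + k := by
    rw [F0] at b0
    have : (0 : ℝ) ≤ r + k := nonneg_of_mul_nonneg_right b0 zp
    exact_mod_cast this
  have rk' : (0 : ℝ) ≤ r + k := by exact_mod_cast rk
  have kN : κ i - N ≤ 0 := by
    by_contra! hh
    have : (1 : ℝ) < (2 : ℝ) ^ (κ i - N) := one_lt_zpow₀ (by norm_num) hh
    rw [F1] at b1
    nlinarith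
  obtain ⟨M, hM⟩ := Int.eq_ofNat_of_zero_le (show 0 ≤ -(κ i - N) by omega)
  obtain ⟨j, hj⟩ := Int.eq_ofNat_of_zero_le rk
  have hM' : κ i - N = -(M : ℤ) := by omega
  have hj' : (r : ℝ) + k = j := by exact_mod_cast hj
  rw [hM', zpow_neg, zpow_natCast] at F1 fe
  rw [hj'] at F1 fe
  refine ⟨M, j, ?_, fun τ hτ => ?_⟩
  · rw [F1, inv_mul_le_iff₀ (by positivity), mul_one] at b1
    have : j + 1 ≤ 2 ^ M := by exact_mod_cast b1
    omega
  · rw [fe τ hτ]; ring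

namespace Good
variable {l : ℝ} {C : Set ℝ}

lemma exist_part (h : Good l C) (f : ℝ → ℝ) (hf : IsHigmanThompson 2 f) :
    ∃ g k, IsC1DiffeoPair g k ∧ StrictMono g ∧ Rel l C f g := by
  obtain ⟨N, hN⟩ := ht_data f hf
  choose! M j hj hd using hN
  have l0 : 0 < l := by linarith [h.hl]
  have P2 : 1 ≤ 2 ^ N := Nat.one_le_two_pow
  have nx : ∀ k : ℕ, k + 1 < 2 ^ N →
      (((j k : ℕ) : ℝ) + 1) / 2 ^ (M k) = (j (k + 1) : ℝ) / 2 ^ (M (k + 1)) := by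
    intro k hk
    have a1 := hd k (by omega) 1 ⟨zero_le_one, le_rfl⟩
    have a2 := hd (k + 1) hk 0 ⟨le_rfl, zero_le_one⟩
    rw [← a1]
    rw [add_zero, add_zero] at a2
    rw [← a2]; push_cast; rfl
  have adj : ∀ k : ℕ, k + 1 < 2 ^ N →
      cc l (M k) (j k) + 1 / l ^ (M k) < cc l (M (k + 1)) (j (k + 1)) := by
    intro k hk
    apply cc_adj l h.hl
    have := nx k hk
    rw [div_eq_div_iff (by positivity) (by positivity)] at this
    exact_mod_cast this
  have hpos : ∀ n, 0 < 1 / l ^ n := fun n => by have := h.pw n; positivity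
  obtain ⟨g, D, hP, q1, q2, q3⟩ := chain (2 ^ N - 1) (fun k => cc l N k)
    (fun k => cc l N k + 1 / l ^ N) (fun k => cc l (M k) (j k))
    (fun k => cc l (M k) (j k) + 1 / l ^ (M k))
    (fun k _ => by have := hpos N; linarith)
    (fun k _ => by have := hpos (M k); linarith)
    (fun k _ => cc_gap l h.hl N k)
    (fun k hk => adj k (by omega))
  have hs : Function.Surjective g := by
    intro y
    have sp : ∀ n m, 0 < (1 / l ^ n) / (1 / l ^ m) := fun n m => div_pos (hpos n) (hpos m)
    simp only [add_sub_cancel_left] at q2 q3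
    refine mem_range_of_exists_le_of_exists_ge
      (continuous_iff_continuousAt.2 (fun x => (hP.1 x).continuousAt)) ?_ ?_
    · have s0 := sp (M 0) N
      set s := (1 / l ^ (M 0)) / (1 / l ^ N)
      refine ⟨min (cc l N 0) (cc l N 0 + (y - cc l (M 0) (j 0)) / s), ?_⟩
      rw [q3 _ (min_le_left _ _)]
      have h2 := min_le_right (cc l N 0) (cc l N 0 + (y - cc l (M 0) (j 0)) / s)
      have : s * (min (cc l N 0) (cc l N 0 + (y - cc l (M 0) (j 0)) / s) - cc l N 0) ≤
          s * ((y - cc l (M 0) (j 0)) / s) := by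
        apply mul_le_mul_of_nonneg_left _ s0.le; linarith
      rw [mul_div_cancel₀ _ s0.ne'] at this
      linarith
    · set n := 2 ^ N - 1
      have s0 := sp (M n) N
      set s := (1 / l ^ (M n)) / (1 / l ^ N)
      refine ⟨max (cc l N n) (cc l N n + (y - cc l (M n) (j n)) / s), ?_⟩
      rw [(q2 _ (le_max_left _ _)).1]
      have h2 := le_max_right (cc l N n) (cc l N n + (y - cc l (M n) (j n)) / s)
      have : s * ((y - cc l (M n) (j n)) / s) ≤
        s * (max (cc l N n) (cc l N n + (y - cc l (M n) (j n)) / s) - cc l N n) := by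
        apply mul_le_mul_of_nonneg_left _ s0.le; linarith
      rw [mul_div_cancel₀ _ s0.ne'] at this
      linarith
  obtain ⟨hm, k', hk'⟩ := diffeo_of g D hP hs
  have gph : ∀ k < 2 ^ N, ∀ y ∈ C, g (ph l N k y) = ph l (M k) (j k) y := by
    intro k hk y hy
    rw [q1 k (by omega) _ ⟨h.ph_ge N k hy, h.ph_le N k hy⟩]
    simp only [ph, add_sub_cancel_left]
    have := h.pw N
    have := h.pw (M k)
    field_simp
  refine ⟨g, k', hk', hm, hm.strictMonoOn _, ?_, ?_⟩
  · apply Subset.antisymm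
    · rintro _ ⟨x, hx, rfl⟩
      obtain ⟨k, hk, y, hy, rfl⟩ := h.ex_ph N x hx
      rw [gph k hk y hy]
      exact h.ph_mem _ _ (hj k hk) y hy
    · intro z hz
      obtain ⟨k, hk, c1, c2⟩ : ∃ k : ℕ, k < 2 ^ N ∧ cc l (M k) (j k) ≤ z ∧
          z ≤ cc l (M k) (j k) + 1 / l ^ (M k) := by
        by_contra! hh
        have : ∀ k : ℕ, k < 2 ^ N → cc l (M k) (j k) + 1 / l ^ (M k) < z := by
          intro k
          induction k with
          | zero =>
            intro hk
            refine hh 0 hk ?_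
            have a2 := hd 0 hk 0 ⟨le_rfl, zero_le_one⟩
            have : j 0 = 0 := by
              rw [Nat.cast_zero, add_zero, add_zero, zero_div, hf.1, eq_comm, div_eq_zero_iff] at a2
              rcases a2 with a2 | a2
              · exact_mod_cast a2
              · exact absurd a2 (by positivity)
            rw [this, cc_zero]; exact h.nn z hz
          | succ k ih =>
            intro hk
            refine hh (k + 1) hk ?_
            by_contra! hlt
            have lt1 := ih (by omega)
            have m1 := h.ph_mem _ _ (hj k (by omega)) 1 h.m1
            have m2 := h.ph_mem _ _ (hj (k + 1) hk) 0 h.m0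
            have := h.pp_three m1 hz m2 lt1 (by simpa [ph] using hlt)
            rw [h.pp_ph _ _ (hj k (by omega)) 1 h.m1, h.pp_ph _ _ (hj (k + 1) hk) 0 h.m0,
              h.pp1, h.pp0, nx k hk, add_zero] at this
            exact lt_irrefl _ this
        have t1 := this (2 ^ N - 1) (by omega)
        have a2 := hd (2 ^ N - 1) (by omega) 1 ⟨zero_le_one, le_rfl⟩
        have e1 : (((2 ^ N - 1 : ℕ) : ℝ) + 1) / 2 ^ N = 1 := by
          rw [Nat.cast_sub P2]; push_cast; field_simp; ring
        rw [e1, hf.2.1, eq_comm, div_eq_one_iff_eq (by positivity)] at a2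
        have a3 : j (2 ^ N - 1) + 1 = 2 ^ (M (2 ^ N - 1)) := by exact_mod_cast a2
        have a4 : j (2 ^ N - 1) = 2 ^ (M (2 ^ N - 1)) - 1 := by omega
        rw [a4, cc_last l h.hl] at t1
        linarith [h.le1 z hz]
      obtain ⟨y, hy, rfl⟩ := h.mem_ph _ _ hz c1 c2
      exact ⟨_, h.ph_mem N k hk y hy, gph k hk y hy⟩
  · intro x hx
    obtain ⟨k, hk, y, hy, rfl⟩ := h.ex_ph N x hx
    rw [gph k hk y hy, h.pp_ph _ _ (hj k hk) y hy, h.pp_ph _ _ hk y hy,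
      hd k hk _ ⟨pp_nn l y, pp_le l y⟩]

end Good

lemma deriv_data (g k : ℝ → ℝ) (h : IsC1DiffeoPair g k) (hm : StrictMono g) :
    P1 g (deriv g) := by
  obtain ⟨h1, h2, h3, h4⟩ := h
  have d1 : Differentiable ℝ g := h1.differentiable (by norm_num)
  have d2 : Differentiable ℝ k := h2.differentiable (by norm_num)
  refine ⟨fun x => (d1 x).hasDerivAt, (contDiff_one_iff_deriv.1 h1).2, fun x => ?_⟩
  refine lt_of_le_of_ne hm.monotone.deriv_nonneg ?_
  intro e
  have c := (d2 (g x)).hasDerivAt.comp x (d1 x).hasDerivAt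
  have : k ∘ g = id := funext h3
  rw [this, ← e, mul_zero] at c
  have := c.unique (hasDerivAt_id x)
  norm_num at this

end CC

/-- For the central Cantor set `C_λ` (λ > 2), the group of transformations of `C_λ`
induced by orientation-preserving `C¹` diffeomorphisms of ℝ preserving `C_λ` is
isomorphic to Thompson's group `F`: there is a realization `Θ` of `F = F₂` by
restrictions of diffeomorphisms which is multiplicative, injective and surjective. -/
theorem diffeo_group_centralCantor_iso_F (l : ℝ) (hl : 2 < l) (C : Set ℝ)
    (hC : IsCentralCantor l C) :
    ∃ Θ : (ℝ → ℝ) → (ℝ → ℝ),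
      (∀ f, IsHigmanThompson 2 f → ∃ g h : ℝ → ℝ, IsC1DiffeoPair g h ∧
        StrictMono g ∧ g '' C = C ∧ Set.EqOn (Θ f) g C) ∧
      (∀ f g, IsHigmanThompson 2 f → IsHigmanThompson 2 g →
        Set.EqOn (Θ (f ∘ g)) (Θ f ∘ Θ g) C) ∧
      (∀ f g, IsHigmanThompson 2 f → IsHigmanThompson 2 g →
        Set.EqOn (Θ f) (Θ g) C → Set.EqOn f g (Set.Icc 0 1)) ∧
      (∀ g h : ℝ → ℝ, IsC1DiffeoPair g h → StrictMono g → g '' C = C →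
        ∃ f, IsHigmanThompson 2 f ∧ Set.EqOn (Θ f) g C) := by
  classical
  have h := CC.good_of l hl C hC
  have hinj : ∀ f, IsHigmanThompson 2 f → InjOn f (Icc 0 1) := fun f hf => hf.2.2.1.injOn
  have ex : ∀ f : ℝ → ℝ, ∃ g : ℝ → ℝ, (∃ g', CC.Good.Rel l C f g') → CC.Good.Rel l C f g := by
    intro f
    by_cases hh : ∃ g', CC.Good.Rel l C f g'
    · obtain ⟨g', hg'⟩ := hh
      exact ⟨g', fun _ => hg'⟩
    · exact ⟨id, fun h2 => absurd h2 hh⟩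
  choose Θ hΘ using ex
  have hT : ∀ f, IsHigmanThompson 2 f → CC.Good.Rel l C f (Θ f) := by
    intro f hf
    obtain ⟨g, k, -, -, hr⟩ := h.exist_part f hf
    exact hΘ f ⟨g, hr⟩
  have mI : ∀ x, CC.pp l x ∈ Icc (0 : ℝ) 1 := fun x => ⟨CC.pp_nn l x, CC.pp_le l x⟩
  refine ⟨Θ, ?_, ?_, ?_, ?_⟩
  · intro f hf
    obtain ⟨g, k, h1, h2, hr⟩ := h.exist_part f hf
    exact ⟨g, k, h1, h2, hr.2.1, h.rel_unique (hinj f hf) (hT f hf) hr⟩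
  · intro f g hf hg
    obtain ⟨a1, a2, a3⟩ := hT f hf
    obtain ⟨b1, b2, b3⟩ := hT g hg
    have gm : ∀ x ∈ C, Θ g x ∈ C := fun x hx => b2.subset (mem_image_of_mem _ hx)
    have hr : CC.Good.Rel l C (f ∘ g) (Θ f ∘ Θ g) := by
      refine ⟨fun x hx y hy hxy => a1 (gm x hx) (gm y hy) (b1 hx hy hxy), ?_, ?_⟩
      · rw [image_comp, b2, a2]
      · intro x hx
        simp only [Function.comp]
        rw [a3 _ (gm x hx), b3 x hx]
    refine h.rel_unique ?_ (hΘ _ ⟨_, hr⟩) hr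
    refine (hinj f hf).comp (hinj g hg) ?_
    intro t ht
    have mg := hg.2.2.1.monotoneOn
    have i0 : (0 : ℝ) ∈ Icc (0 : ℝ) 1 := ⟨le_rfl, zero_le_one⟩
    have i1 : (1 : ℝ) ∈ Icc (0 : ℝ) 1 := ⟨zero_le_one, le_rfl⟩
    constructor
    · rw [← hg.1]; exact mg i0 ht ht.1
    · rw [← hg.2.1]; exact mg ht i1 ht.2
  · intro f g hf hg he t ht
    obtain ⟨x, hx, rfl⟩ := h.pp_surj ht.1 ht.2
    rw [← (hT f hf).2.2 x hx, ← (hT g hg).2.2 x hx, he hx]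
  · intro g k hgk hm hgC
    obtain ⟨p1, p2, p3⟩ := CC.deriv_data g k hgk hm
    obtain ⟨f, hf, hr⟩ := h.surj_part g _ p1 p2 p3 hm hgC
    exact ⟨f, hf, h.rel_unique (hinj f hf) (hT f hf) hr⟩
end

section
/- There exists a Cantor subset C of [0,1] such that the group of homeomorphisms of C induced by restrictions of C^∞ diffeomorphisms of ℝ preserving C is uncountable; explicitly, the group of bounded integer sequences under termwise addition embeds into this group. -/
open Set Filter Topology Asymptotics

/-- A `C^∞` diffeomorphism pair of ℝ. -/
def IsSmoothDiffeoPair (φ ψ : ℝ → ℝ) : Prop :=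
  ContDiff ℝ (⊤ : ℕ∞) φ ∧ ContDiff ℝ (⊤ : ℕ∞) ψ ∧ Function.LeftInverse ψ φ ∧ Function.RightInverse ψ φ

/-- A bounded integer sequence. -/
def BoundedSeq (m : ℕ → ℤ) : Prop := ∃ B : ℤ, ∀ i, |m i| ≤ B


def II (j : ℕ) : Set ℝ := Ioo (1/((j:ℝ)+2)) (1/((j:ℝ)+1))

lemma II_lt (j : ℕ) : (1/((j:ℝ)+2)) < (1/((j:ℝ)+1)) := by
  apply one_div_lt_one_div_of_lt <;> linarith [(Nat.cast_nonneg j : (0:ℝ) ≤ j)]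

lemma II_sub (j : ℕ) : II j ⊆ Icc 0 1 := by
  intro x hx
  have h0 : (0:ℝ) ≤ j := Nat.cast_nonneg j
  have h1 : (0:ℝ) < 1/((j:ℝ)+2) := by positivity
  have h2 : (1/((j:ℝ)+1)) ≤ 1 := by
    rw [div_le_one (by positivity)]; linarith
  exact ⟨by linarith [hx.1], by linarith [hx.2]⟩

lemma II_disj' {i j : ℕ} (h : i < j) {x : ℝ} (hi : x ∈ II i) (hj : x ∈ II j) : False := by
  have h3 : ((i:ℝ)+1) ≤ j := by exact_mod_cast h
  have : (1/((j:ℝ)+1)) ≤ 1/((i:ℝ)+2) := by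
    apply one_div_le_one_div_of_le <;> linarith [(Nat.cast_nonneg i : (0:ℝ) ≤ i)]
  linarith [hi.1, hj.2]

lemma II_disj {i j : ℕ} {x : ℝ} (hi : x ∈ II i) (hj : x ∈ II j) : i = j := by
  rcases lt_trichotomy i j with h | h | h
  · exact (II_disj' h hi hj).elim
  · exact h
  · exact (II_disj' h hj hi).elim

lemma exists_fj (j : ℕ) : ∃ f : ℝ → ℝ, ContDiff ℝ (⊤ : ℕ∞) f ∧ (∀ x ∈ II j, 0 < f x) ∧
    (∀ x, x ∉ II j → f x = 0) ∧
    ∀ n ≤ j + 1, ∀ x, ‖iteratedFDeriv ℝ n f x‖ ≤ (1/2)^j / 4 := by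
  have hlt := II_lt j
  let b : ContDiffBump (((1/((j:ℝ)+2)) + (1/((j:ℝ)+1)))/2) :=
    { rIn := ((1/((j:ℝ)+1)) - (1/((j:ℝ)+2)))/4
      rOut := ((1/((j:ℝ)+1)) - (1/((j:ℝ)+2)))/2
      rIn_pos := by linarith
      rIn_lt_rOut := by linarith }
  have hball : Metric.ball (((1/((j:ℝ)+2)) + (1/((j:ℝ)+1)))/2) b.rOut = II j := by
    rw [Real.ball_eq_Ioo]
    show Ioo (_ - ((1/((j:ℝ)+1)) - (1/((j:ℝ)+2)))/2) (_ + ((1/((j:ℝ)+1)) - (1/((j:ℝ)+2)))/2) = _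
    unfold II
    congr 1 <;> ring
  have hb : ContDiff ℝ (⊤ : ℕ∞) b := b.contDiff
  have hA : ∀ n : ℕ, ∃ A, ∀ x, ‖iteratedFDeriv ℝ n b x‖ ≤ A := fun n =>
    (b.hasCompactSupport.iteratedFDeriv n).exists_bound_of_continuous
      (hb.continuous_iteratedFDeriv (by exact_mod_cast le_top))
  choose A hA using hA
  let T : ℝ := 1 + ∑ n ∈ Finset.range (j+2), |A n|
  have hT : 0 < T := by
    have : 0 ≤ ∑ n ∈ Finset.range (j+2), |A n| := Finset.sum_nonneg fun _ _ => abs_nonneg _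
    show 0 < 1 + _
    linarith
  have hAT : ∀ n ≤ j+1, A n ≤ T := by
    intro n hn
    have := Finset.single_le_sum (f := fun n => |A n|) (fun i _ => abs_nonneg _)
      (Finset.mem_range.2 (by omega : n < j+2))
    have h2 := le_abs_self (A n)
    show A n ≤ 1 + _
    linarith
  let c : ℝ := (1/2)^j / 4 / T
  have hc : 0 < c := by positivity
  refine ⟨c • (b : ℝ → ℝ), contDiff_const.smul hb, ?_, ?_, ?_⟩
  · intro x hx
    have : 0 < b x := b.pos_of_mem_ball (by rw [hball]; exact hx)
    simp only [Pi.smul_apply, smul_eq_mul]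
    positivity
  · intro x hx
    have : b x = 0 := by
      rw [← Function.notMem_support, b.support_eq, hball]; exact hx
    simp [this]
  · intro n hn x
    rw [iteratedFDeriv_const_smul_apply (hb.contDiffAt.of_le (by exact_mod_cast le_top)), norm_smul,
      Real.norm_of_nonneg hc.le]
    calc c * _ ≤ c * T := by gcongr; exact (hA n x).trans (hAT n hn)
      _ = _ := by simp only [c]; field_simp

lemma exists_G : ∃ G : Set ℕ → ℝ ≃o ℝ, (∀ S, ContDiff ℝ (⊤ : ℕ∞) (G S)) ∧
    (∀ S, ContDiff ℝ (⊤ : ℕ∞) (G S).symm) ∧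
    (∀ j, ∀ x ∈ II j, x < G univ x) ∧
    (∀ S j, ∀ x ∈ II j, j ∈ S → G S x = G univ x) ∧
    (∀ S j, ∀ x ∈ II j, j ∉ S → G S x = x) ∧
    (∀ S x, (∀ j, x ∉ II j) → G S x = x) := by
  classical
  choose f hf hpos hzero hbd using exists_fj
  let u : Set ℕ → ℕ → ℝ → ℝ := fun S j => if j ∈ S then f j else 0
  let F : Set ℕ → ℝ → ℝ := fun S x => ∑' j, u S j x
  have hu : ∀ S j, ContDiff ℝ (⊤ : ℕ∞) (u S j) := by
    intro S j
    by_cases h : j ∈ S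
    · simpa [u, h] using hf j
    · simp only [u, h, if_false]; exact contDiff_const
  have hub : ∀ S j n, n ≤ j + 1 → ∀ x, ‖iteratedFDeriv ℝ n (u S j) x‖ ≤ (1/2)^j / 4 := by
    intro S j n hn x
    by_cases h : j ∈ S
    · simpa [u, h] using hbd j n hn x
    · simp only [u, h, if_false]
      rw [show (0 : ℝ → ℝ) = fun _ => 0 from rfl, iteratedFDeriv_fun_zero]
      simp only [Pi.zero_apply, norm_zero]
      positivity
  have hgeo : HasSum (fun j : ℕ => ((1:ℝ)/2)^j / 4) (1/2) := by
    have := hasSum_geometric_two.div_const 4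
    norm_num at this ⊢; exact this
  have hFs : ∀ S, ContDiff ℝ (⊤ : ℕ∞) (F S) := by
    intro S
    refine contDiff_tsum_of_eventually (v := fun _ j => (1/2)^j / 4) (hu S) (fun _ _ => hgeo.summable) ?_
    intro k _
    rw [Nat.cofinite_eq_atTop]
    filter_upwards [eventually_ge_atTop k] with j hj x
    exact hub S j k (by omega) x
  have hFb : ∀ S x, |F S x| ≤ 1/2 := by
    intro S x
    rw [← Real.norm_eq_abs]; refine tsum_of_norm_bounded hgeo fun j => ?_
    have := hub S j 0 (by omega) x
    rwa [norm_iteratedFDeriv_zero] at this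
  have hsum : ∀ S x, Summable fun j => u S j x := by
    intro S x
    refine Summable.of_norm_bounded hgeo.summable fun j => ?_
    have := hub S j 0 (by omega) x
    rwa [norm_iteratedFDeriv_zero] at this
  have hlip : ∀ S x y, |F S x - F S y| ≤ 1/2 * |x - y| := by
    intro S x y
    show |∑' j, u S j x - ∑' j, u S j y| ≤ _
    rw [← (hsum S x).tsum_sub (hsum S y)]
    rw [← Real.norm_eq_abs]; refine tsum_of_norm_bounded (hgeo.mul_right _) fun j => ?_
    have := Convex.norm_image_sub_le_of_norm_deriv_le (f := u S j) (s := univ) (x := y) (y := x)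
      (C := (1/2)^j/4) (fun z _ => ((hu S j).differentiable (by simp)) z) (fun z _ => by
        have := hub S j 1 (by omega) z
        rwa [norm_iteratedFDeriv_eq_norm_iteratedDeriv, iteratedDeriv_one] at this) convex_univ trivial trivial
    exact this
  have hmono : ∀ S, StrictMono fun x => x + F S x := by
    intro S x y hxy
    have := hlip S x y
    rw [abs_sub_comm x y, abs_of_pos (sub_pos.2 hxy)] at this
    have := (abs_le.1 this).2
    show x + F S x < y + F S y
    linarith
  have hcd : ∀ S, ContDiff ℝ (⊤ : ℕ∞) fun x => x + F S x := fun S => contDiff_id.add (hFs S)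
  have hsurj : ∀ S, Function.Surjective fun x => x + F S x := by
    intro S
    apply (hcd S).continuous.surjective
    · refine tendsto_atTop_mono (f := fun x : ℝ => x - 1) (fun x => ?_)
        (tendsto_atTop_add_const_right _ _ tendsto_id)
      linarith [(abs_le.1 (hFb S x)).1]
    · refine tendsto_atBot_mono (g := fun x => x + F S x) (f := fun x : ℝ => x + 1) (fun x => ?_)
        (tendsto_atBot_add_const_right _ _ tendsto_id)
      linarith [(abs_le.1 (hFb S x)).2]
  let G : Set ℕ → ℝ ≃o ℝ := fun S => (hmono S).orderIsoOfSurjective _ (hsurj S)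
  have hG : ∀ S x, G S x = x + F S x := fun S x => rfl
  have hF1 : ∀ S j, ∀ x ∈ II j, j ∈ S → F S x = f j x := by
    intro S j x hx hj
    show ∑' i, u S i x = _
    rw [tsum_eq_single j]
    · simp [u, hj]
    · intro i hi
      have : f i x = 0 := hzero i x fun h => hi (II_disj h hx)
      by_cases h : i ∈ S <;> simp [u, h, this]
  have hF2 : ∀ S j, ∀ x ∈ II j, j ∉ S → F S x = 0 := by
    intro S j x hx hj
    show ∑' i, u S i x = _
    rw [tsum_eq_single j]
    · simp [u, hj]
    · intro i hi
      have : f i x = 0 := hzero i x fun h => hi (II_disj h hx)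
      by_cases h : i ∈ S <;> simp [u, h, this]
  refine ⟨G, hcd, ?_, ?_, ?_, ?_, ?_⟩
  · intro S
    have hd : ∀ x, HasDerivAt (F S) (deriv (F S) x) x := fun x =>
      (((hFs S).differentiable (by simp)) x).hasDerivAt
    refine (G S).toHomeomorph.contDiff_symm_deriv (f' := fun x => 1 + deriv (F S) x) ?_ ?_ (hcd S)
    · intro x
      have : ‖deriv (F S) x‖ ≤ 1/2 := by
        refine (hd x).le_of_lip' (by norm_num) (Eventually.of_forall fun y => hlip S y x)
      have := (abs_le.1 this).1
      linarith
    · intro x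
      exact (hasDerivAt_id x).add (hd x)
  · intro j x hx
    rw [hG, hF1 _ j x hx (mem_univ _)]
    linarith [hpos j x hx]
  · intro S j x hx hj
    rw [hG, hG, hF1 _ j x hx (mem_univ _), hF1 _ j x hx hj]
  · intro S j x hx hj
    rw [hG, hF2 _ j x hx hj, add_zero]
  · intro S x hx
    rw [hG]
    have : F S x = 0 := by
      show ∑' i, u S i x = _
      rw [← tsum_zero (β := ℕ) (α := ℝ)]
      congr 1; ext i
      by_cases h : i ∈ S <;> simp [u, h, hzero i x (hx i)]
    rw [this, add_zero]

lemma exists_K (j : ℕ) : ∃ K : Set ℝ, IsCompact K ∧ K.Nonempty ∧ Preperfect K ∧ K ⊆ II j ∧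
    interior K = ∅ := by
  have hm : MeasurableSet (II j ∩ {x | Irrational x}) := by
    refine measurableSet_Ioo.inter ?_
    exact ((countable_range _).measurableSet).compl
  have hpos : 0 < MeasureTheory.volume (II j ∩ {x | Irrational x}) := by
    have h0 : MeasureTheory.volume (range ((↑) : ℚ → ℝ)) = 0 :=
      (countable_range _).measure_zero _
    have : II j ∩ {x | Irrational x} = II j \ range ((↑) : ℚ → ℝ) := rfl
    rw [this, MeasureTheory.measure_sdiff_null h0]
    simpa [II] using II_lt j
  obtain ⟨K, hK, hKc, hKp⟩ := hm.exists_lt_isCompact hpos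
  obtain ⟨D, hD, hDn, hDK⟩ := exists_perfect_nonempty_of_isClosed_of_not_countable hKc.isClosed
    (fun h => hKp.ne' (h.measure_zero _))
  refine ⟨D, hKc.of_isClosed_subset hD.closed hDK, hDn, hD.acc, fun x hx => (hK (hDK hx)).1, ?_⟩
  by_contra h
  obtain ⟨q, hq⟩ := Rat.denseRange_cast (𝕜 := ℝ) |>.exists_mem_open isOpen_interior (nonempty_iff_ne_empty.2 h)
  exact (hK (hDK (interior_subset hq))).2 ⟨q, rfl⟩

lemma ind_inj {S T : Set ℕ} (h : (S.indicator 1 : ℕ → ℤ) = T.indicator 1) : S = T := by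
  ext i
  have h2 := congrFun h i
  by_cases hS : i ∈ S <;> by_cases hT : i ∈ T <;> simp [hS, hT] at h2 ⊢

lemma II_end (n i : ℕ) : (1 / ((n:ℝ) + 1)) ∉ II i := by
  rintro ⟨h1, h2⟩
  rw [one_div_lt_one_div (by positivity) (by positivity)] at h1 h2
  have h1' : ((n + 1 : ℕ) : ℝ) < ((i + 2 : ℕ) : ℝ) := by push_cast; exact h1
  have h2' : ((i + 1 : ℕ) : ℝ) < ((n + 1 : ℕ) : ℝ) := by push_cast; exact h2
  have h3 := Nat.cast_lt.1 h1'
  have h4 := Nat.cast_lt.1 h2'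
  omega

set_option maxHeartbeats 2000000 in
/-- There is a (non-sparse) Cantor set `C ⊂ [0,1]` whose group of transformations
induced by `C^∞` diffeomorphisms of ℝ preserving `C` is uncountable; explicitly, the
group of bounded integer sequences under termwise addition embeds into it. -/
theorem exists_cantor_uncountable_smooth_diffeo_group :
    ∃ C : Set ℝ, C ⊆ Set.Icc 0 1 ∧ IsCantorSet C ∧
      ¬ Set.Countable {f : C → ℝ | ∃ φ ψ : ℝ → ℝ, IsSmoothDiffeoPair φ ψ ∧
          φ '' C = C ∧ ∀ x : C, f x = φ x} ∧
      ∃ Θ : (ℕ → ℤ) → (ℝ → ℝ),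
        (∀ m, BoundedSeq m → ∃ φ ψ : ℝ → ℝ, IsSmoothDiffeoPair φ ψ ∧ φ '' C = C ∧
          Set.EqOn (Θ m) φ C) ∧
        (∀ m m', BoundedSeq m → BoundedSeq m' →
          Set.EqOn (Θ (m + m')) (Θ m ∘ Θ m') C) ∧
        (∀ m m', BoundedSeq m → BoundedSeq m' →
          Set.EqOn (Θ m) (Θ m') C → m = m') := by
  
  classical
  obtain ⟨G, hG1, hG2, hlt, hGin, hGout, hGfix⟩ := exists_G
  choose K hKc hKn hKp hKI hKi using exists_K
  set g : ℝ ≃o ℝ := G univ with hg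
  have hfixpow : ∀ a, g a = a → ∀ k : ℤ, (g ^ k) a = a := by
    intro a ha k
    induction k using Int.induction_on with
    | zero => simp
    | succ n ih => rw [zpow_add_one, RelIso.mul_apply, ha, ih]
    | pred n ih =>
      have : g⁻¹ a = a := by
        conv_lhs => rw [← ha]
        exact g.symm_apply_apply a
      rw [zpow_sub_one, RelIso.mul_apply, this, ih]
  have hpadd : ∀ (k l : ℤ) x, (g ^ (k + l)) x = (g ^ k) ((g ^ l) x) := by
    intro k l x
    rw [zpow_add, RelIso.mul_apply]
  have hend : ∀ (n : ℕ), g (1 / ((n:ℝ) + 1)) = 1 / ((n:ℝ) + 1) := by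
    intro n
    exact hGfix _ _ fun i => II_end n i
  have hendb : ∀ (n : ℕ) (k : ℤ), (g ^ k) (1 / ((n:ℝ) + 1)) = 1 / ((n:ℝ) + 1) := fun n k =>
    hfixpow _ (hend n) k
  have henda : ∀ (n : ℕ) (k : ℤ), (g ^ k) (1 / ((n:ℝ) + 2)) = 1 / ((n:ℝ) + 2) := by
    intro n k
    have := hendb (n+1) k
    push_cast at this
    rwa [show (n:ℝ) + 1 + 1 = n + 2 by ring] at this
  have hpowI : ∀ j (k : ℤ), ∀ x ∈ II j, (g ^ k) x ∈ II j := by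
    intro j k x hx
    refine ⟨?_, ?_⟩
    · rw [← henda j k]; exact (g ^ k).lt_iff_lt.2 hx.1
    · rw [← hendb j k]; exact (g ^ k).lt_iff_lt.2 hx.2
  have hsm : ∀ j, ∀ x ∈ II j, StrictMono fun k : ℤ => (g ^ k) x := by
    intro j x hx
    refine strictMono_int_of_lt_succ fun k => ?_
    rw [add_comm, hpadd, zpow_one]
    exact hlt j _ (hpowI j k x hx)
  have hescape : ∀ j, ∀ y ∈ II j, ∀ z, z < 1 / ((j:ℝ) + 1) → ∃ N : ℕ, z < (g ^ (N:ℤ)) y := by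
    intro j y hy z hz
    by_contra! hcon
    have hmono : Monotone fun n : ℕ => (g ^ (n:ℤ)) y := fun a b hab =>
      (hsm j y hy).monotone (by exact_mod_cast hab)
    have hbdd : BddAbove (range fun n : ℕ => (g ^ (n:ℤ)) y) :=
      ⟨z, by rintro _ ⟨n, rfl⟩; exact hcon n⟩
    have hlim := tendsto_atTop_ciSup hmono hbdd
    set L := ⨆ n : ℕ, (g ^ (n:ℤ)) y
    have h1 : L ≤ z := ciSup_le hcon
    have h2 : y ≤ L := (by simp : y = (g ^ ((0:ℕ):ℤ)) y).le.trans (le_ciSup hbdd 0)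
    have hLI : L ∈ II j := ⟨hy.1.trans_le h2, h1.trans_lt hz⟩
    have h3 := (g.continuous.tendsto L).comp hlim
    have h4 := hlim.comp (tendsto_add_atTop_nat 1)
    have h5 : (g ∘ fun n : ℕ => (g ^ (n:ℤ)) y) = (fun n : ℕ => (g ^ (n:ℤ)) y) ∘ fun n => n + 1 := by
      funext n
      simp only [Function.comp]
      push_cast
      rw [add_comm, hpadd, zpow_one]
    rw [h5] at h3
    exact (hlt j L hLI).ne (tendsto_nhds_unique h4 h3)
  let J : ℝ → ℕ := fun x => if h : ∃ j, x ∈ II j then h.choose else 0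
  have hJ : ∀ j, ∀ x ∈ II j, J x = j := by
    intro j x hx
    have h : ∃ j, x ∈ II j := ⟨j, hx⟩
    simp only [J, dif_pos h]
    exact II_disj h.choose_spec hx
  have hout : ∀ x, (∀ j, x ∉ II j) → ∀ k : ℤ, (g ^ k) x = x := fun x hx k =>
    hfixpow x (hGfix _ x hx) k
  have hJpow : ∀ x (k : ℤ), J ((g ^ k) x) = J x := by
    intro x k
    by_cases h : ∃ j, x ∈ II j
    · obtain ⟨j, hj⟩ := h
      rw [hJ j x hj, hJ j _ (hpowI j k x hj)]
    · push Not at h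
      rw [hout x h k]
  let Θ : (ℕ → ℤ) → ℝ → ℝ := fun m x => (g ^ (m (J x))) x
  have hadd : ∀ m m' x, Θ (m + m') x = Θ m (Θ m' x) := by
    intro m m' x
    simp only [Θ, Pi.add_apply, hJpow, hpadd]
  have hzero : ∀ x, Θ 0 x = x := by
    intro x; simp [Θ]
  have hinv : ∀ m x, Θ m (Θ (-m) x) = x := by
    intro m x
    rw [← hadd, add_neg_cancel, hzero]
  have hinv' : ∀ m x, Θ (-m) (Θ m x) = x := by
    intro m x
    rw [← hadd, neg_add_cancel, hzero]
  have hind : ∀ S : Set ℕ, Θ (S.indicator 1) = G S := by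
    intro S
    funext x
    by_cases h : ∃ j, x ∈ II j
    · obtain ⟨j, hj⟩ := h
      simp only [Θ, hJ j x hj]
      by_cases hS : j ∈ S
      · rw [hGin S j x hj hS]; simp [hS]
      · rw [hGout S j x hj hS]; simp [hS]
    · push Not at h
      simp only [Θ]
      rw [hout x h, hGfix S x h]
  have hind' : ∀ S : Set ℕ, Θ (-(S.indicator 1)) = (G S).symm := by
    intro S
    funext x
    apply (G S).injective
    rw [OrderIso.apply_symm_apply, ← hind S, hinv]
  have hsadd : ∀ m m', ContDiff ℝ (⊤ : ℕ∞) (Θ m) → ContDiff ℝ (⊤ : ℕ∞) (Θ m') →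
      ContDiff ℝ (⊤ : ℕ∞) (Θ (m + m')) := by
    intro m m' h h'
    have : Θ (m + m') = Θ m ∘ Θ m' := funext fun x => hadd m m' x
    rw [this]; exact h.comp h'
  have hnat : ∀ n : ℕ, ∀ m : ℕ → ℤ, (∀ i, |m i| ≤ n) → ContDiff ℝ (⊤ : ℕ∞) (Θ m) := by
    intro n
    induction n with
    | zero =>
      intro m hm
      have : m = 0 := by
        funext i
        simpa using hm i
      have h2 : Θ 0 = id := funext hzero
      rw [this, h2]; exact contDiff_id
    | succ n ih =>
      intro m hm
      have key : m = {i | 0 < m i}.indicator 1 + (-({i | m i < 0}.indicator 1) +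
          fun i => m i - Int.sign (m i)) := by
        funext i
        rcases lt_trichotomy (m i) 0 with h | h | h
        · simp [indicator, h, h.not_gt, Int.sign_eq_neg_one_of_neg h]
        · simp [indicator, h]
        · simp [indicator, h, h.not_gt, Int.sign_eq_one_of_pos h]
      rw [key]
      refine hsadd _ _ ?_ (hsadd _ _ ?_ (ih (fun i => m i - Int.sign (m i)) ?_))
      · rw [hind]; exact hG1 _
      · rw [hind']; exact hG2 _
      · intro i
        have := hm i
        push_cast at this
        rw [abs_le] at this ⊢
        rcases lt_trichotomy (m i) 0 with h | h | h
        · rw [Int.sign_eq_neg_one_of_neg h]; omega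
        · rw [h]; simp
        · rw [Int.sign_eq_one_of_pos h]; omega
  have hsmooth : ∀ m, BoundedSeq m → ContDiff ℝ (⊤ : ℕ∞) (Θ m) := by
    rintro m ⟨B, hB⟩
    exact hnat B.toNat m fun i => (hB i).trans (Int.self_le_toNat B)
  have hbneg : ∀ m, BoundedSeq m → BoundedSeq (-m) := by
    rintro m ⟨B, hB⟩
    exact ⟨B, fun i => by simpa using hB i⟩
  have hbind : ∀ S : Set ℕ, BoundedSeq (S.indicator 1) := by
    intro S
    refine ⟨1, fun i => ?_⟩
    by_cases h : i ∈ S <;> simp [h]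
  -- the Cantor set
  let M : Set ℝ := ⋃ j, ⋃ k : ℤ, (g ^ k) '' K j
  have hMmem : ∀ x, x ∈ M ↔ ∃ j, ∃ k : ℤ, ∃ y ∈ K j, (g ^ k) y = x := by
    intro x; simp only [M, mem_iUnion, mem_image]
  have hMI : M ⊆ Icc 0 1 := by
    intro x hx
    obtain ⟨j, k, y, hy, rfl⟩ := (hMmem x).1 hx
    exact II_sub j (hpowI j k y (hKI j hy))
  have hKM : ∀ j, K j ⊆ M := by
    intro j y hy
    exact (hMmem y).2 ⟨j, 0, y, hy, by simp⟩
  have hCI : closure M ⊆ Icc 0 1 := closure_minimal hMI isClosed_Icc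
  have hMpp : Preperfect M := by
    rw [preperfect_iff_nhds]
    intro x hx U hU
    obtain ⟨j, k, y, hy, rfl⟩ := (hMmem x).1 hx
    have hU' : (g ^ k) ⁻¹' U ∈ 𝓝 y := (g ^ k).continuous.continuousAt.preimage_mem_nhds hU
    obtain ⟨y', ⟨hy'U, hy'K⟩, hne⟩ := preperfect_iff_nhds.1 (hKp j) y hy _ hU'
    exact ⟨(g ^ k) y', ⟨hy'U, (hMmem _).2 ⟨j, k, y', hy'K, rfl⟩⟩, fun h => hne ((g ^ k).injective h)⟩
  have hΘM : ∀ m, Θ m '' M ⊆ M := by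
    rintro m _ ⟨x, hx, rfl⟩
    obtain ⟨j, k, y, hy, rfl⟩ := (hMmem x).1 hx
    exact (hMmem _).2 ⟨j, m (J ((g ^ k) y)) + k, y, hy, hpadd _ _ _⟩
  have hΘC' : ∀ m, BoundedSeq m → Θ m '' closure M ⊆ closure M := fun m hm =>
    (image_closure_subset_closure_image (hsmooth m hm).continuous).trans (closure_mono (hΘM m))
  have hΘC : ∀ m, BoundedSeq m → Θ m '' closure M = closure M := by
    intro m hm
    refine (hΘC' m hm).antisymm fun x hx => ?_
    exact ⟨Θ (-m) x, hΘC' (-m) (hbneg m hm) ⟨x, hx, rfl⟩, hinv m x⟩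
  have hloc : ∀ j, ∀ w ∈ II j, w ∈ closure M → w ∈ ⋃ k : ℤ, (g ^ k) '' K j := by
    intro j w hw hwM
    obtain ⟨p, hpK, hp⟩ := (hKc j).exists_isLeast (hKn j)
    obtain ⟨q, hqK, hq⟩ := (hKc j).exists_isGreatest (hKn j)
    obtain ⟨u, hu1, hu2⟩ := exists_between hw.1
    obtain ⟨v, hv1, hv2⟩ := exists_between hw.2
    have huI : u ∈ II j := ⟨hu1, hu2.trans hw.2⟩
    obtain ⟨N1, hN1⟩ := hescape j p (hKI j hpK) v hv2
    obtain ⟨N2, hN2⟩ := hescape j u huI q (hKI j hqK).2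
    have hq' : (g ^ (-(N2:ℤ))) q < u := by
      have := (g ^ (-(N2:ℤ))).lt_iff_lt.2 hN2
      rwa [← hpadd, neg_add_cancel, zpow_zero, RelIso.one_apply] at this
    let Z : Set ℝ := ⋃ k ∈ Icc (-(N2:ℤ)) N1, (g ^ k) '' K j
    have hZ : IsClosed Z := (finite_Icc _ _).isClosed_biUnion fun k _ =>
      ((hKc j).image (g ^ k).continuous).isClosed
    have hsub : Ioo u v ∩ M ⊆ Z := by
      rintro x ⟨hxuv, hx⟩
      obtain ⟨i, k, y, hy, rfl⟩ := (hMmem x).1 hx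
      have hxI : (g ^ k) y ∈ II j := ⟨hu1.trans hxuv.1, hxuv.2.trans hv2⟩
      have hij : i = j := II_disj (hpowI i k y (hKI i hy)) hxI
      subst hij
      have hyI := hKI i hy
      simp only [Z, mem_iUnion]
      refine ⟨k, ⟨?_, ?_⟩, y, hy, rfl⟩
      · by_contra! hk
        have h1 := (hsm i y hyI) hk
        have h2 := (g ^ (-(N2:ℤ))).monotone (hq hy)
        have h3 := hxuv.1
        simp only at h1
        linarith
      · by_contra! hk
        have h1 := (hsm i y hyI) hk
        have h2 := (g ^ (N1:ℤ)).monotone (hp hy)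
        have h3 := hxuv.2
        simp only at h1
        linarith
    have hwZ : w ∈ Z := by
      have := (isOpen_Ioo (a := u) (b := v)).inter_closure (t := M) ⟨⟨hu2, hv1⟩, hwM⟩
      exact closure_minimal hsub hZ this
    simp only [Z, mem_iUnion] at hwZ
    obtain ⟨k, _, hk⟩ := hwZ
    exact mem_iUnion.2 ⟨k, hk⟩
  have hnoI : ∀ x y, x < y → ¬ Ioo x y ⊆ closure M := by
    intro x y hxy hsub
    obtain ⟨z, hz1, hz2⟩ := exists_between hxy
    obtain ⟨z', hz'I, hz'M⟩ := mem_closure_iff.1 (hsub ⟨hz1, hz2⟩) _ isOpen_Ioo ⟨hz1, hz2⟩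
    obtain ⟨j, k, y', hy', rfl⟩ := (hMmem z').1 hz'M
    have hzI := hpowI j k y' (hKI j hy')
    have hdense : Dense (⋂ k : ℤ, ((g ^ k) '' K j)ᶜ) := by
      refine dense_iInter_of_isOpen (fun k => ?_) fun k => ?_
      · exact ((hKc j).image (g ^ k).continuous).isClosed.isOpen_compl
      · rw [← interior_eq_empty_iff_dense_compl]
        have := (g ^ k).toHomeomorph.image_interior (K j)
        rw [hKi j, image_empty] at this
        exact this.symm
    obtain ⟨w, hwW, hw⟩ := hdense.inter_open_nonempty (Ioo x y ∩ II j) (isOpen_Ioo.inter isOpen_Ioo)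
      ⟨_, hz'I, hzI⟩
    obtain ⟨k, hk⟩ := mem_iUnion.1 (hloc j w hwW.2 (hsub hwW.1))
    exact mem_iInter.1 hw k hk
  have hTD : IsTotallyDisconnected (closure M) := by
    intro t ht hpc x hx y hy
    by_contra hne
    rcases lt_or_gt_of_ne hne with h | h
    · exact hnoI x y h (Ioo_subset_Icc_self.trans ((hpc.Icc_subset hx hy).trans ht))
    · exact hnoI y x h (Ioo_subset_Icc_self.trans ((hpc.Icc_subset hy hx).trans ht))
  have hinj : ∀ m m', EqOn (Θ m) (Θ m') (closure M) → m = m' := by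
    intro m m' h
    funext j
    obtain ⟨y, hy⟩ := hKn j
    have := h (subset_closure (hKM j hy))
    simp only [Θ, hJ j y (hKI j hy)] at this
    exact (hsm j y (hKI j hy)).injective this
  have hpair : ∀ m, BoundedSeq m → IsSmoothDiffeoPair (Θ m) (Θ (-m)) := fun m hm =>
    ⟨hsmooth m hm, hsmooth _ (hbneg m hm), hinv' m, hinv m⟩
  refine ⟨closure M, hCI, ⟨?_, ?_, hMpp.perfect_closure, hTD⟩, ?_, Θ, ?_, ?_, ?_⟩
  · exact ((hKn 0).mono (hKM 0)).closure
  · exact isCompact_Icc.of_isClosed_subset isClosed_closure hCI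
  · intro hcount
    have hc : Countable {f : closure M → ℝ | ∃ φ ψ : ℝ → ℝ, IsSmoothDiffeoPair φ ψ ∧
          φ '' closure M = closure M ∧ ∀ x : closure M, f x = φ x} := hcount.to_subtype
    obtain ⟨e, he⟩ := hc.exists_injective_nat
    let r : Set ℕ → {f : closure M → ℝ | ∃ φ ψ : ℝ → ℝ, IsSmoothDiffeoPair φ ψ ∧
          φ '' closure M = closure M ∧ ∀ x : closure M, f x = φ x} := fun S =>
      ⟨fun x => Θ (S.indicator 1) x, Θ (S.indicator 1), Θ (-(S.indicator 1)),
        hpair _ (hbind S), hΘC _ (hbind S), fun _ => rfl⟩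
    refine Function.cantor_injective (fun S => e (r S)) (he.comp fun S T hST => ?_)
    have h1 : (S.indicator 1 : ℕ → ℤ) = T.indicator 1 := by
      apply hinj
      intro x hx
      exact congrFun (congrArg Subtype.val hST) ⟨x, hx⟩
    exact ind_inj h1
  · intro m hm
    exact ⟨Θ m, Θ (-m), hpair m hm, hΘC m hm, fun _ _ => rfl⟩
  · intro m m' _ _ x _
    exact hadd m m' x
  · intro m m' _ _ h
    exact hinj m m' h
end
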